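/- arXiv:1404.7361 — 2 statements merged into one kernel-verified Lean document; each statement's English description precedes it below -/
import Mathlib

section
/- Let N be a positive integer and 0 < s < 1 with N > 2s, and set 2*_s = 2N/(N−2s). For every smooth compactly supported function w : ℝ^N × ℝ → ℝ, writing u(x) = w(x,0), one has (∫_{ℝ^N} |u(x)|^{2*_s} dx)^{2/2*_s} ≤ S ∫_{ℝ^N × (0,∞)} y^{1−2s} |∇w(x,y)|² dx dy, where S = [2^{−1} π^{−s} Γ(s) Γ((N−2s)/2) (Γ(N))^{2s/N}] / [Γ((2−2s)/2) Γ((N+2s)/2) (Γ(N/2))^{2s/N}] and Γ denotes the Gamma function. -/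
/-!
The trace inequality is dual to the sharp Hardy–Littlewood–Sobolev inequality, and the proof
proceeds through that duality, with `λ = N - 2s`, `q = 2N/(N-2s)`, `p = 2N/(N+2s)`.

*Hardy–Littlewood–Sobolev* (`hls`). In stereographic coordinates the inequality becomes a
statement on the sphere `𝕊ᴺ` (the measure `mu N`) about the quadratic form `Q` of a power of the
inverse chordal distance, to be maximized at fixed `Lᵖ` norm; constants are expected to be
optimal. Restrict to densities bounded by `C` and add `ε ∫ F` to the functional. A maximizer `F`
exists, since potentials turn weak-star convergence into pointwise convergence
(`exists_maximizer`). Let `σ` be an inversion that, in the spherical metric, has conformal factor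
`m < 1` on one of the two sides of its sphere. Two-point symmetrization of `F` towards that side
preserves the `Lᵖ` norm and the bound `C`, does not decrease `Q` (`IsPol.Q_le_Q_pol`), and strictly
increases `∫ F` unless `m ^ (N - l) * F ∘ σ ≤ F` on that side already
(`IsPol.pull_le_of_lintegral_le`). So a maximizer is symmetrized with respect to every such
inversion. Those inversions come in families degenerating to isometries of the sphere, and
exchange almost all pairs of points, in either order; the limit gives `F y ≤ F x` for almost all
`x`, `y`, so `F` is constant (`ae_const_of_pull_le`). Evaluating at constants and letting `ε → 0`
gives `Q_le`, whose bound does not depend on `C`.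

*Lower bound for the energy* (`trace_lower`). Let `f ≥ 0` be continuous with compact support and
let `W` be the extension to the half-space of its Riesz potential, regularised at scale `δ`.
Picone's inequality bounds the weighted Dirichlet energy of `w` from below by the pairing of
`∇(w²/W)` and `∇W` (`picone_integral`). The weighted divergence of `∇W` is an explicit
concentrating kernel: this is a form of Euler's identity for the measure `y ^ a dx dy`, itself the
derivative of a scaling law (`euler_identity`, `green`). As `δ → 0`, Fatou's lemma yields
`c ∫ f u² / W ≤ ∫∫ y ^ (1 - 2s) |∇w|²`, where `u` is the trace and `W` now is the Riesz potential.

*Conclusion.* Take `f = |u| ^ (q - 1)`. By the Cauchy–Schwarz inequality `(∫ |u| ^ q)²` is at most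
`∫ f u² / W` times `∫ f W`; the first factor is controlled by the energy and the second one by the
Hardy–Littlewood–Sobolev inequality, as `f ^ p = |u| ^ q`. The constants multiply to `S`.
-/

open MeasureTheory Real

/-- The squared Euclidean norm of the full gradient of `w : ℝᴺ × ℝ → ℝ`
at a point, i.e. `Σᵢ (∂w/∂xᵢ)² + (∂w/∂y)²`. -/
noncomputable def gradNormSq (N : ℕ) (w : EuclideanSpace ℝ (Fin N) × ℝ → ℝ)
    (q : EuclideanSpace ℝ (Fin N) × ℝ) : ℝ :=
  (∑ i : Fin N, (fderiv ℝ w q (EuclideanSpace.single i 1, 0)) ^ 2) +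
    (fderiv ℝ w q (0, 1)) ^ 2

namespace SFT

/-! ### Beta integrals -/

section PartA

open Set

/-- A Bochner integral with a nonzero value is not the junk value, so it determines the Lebesgue
integral. -/
lemma lintegral_of_integral {α : Type*} [MeasurableSpace α] {μ : Measure α} {f : α → ℝ} {c : ℝ}
    (h0 : 0 ≤ᵐ[μ] f) (h : ∫ x, f x ∂μ = c) (hc : 0 < c) :
    ∫⁻ x, ENNReal.ofReal (f x) ∂μ = ENNReal.ofReal c := by
  have hi : Integrable f μ := by
    by_contra hn
    rw [integral_undef hn] at h
    exact hc.ne h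
  rw [← ofReal_integral_eq_lintegral_ofReal hi h0, h]

lemma integral_of_lintegral {α : Type*} [MeasurableSpace α] {μ : Measure α} {f : α → ℝ} {c : ℝ}
    (hm : AEStronglyMeasurable f μ)
    (h0 : 0 ≤ᵐ[μ] f) (h : ∫⁻ x, ENNReal.ofReal (f x) ∂μ = ENNReal.ofReal c) (hc : 0 ≤ c) :
    Integrable f μ ∧ ∫ x, f x ∂μ = c := by
  refine ⟨⟨hm, ?_⟩, ?_⟩
  · rw [hasFiniteIntegral_iff_ofReal h0, h]; exact ENNReal.ofReal_lt_top
  · rw [integral_eq_lintegral_of_nonneg_ae h0 hm, h, ENNReal.toReal_ofReal hc]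

lemma lintegral_gamma {a r : ℝ} (ha : 0 < a) (hr : 0 < r) :
    ∫⁻ t in Ioi (0 : ℝ), ENNReal.ofReal (t ^ (a - 1) * exp (-(r * t))) =
      ENNReal.ofReal ((1 / r) ^ a * Gamma a) := by
  refine lintegral_of_integral ?_ (integral_rpow_mul_exp_neg_mul_Ioi ha hr) ?_
  · filter_upwards [ae_restrict_mem measurableSet_Ioi] with t (ht : 0 < t)
    simp only [Pi.zero_apply]; positivity
  · have := Gamma_pos_of_pos ha
    positivity

lemma lintegral_gauss {β t : ℝ} (hβ : 0 < β) (ht : 0 < t) :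
    ∫⁻ y in Ioi (0 : ℝ), ENNReal.ofReal (y ^ (2 * β - 1) * exp (-t * y ^ (2 : ℝ))) =
      ENNReal.ofReal (t ^ (-β) * (1 / 2) * Gamma β) := by
  have h := integral_rpow_mul_exp_neg_mul_rpow (p := 2) (q := 2 * β - 1) (b := t) two_pos
    (by linarith) ht
  have e : (2 * β - 1 + 1) / 2 = β := by ring
  have e' : -(2 * β - 1 + 1) / 2 = -β := by ring
  rw [e, e'] at h
  refine lintegral_of_integral ?_ h ?_
  · filter_upwards [ae_restrict_mem measurableSet_Ioi] with y (hy : 0 < y)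
    simp only [Pi.zero_apply]; positivity
  · have := Gamma_pos_of_pos hβ
    positivity

/-- The Beta integral over the half-line, via `Γ(b) X⁻ᵇ = ∫ t^(b-1) e^(-tX) dt` and Tonelli. -/
lemma lintegral_beta {β γ A : ℝ} (hβ : 0 < β) (hγ : 0 < γ) (hA : 0 < A) :
    ∫⁻ y in Ioi (0 : ℝ), ENNReal.ofReal (y ^ (2 * β - 1) * (A + y ^ 2) ^ (-(β + γ))) =
      ENNReal.ofReal (A ^ (-γ) * (Gamma β * Gamma γ / (2 * Gamma (β + γ)))) := by
  have hb : 0 < β + γ := by linarith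
  have gβ := Gamma_pos_of_pos hβ
  have gγ := Gamma_pos_of_pos hγ
  have gb := Gamma_pos_of_pos hb
  have key : ∫⁻ y in Ioi (0 : ℝ), ∫⁻ t in Ioi (0 : ℝ),
      ENNReal.ofReal (y ^ (2 * β - 1)) * ENNReal.ofReal (t ^ (β + γ - 1) * exp (-((A + y ^ 2) * t)))
      = ∫⁻ y in Ioi (0 : ℝ), ENNReal.ofReal (Gamma (β + γ)) *
        ENNReal.ofReal (y ^ (2 * β - 1) * (A + y ^ 2) ^ (-(β + γ))) := by
    refine setLIntegral_congr_fun measurableSet_Ioi fun y (hy : 0 < y) => ?_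
    have hAy : 0 < A + y ^ 2 := by positivity
    rw [lintegral_const_mul _ (by fun_prop), lintegral_gamma hb hAy,
      ← ENNReal.ofReal_mul (by positivity), ← ENNReal.ofReal_mul (by positivity)]
    congr 1
    rw [one_div, inv_rpow hAy.le, ← rpow_neg hAy.le]
    ring
  have key2 : ∫⁻ t in Ioi (0 : ℝ), ∫⁻ y in Ioi (0 : ℝ),
      ENNReal.ofReal (y ^ (2 * β - 1)) * ENNReal.ofReal (t ^ (β + γ - 1) * exp (-((A + y ^ 2) * t)))
      = ∫⁻ t in Ioi (0 : ℝ), ENNReal.ofReal (1 / 2 * Gamma β) *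
        ENNReal.ofReal (t ^ (γ - 1) * exp (-(A * t))) := by
    refine setLIntegral_congr_fun measurableSet_Ioi fun t (ht : 0 < t) => ?_
    have : ∀ y ∈ Ioi (0 : ℝ), ENNReal.ofReal (y ^ (2 * β - 1)) *
        ENNReal.ofReal (t ^ (β + γ - 1) * exp (-((A + y ^ 2) * t))) =
        ENNReal.ofReal (t ^ (β + γ - 1) * exp (-(A * t))) *
        ENNReal.ofReal (y ^ (2 * β - 1) * exp (-t * y ^ (2 : ℝ))) := by
      intro y (hy : 0 < y)
      rw [← ENNReal.ofReal_mul (by positivity), ← ENNReal.ofReal_mul (by positivity)]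
      congr 1
      have : exp (-((A + y ^ 2) * t)) = exp (-(A * t)) * exp (-t * y ^ (2 : ℝ)) := by
        rw [← exp_add, rpow_two]; ring_nf
      rw [this]; ring
    rw [setLIntegral_congr_fun measurableSet_Ioi this, lintegral_const_mul _ (by fun_prop),
      lintegral_gauss hβ ht, ← ENNReal.ofReal_mul (by positivity),
      ← ENNReal.ofReal_mul (by positivity)]
    congr 1
    have : t ^ (γ - 1) = t ^ (β + γ - 1) * t ^ (-β) := by
      rw [← rpow_add ht]; ring_nf
    rw [this]; ring
  rw [lintegral_lintegral_swap (by fun_prop), key2, lintegral_const_mul _ (by fun_prop),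
    lintegral_gamma hγ hA, lintegral_const_mul _ (by fun_prop)] at key
  have h0 : ENNReal.ofReal (Gamma (β + γ)) ≠ 0 := by simpa using gb
  rw [← ENNReal.mul_right_inj h0 ENNReal.ofReal_ne_top, ← key,
    ← ENNReal.ofReal_mul (by positivity), ← ENNReal.ofReal_mul (by positivity)]
  congr 1
  rw [one_div A, inv_rpow hA.le, ← rpow_neg hA.le]
  field_simp

/-- Radial form of the Beta integral on `ℝᴺ`. -/
lemma lintegral_beta_radial {N : ℕ} (hN : 0 < N) {β γ : ℝ} (hβ : 0 < β) (hγ : 0 < γ) :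
    ∫⁻ x : EuclideanSpace ℝ (Fin N),
      ENNReal.ofReal (‖x‖ ^ (2 * β - N) * (1 + ‖x‖ ^ 2) ^ (-(β + γ))) =
      ENNReal.ofReal (π ^ ((N : ℝ) / 2) / Gamma ((N : ℝ) / 2) *
        (Gamma β * Gamma γ / Gamma (β + γ))) := by
  have : Nonempty (Fin N) := ⟨⟨0, hN⟩⟩
  have hN' : (0 : ℝ) < N := by exact_mod_cast hN
  have gβ := Gamma_pos_of_pos hβ
  have gγ := Gamma_pos_of_pos hγ
  have gb := Gamma_pos_of_pos (add_pos hβ hγ)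
  have gN := Gamma_pos_of_pos (half_pos hN')
  refine lintegral_of_integral (.of_forall fun x => by simp only [Pi.zero_apply]; positivity) ?_
    (by positivity)
  have h1 := integral_fun_norm_addHaar (volume : Measure (EuclideanSpace ℝ (Fin N)))
    (fun r : ℝ => r ^ (2 * β - N) * (1 + r ^ 2) ^ (-(β + γ)))
  rw [h1]
  have h2 : ∫ y in Ioi (0 : ℝ), y ^ (Module.finrank ℝ (EuclideanSpace ℝ (Fin N)) - 1) •
      (y ^ (2 * β - N) * (1 + y ^ 2) ^ (-(β + γ))) = Gamma β * Gamma γ / (2 * Gamma (β + γ)) := by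
    have h3 : ∀ y ∈ Ioi (0 : ℝ), y ^ (Module.finrank ℝ (EuclideanSpace ℝ (Fin N)) - 1) •
      (y ^ (2 * β - N) * (1 + y ^ 2) ^ (-(β + γ))) = y ^ (2 * β - 1) * (1 + y ^ 2) ^ (-(β + γ)) := by
      intro y (hy : 0 < y)
      rw [finrank_euclideanSpace_fin, smul_eq_mul, ← mul_assoc, ← rpow_natCast, ← rpow_add hy,
        Nat.cast_sub (by omega)]
      congr 2; push_cast; ring
    rw [setIntegral_congr_fun measurableSet_Ioi h3]
    have h4 := lintegral_beta hβ hγ one_pos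
    rw [one_rpow, one_mul] at h4
    refine (integral_of_lintegral (by fun_prop) ?_ h4 (by positivity)).2
    filter_upwards [ae_restrict_mem measurableSet_Ioi] with y (hy : 0 < y)
    simp only [Pi.zero_apply]; positivity
  rw [h2, Measure.real, EuclideanSpace.volume_ball, ENNReal.ofReal_one, one_pow, one_mul,
    ENNReal.toReal_ofReal (by
      have := Gamma_pos_of_pos (show (0 : ℝ) < (Fintype.card (Fin N) : ℝ) / 2 + 1 by positivity)
      positivity), Fintype.card_fin, finrank_euclideanSpace_fin, Gamma_add_one (by positivity),
    nsmul_eq_mul, smul_eq_mul]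
  have : √π ^ N = π ^ ((N : ℝ) / 2) := by
    rw [sqrt_eq_rpow, ← rpow_natCast, ← rpow_mul pi_pos.le]; congr 1; ring
  rw [this]
  field_simp

end PartA

/-! ### Two-point symmetrization along an involution -/

section PartB

open Set

/-- An abstract conformal reflection, along which functions can be symmetrized: `σ` exchanges the
half-space `H` with its complement up to null sets, multiplies the measure by `m ^ M` (this is
`cv`) and transforms the kernel `k`, which is conformally covariant of weight `l`. The factor `m` is
less than one on `H`, and two points on the same side interact more strongly than a point and the
reflection of the other one (`kσ_le`). -/
structure IsPol {X : Type*} [MeasurableSpace X] (μ : Measure X) (H : Set X) (σ : X → X)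
    (m : X → ℝ) (k : X → X → ℝ) (M l : ℝ) : Prop where
  measH : MeasurableSet H
  measσ : Measurable σ
  measm : Measurable m
  meask : Measurable (Function.uncurry k)
  m_pos : ∀ x ∈ H, 0 < m x
  m_lt : ∀ x ∈ H, m x < 1
  σσ : ∀ x ∈ H, σ (σ x) = x
  σH : ∀ x ∈ H, σ x ∉ H
  mσ : ∀ x ∈ H, m (σ x) = (m x)⁻¹
  k_nonneg : ∀ x y, 0 ≤ k x y
  kσσ : ∀ x ∈ H, ∀ y ∈ H, k (σ x) (σ y) * (m x ^ l * m y ^ l) = k x y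
  kσ : ∀ x ∈ H, ∀ y ∈ H, m y ^ l * k x (σ y) = m x ^ l * k (σ x) y
  kσ_le : ∀ x ∈ H, ∀ᵐ y ∂μ, y ∈ H → m x ^ l * k (σ x) y ≤ k x y
  cv : ∀ g : X → ENNReal, Measurable g →
    ∫⁻ x, g x ∂μ = ∫⁻ x in H, (g x + ENNReal.ofReal (m x ^ M) * g (σ x)) ∂μ

/-- The `L^(M/(M-l))`-isometric pull-back of `F` along the conformal involution `σ`. -/
noncomputable def pull {X : Type*} (σ : X → X) (m : X → ℝ) (e : ℝ) (F : X → ℝ) (x : X) : ℝ :=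
  m x ^ e * F (σ x)

open Classical in
/-- Two-point symmetrization of `F` towards `H`. -/
noncomputable def pol {X : Type*} (H : Set X) (σ : X → X) (m : X → ℝ) (e : ℝ) (F : X → ℝ)
    (x : X) : ℝ :=
  if x ∈ H then max (F x) (pull σ m e F x) else min (F x) (pull σ m e F x)

/-- The quadratic form with kernel `k`. -/
noncomputable def Q {X : Type*} [MeasurableSpace X] (μ : Measure X) (k : X → X → ℝ)
    (F : X → ℝ) : ENNReal :=
  ∫⁻ x, ∫⁻ y, ENNReal.ofReal (F x * F y * k x y) ∂μ ∂μ

variable {X : Type*} [MeasurableSpace X] {μ : Measure X} {H : Set X} {σ : X → X}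
    {m : X → ℝ} {k : X → X → ℝ} {M l : ℝ}

namespace IsPol

lemma measurable_pull (h : IsPol μ H σ m k M l) {e : ℝ} {F : X → ℝ} (hF : Measurable F) :
    Measurable (pull σ m e F) :=
  (h.measm.pow_const _).mul (hF.comp h.measσ)

lemma measurable_pol (h : IsPol μ H σ m k M l) {e : ℝ} {F : X → ℝ} (hF : Measurable F) :
    Measurable (pol H σ m e F) := by
  classical
  exact Measurable.ite h.measH (hF.max (h.measurable_pull hF)) (hF.min (h.measurable_pull hF))

lemma pol_of_mem {e : ℝ} {F : X → ℝ} {x : X} (hx : x ∈ H) :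
    pol H σ m e F x = max (F x) (pull σ m e F x) := by
  simp [pol, hx]

lemma pull_pol_of_mem (h : IsPol μ H σ m k M l) {e : ℝ} {F : X → ℝ} {x : X} (hx : x ∈ H) :
    pull σ m e (pol H σ m e F) x = min (F x) (pull σ m e F x) := by
  have h0 := h.m_pos x hx
  simp only [pull, pol, h.σH x hx, if_false, h.mσ x hx, h.σσ x hx]
  rw [mul_min_of_nonneg _ _ (by positivity), ← mul_assoc, ← mul_rpow h0.le (by positivity),
    mul_inv_cancel₀ h0.ne', one_rpow, one_mul, min_comm]

/-- As the pull-back is an isometry of `Lᵖ`, the `p`-th powers of both terms have weight one. -/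
lemma lintegral_rpow (h : IsPol μ H σ m k M l) {p : ℝ} (hp : 0 < p) (hpM : p * (M - l) = M)
    {F : X → ℝ} (hF : Measurable F) (hF0 : ∀ x, 0 ≤ F x) :
    ∫⁻ x, ENNReal.ofReal (F x ^ p) ∂μ =
      ∫⁻ x in H, (ENNReal.ofReal (F x ^ p) + ENNReal.ofReal (pull σ m (M - l) F x ^ p)) ∂μ := by
  rw [h.cv _ (hF.pow_const _).ennreal_ofReal]
  refine setLIntegral_congr_fun h.measH fun x hx => ?_
  have h0 := h.m_pos x hx
  have := hF0 (σ x)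
  simp only [pull]
  rw [← ENNReal.ofReal_mul (by positivity), mul_rpow (by positivity) this, ← rpow_mul h0.le,
    mul_comm (M - l), hpM]

/-- In `L¹` the pull-back enters with the weight `m ^ l < 1`: this is what makes two-point
symmetrization increase the integral. -/
lemma lintegral_one (h : IsPol μ H σ m k M l)
    {F : X → ℝ} (hF : Measurable F) (hF0 : ∀ x, 0 ≤ F x) :
    ∫⁻ x, ENNReal.ofReal (F x) ∂μ =
      ∫⁻ x in H, ENNReal.ofReal (F x + m x ^ l * pull σ m (M - l) F x) ∂μ := by
  rw [h.cv _ hF.ennreal_ofReal]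
  refine setLIntegral_congr_fun h.measH fun x hx => ?_
  have h0 := h.m_pos x hx
  have := hF0 (σ x)
  have := hF0 x
  simp only [pull]
  rw [← mul_assoc, ← rpow_add h0, ← ENNReal.ofReal_mul (by positivity),
    ← ENNReal.ofReal_add (by positivity) (by positivity)]
  congr 5; ring

/-- The quadratic form folded onto `H × H`. -/
lemma Q_eq [SFinite μ] (h : IsPol μ H σ m k M l)
    {F : X → ℝ} (hF : Measurable F) (hF0 : ∀ x, 0 ≤ F x) :
    Q μ k F = ∫⁻ x in H, ∫⁻ y in H, ENNReal.ofReal (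
      (F x * F y + pull σ m (M - l) F x * pull σ m (M - l) F y) * k x y +
      (F x * pull σ m (M - l) F y + pull σ m (M - l) F x * F y) * (m x ^ l * k (σ x) y)) ∂μ ∂μ := by
  have hk := h.meask
  have hJ : Measurable (fun z : X × X => ENNReal.ofReal (F z.1 * F z.2 * k z.1 z.2)) :=
    (((hF.comp measurable_fst).mul (hF.comp measurable_snd)).mul hk).ennreal_ofReal
  have hσ' := h.measσ
  have hm' := h.measm
  have hJ1 : Measurable (fun z : X × X => ENNReal.ofReal (F (σ z.1) * F z.2 * k (σ z.1) z.2)) :=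
    hJ.comp ((h.measσ.comp measurable_fst).prodMk measurable_snd)
  have hJ2 : Measurable (fun z : X × X => ENNReal.ofReal (F z.1 * F (σ z.2) * k z.1 (σ z.2))) :=
    hJ.comp (measurable_fst.prodMk (h.measσ.comp measurable_snd))
  unfold Q
  rw [h.cv _ hJ.lintegral_prod_right']
  refine setLIntegral_congr_fun h.measH fun x hx => ?_
  have hx0 := h.m_pos x hx
  have m1 : Measurable fun y => ENNReal.ofReal (F x * F y * k x y) :=
    hJ.comp measurable_prodMk_left
  have m2 : Measurable fun y => ENNReal.ofReal (F (σ x) * F y * k (σ x) y) :=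
    hJ.comp measurable_prodMk_left
  have hmM : Measurable fun y => ENNReal.ofReal (m y ^ M) := (hm'.pow_const _).ennreal_ofReal
  simp only
  rw [h.cv _ m1, h.cv _ m2, ← lintegral_const_mul, ← lintegral_add_left]
  · refine setLIntegral_congr_fun h.measH fun y hy => ?_
    have hy0 := h.m_pos y hy
    have a1 := hF0 x
    have a2 := hF0 y
    have a3 := hF0 (σ x)
    have a4 := hF0 (σ y)
    have k1 := h.k_nonneg x y
    have k2 := h.k_nonneg (σ x) y
    have k3 := h.k_nonneg x (σ y)
    have k4 := h.k_nonneg (σ x) (σ y)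
    simp only [pull]
    rw [← ENNReal.ofReal_mul (by positivity), ← ENNReal.ofReal_add (by positivity) (by positivity),
      ← ENNReal.ofReal_mul (by positivity), ← ENNReal.ofReal_add (by positivity) (by positivity),
      ← ENNReal.ofReal_mul (by positivity), ← ENNReal.ofReal_add (by positivity) (by positivity)]
    congr 1
    have e1 := h.kσσ x hx y hy
    have e2 := h.kσ x hx y hy
    have r1 : m x ^ M = m x ^ (M - l) * m x ^ l := by rw [← rpow_add hx0]; ring_nf
    have r2 : m y ^ M = m y ^ (M - l) * m y ^ l := by rw [← rpow_add hy0]; ring_nf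
    rw [r1, r2]
    linear_combination (m x ^ (M - l) * m y ^ (M - l) * F (σ x) * F (σ y)) * e1 +
      F x * F (σ y) * m y ^ (M - l) * e2
  · exact m1.add (hmM.mul (m1.comp hσ'))
  · exact m2.add (hmM.mul (m2.comp hσ'))

lemma pol_nonneg (h : IsPol μ H σ m k M l) (hm0 : ∀ x, 0 ≤ m x) {e : ℝ} {F : X → ℝ}
    (hF0 : ∀ x, 0 ≤ F x) (x : X) : 0 ≤ pol H σ m e F x := by
  have : 0 ≤ pull σ m e F x := mul_nonneg (rpow_nonneg (hm0 x) _) (hF0 _)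
  unfold pol
  split_ifs
  · exact le_max_of_le_left (hF0 x)
  · exact le_min (hF0 x) this

/-- Symmetrizing towards the side where `m < 1` preserves upper bounds. -/
lemma pol_le (h : IsPol μ H σ m k M l) {e : ℝ} (he : 0 ≤ e) {F : X → ℝ} {C : ℝ}
    (hF0 : ∀ x, 0 ≤ F x) (hF : ∀ x, F x ≤ C) (x : X) : pol H σ m e F x ≤ C := by
  unfold pol
  split_ifs with hx
  · refine max_le (hF x) ?_
    refine (mul_le_of_le_one_left (hF0 _) ?_).trans (hF (σ x))
    exact rpow_le_one (h.m_pos x hx).le (h.m_lt x hx).le he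
  · exact min_le_of_left_le (hF x)

lemma lintegral_rpow_pol (h : IsPol μ H σ m k M l) (hm0 : ∀ x, 0 ≤ m x) {p : ℝ} (hp : 0 < p)
    (hpM : p * (M - l) = M)
    {F : X → ℝ} (hF : Measurable F) (hF0 : ∀ x, 0 ≤ F x) :
    ∫⁻ x, ENNReal.ofReal (pol H σ m (M - l) F x ^ p) ∂μ = ∫⁻ x, ENNReal.ofReal (F x ^ p) ∂μ := by
  rw [h.lintegral_rpow hp hpM hF hF0, h.lintegral_rpow hp hpM (h.measurable_pol hF)
    (h.pol_nonneg hm0 hF0)]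
  refine setLIntegral_congr_fun h.measH fun x hx => ?_
  rw [pol_of_mem hx, h.pull_pol_of_mem hx]
  rcases le_total (F x) (pull σ m (M - l) F x) with hh | hh
  · rw [max_eq_right hh, min_eq_left hh, add_comm]
  · rw [max_eq_left hh, min_eq_right hh]

/-- Polarization does not decrease the quadratic form: rearrangement inequality for each
quadruple `x, y, σ x, σ y`. -/
lemma Q_le_Q_pol [SFinite μ] (h : IsPol μ H σ m k M l) (hm0 : ∀ x, 0 ≤ m x)
    {F : X → ℝ} (hF : Measurable F) (hF0 : ∀ x, 0 ≤ F x) :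
    Q μ k F ≤ Q μ k (pol H σ m (M - l) F) := by
  rw [h.Q_eq hF hF0, h.Q_eq (h.measurable_pol hF) (h.pol_nonneg hm0 hF0)]
  refine setLIntegral_mono' h.measH fun x hx => ?_
  refine lintegral_mono_ae ((ae_restrict_iff' h.measH).2 ?_)
  filter_upwards [h.kσ_le x hx] with y hk hy
  replace hk := hk hy
  refine ENNReal.ofReal_le_ofReal ?_
  rw [pol_of_mem hx, pol_of_mem hy, h.pull_pol_of_mem hx, h.pull_pol_of_mem hy]
  generalize m x ^ l * k (σ x) y = b at *
  generalize k x y = a at *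
  generalize pull σ m (M - l) F x = A' at *
  generalize pull σ m (M - l) F y = B' at *
  generalize F x = A at *
  generalize F y = B at *
  rcases le_total A A' with h1 | h1 <;> rcases le_total B B' with h2 | h2 <;>
    simp only [h1, h2, max_eq_left, max_eq_right, min_eq_left, min_eq_right] <;>
    nlinarith [mul_nonneg (mul_nonneg (sub_nonneg.2 h1) (sub_nonneg.2 h2)) (sub_nonneg.2 hk)]

/-- If polarization does not increase the integral, the function was already polarized. -/
lemma pull_le_of_lintegral_le [IsFiniteMeasure μ] (h : IsPol μ H σ m k M l) (hm0 : ∀ x, 0 ≤ m x)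
    (hl : 0 < l)
    {F : X → ℝ} {C : ℝ} (hF : Measurable F) (hF0 : ∀ x, 0 ≤ F x) (hFC : ∀ x, F x ≤ C)
    (hle : ∫⁻ x, ENNReal.ofReal (pol H σ m (M - l) F x) ∂μ ≤ ∫⁻ x, ENNReal.ofReal (F x) ∂μ) :
    ∀ᵐ x ∂μ, x ∈ H → pull σ m (M - l) F x ≤ F x := by
  have hfin : ∫⁻ x, ENNReal.ofReal (F x) ∂μ ≠ ⊤ := by
    refine ((lintegral_mono fun x => ENNReal.ofReal_le_ofReal (hFC x)).trans_lt ?_).ne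
    rw [lintegral_const]
    exact ENNReal.mul_lt_top ENNReal.ofReal_lt_top (measure_lt_top _ _)
  rw [h.lintegral_one (h.measurable_pol hF) (h.pol_nonneg hm0 hF0), h.lintegral_one hF hF0] at hle
  rw [h.lintegral_one hF hF0] at hfin
  have hmon : ∀ x ∈ H, F x + m x ^ l * pull σ m (M - l) F x ≤
      pol H σ m (M - l) F x + m x ^ l * pull σ m (M - l) (pol H σ m (M - l) F) x := by
    intro x hx
    rw [pol_of_mem hx, h.pull_pol_of_mem hx]
    have : m x ^ l ≤ 1 := rpow_le_one (h.m_pos x hx).le (h.m_lt x hx).le hl.le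
    rcases le_total (F x) (pull σ m (M - l) F x) with hh | hh
    · rw [max_eq_right hh, min_eq_left hh]; nlinarith
    · rw [max_eq_left hh, min_eq_right hh]
  have hpm := h.measurable_pull (e := M - l) (h.measurable_pol (e := M - l) hF)
  have hae := ae_eq_of_ae_le_of_lintegral_le (μ := μ.restrict H)
    (f := fun x => ENNReal.ofReal (F x + m x ^ l * pull σ m (M - l) F x))
    (g := fun x => ENNReal.ofReal (pol H σ m (M - l) F x +
      m x ^ l * pull σ m (M - l) (pol H σ m (M - l) F) x))
    ((ae_restrict_mem h.measH).mono fun x hx => ENNReal.ofReal_le_ofReal (hmon x hx)) hfin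
    (((h.measurable_pol hF).add ((h.measm.pow_const _).mul hpm)).ennreal_ofReal.aemeasurable) hle
  rw [Filter.EventuallyEq, ae_restrict_iff' h.measH] at hae
  filter_upwards [hae] with x hx hxH
  have e := hx hxH
  have hp0 : 0 ≤ pull σ m (M - l) F x := mul_nonneg (rpow_nonneg (hm0 x) _) (hF0 _)
  rw [ENNReal.ofReal_eq_ofReal_iff (by have := hm0 x; have := hF0 x; positivity) (by
    have := hm0 x
    have := h.pol_nonneg (e := M - l) hm0 hF0 x
    have : 0 ≤ pull σ m (M - l) (pol H σ m (M - l) F) x :=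
      mul_nonneg (rpow_nonneg (hm0 x) _) (h.pol_nonneg hm0 hF0 _)
    positivity), pol_of_mem hxH, h.pull_pol_of_mem hxH] at e
  by_contra! hlt
  rw [max_eq_right hlt.le, min_eq_left hlt.le] at e
  have : m x ^ l < 1 := rpow_lt_one (h.m_pos x hxH).le (h.m_lt x hxH) hl
  nlinarith

end IsPol

end PartB

/-! ### Inversions in stereographic coordinates -/

section PartC

open Set EuclideanGeometry

/-- The ambient Euclidean space. -/
abbrev En (N : ℕ) := EuclideanSpace ℝ (Fin N)

/-- The weight `1 + |x|²`, the inverse of the conformal factor of stereographic projection up to a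
constant. -/
noncomputable def om {N : ℕ} (x : En N) : ℝ := 1 + ‖x‖ ^ 2

/-- `(1 + |x|²)⁻ᴺ dx`: up to a constant, the surface measure of the unit sphere `𝕊ᴺ` read in
stereographic coordinates. -/
noncomputable def mu (N : ℕ) : Measure (En N) :=
  volume.withDensity fun x => ENNReal.ofReal (om x ^ (-(N : ℝ)))

/-- A power of the inverse squared chordal distance on `𝕊ᴺ`, in stereographic coordinates. -/
noncomputable def ker {N : ℕ} (l : ℝ) (x y : En N) : ℝ := (om x * om y / ‖x - y‖ ^ 2) ^ l

/-- The conformal factor of the inversion of centre `a` and radius `r` with respect to the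
spherical metric. -/
noncomputable def mm {N : ℕ} (a : En N) (r : ℝ) (x : En N) : ℝ :=
  r ^ 2 / ‖x - a‖ ^ 2 * (om x / om (inversion a r x))

variable {N : ℕ}

lemma om_pos (x : En N) : 0 < om x := by unfold om; positivity

lemma continuous_om : Continuous (om : En N → ℝ) := by unfold om; fun_prop

lemma norm_sub_sq_pos {x a : En N} (h : x ≠ a) : 0 < ‖x - a‖ ^ 2 := by
  have := norm_pos_iff.2 (sub_ne_zero.2 h); positivity

lemma norm_sub_ne {x a : En N} (h : x ≠ a) : ‖x - a‖ ≠ 0 := norm_ne_zero_iff.2 (sub_ne_zero.2 h)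

lemma mm_nonneg (a : En N) (r : ℝ) (x : En N) : 0 ≤ mm a r x := by
  have := om_pos x
  have := om_pos (inversion a r x)
  unfold mm; positivity

lemma mm_pos {a : En N} {r : ℝ} (hr : 0 < r) {x : En N} (hx : x ≠ a) : 0 < mm a r x := by
  have := om_pos x
  have := om_pos (inversion a r x)
  have := norm_sub_sq_pos hx
  unfold mm; positivity

lemma inversion_eq (a : En N) (r : ℝ) (x : En N) :
    inversion a r x = (r ^ 2 / ‖x - a‖ ^ 2) • (x - a) + a := by
  rw [inversion, dist_eq_norm, div_pow]; rfl

lemma norm_inversion_sub_sq {a : En N} {r : ℝ} {x : En N} (hx : x ≠ a) :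
    ‖inversion a r x - a‖ ^ 2 = r ^ 4 / ‖x - a‖ ^ 2 := by
  have := norm_sub_sq_pos hx
  rw [← dist_eq_norm, dist_inversion_center, dist_eq_norm, div_pow]; ring

lemma norm_inversion_inversion_sq {a : En N} {r : ℝ} {x y : En N} (hx : x ≠ a) (hy : y ≠ a) :
    ‖inversion a r x - inversion a r y‖ ^ 2 =
      (r ^ 2 / ‖x - a‖ ^ 2) * (r ^ 2 / ‖y - a‖ ^ 2) * ‖x - y‖ ^ 2 := by
  rw [← dist_eq_norm, dist_inversion_inversion hx hy]
  simp only [dist_eq_norm]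
  ring

lemma mm_inversion {a : En N} {r : ℝ} (hr : 0 < r) {x : En N} (hx : x ≠ a) :
    mm a r (inversion a r x) = (mm a r x)⁻¹ := by
  have h1 := om_pos x
  have h2 := om_pos (inversion a r x)
  have h3 := norm_sub_sq_pos hx
  unfold mm
  rw [inversion_inversion a hr.ne', norm_inversion_sub_sq hx]
  field_simp

/-- The inversion multiplies chordal distances by its conformal factors. -/
lemma ker_inversion {a : En N} {r : ℝ} (hr : 0 < r) {l : ℝ} {x y : En N} (hx : x ≠ a)
    (hy : y ≠ a) :
    ker l (inversion a r x) (inversion a r y) * (mm a r x ^ l * mm a r y ^ l) = ker l x y := by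
  have h1 := om_pos x
  have h2 := om_pos (inversion a r x)
  have h3 := norm_sub_sq_pos hx
  have h1' := om_pos y
  have h2' := om_pos (inversion a r y)
  have h3' := norm_sub_sq_pos hy
  have p1 := mm_pos hr hx
  have p2 := mm_pos hr hy
  unfold ker
  rw [← mul_rpow p1.le p2.le, ← mul_rpow (by positivity) (by positivity),
    norm_inversion_inversion_sq hx hy]
  congr 1
  rcases eq_or_ne x y with rfl | hxy
  · simp
  have h4 := norm_sub_ne hxy
  have h5 := norm_sub_ne hx
  have h6 := norm_sub_ne hy
  unfold mm
  field_simp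

lemma mm_mul_ker {a : En N} {r : ℝ} (l : ℝ) (x y : En N) :
    mm a r x ^ l * ker l (inversion a r x) y =
      (om x * om y * (r ^ 2 / (‖x - a‖ ^ 2 * ‖inversion a r x - y‖ ^ 2))) ^ l := by
  have h1 := om_pos x
  have h2 := om_pos (inversion a r x)
  have h1' := om_pos y
  unfold ker
  rw [← mul_rpow (mm_nonneg _ _ _) (by positivity)]
  congr 1
  unfold mm
  field_simp

lemma ker_comm (l : ℝ) (x y : En N) : ker l x y = ker l y x := by
  unfold ker; rw [mul_comm (om x), norm_sub_rev]

lemma ker_nonneg (l : ℝ) (x y : En N) : 0 ≤ ker l x y := by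
  have := om_pos x
  have := om_pos y
  unfold ker; positivity

/-- Distances between a point and a reflected point: the excess over the distance of the points
themselves has the sign of the product of the powers of the two points. -/
lemma cross {a : En N} {r : ℝ} {x y : En N} (hx : x ≠ a) :
    ‖x - a‖ ^ 2 * ‖inversion a r x - y‖ ^ 2 =
      r ^ 2 * ‖x - y‖ ^ 2 + (‖x - a‖ ^ 2 - r ^ 2) * (‖y - a‖ ^ 2 - r ^ 2) := by
  have h3 := norm_sub_ne hx
  have e1 : inversion a r x - y = (r ^ 2 / ‖x - a‖ ^ 2) • (x - a) - (y - a) := by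
    rw [inversion_eq]; abel
  have e2 : x - y = (x - a) - (y - a) := by abel
  rw [e1, e2]
  generalize y - a = v at *
  generalize x - a = u at *
  rw [norm_sub_sq_real, norm_sub_sq_real, norm_smul, inner_smul_left, mul_pow, norm_eq_abs, sq_abs]
  simp only [conj_trivial]
  field_simp
  ring

lemma mm_mul_ker_symm {a : En N} {r : ℝ} (l : ℝ) {x y : En N} (hx : x ≠ a) (hy : y ≠ a) :
    mm a r y ^ l * ker l x (inversion a r y) = mm a r x ^ l * ker l (inversion a r x) y := by
  rw [ker_comm l x, mm_mul_ker, mm_mul_ker, cross hx, cross hy, norm_sub_rev]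
  congr 1
  ring

lemma mm_mul_ker_le {a : En N} {r : ℝ} {l : ℝ} (hl : 0 ≤ l) {x y : En N} (hx : x ≠ a)
    (hxy : x ≠ y)
    (h : 0 ≤ (‖x - a‖ ^ 2 - r ^ 2) * (‖y - a‖ ^ 2 - r ^ 2)) :
    mm a r x ^ l * ker l (inversion a r x) y ≤ ker l x y := by
  have h1 := om_pos x
  have h1' := om_pos y
  have h2 := norm_sub_sq_pos hx
  have h4 := norm_sub_sq_pos hxy
  rw [mm_mul_ker, cross hx, ker]
  refine rpow_le_rpow (by positivity) ?_ hl
  rw [mul_div_assoc (om x * om y) _ _ |>.symm]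
  rcases eq_or_ne r 0 with rfl | hr
  · simp; positivity
  have : 0 < r ^ 2 := by positivity
  rw [div_le_div_iff₀ (by positivity) h4]
  have : 0 ≤ om x * om y := by positivity
  nlinarith

/-- For `τ = 0` the inversion is an isometry of the sphere; for `τ ≠ 0` the conformal factor
compares with one according to the side of `‖x - a‖ = r` on which `x` lies. -/
lemma mm_eq {a : En N} {r τ : ℝ} (hr : r ^ 2 = 1 + ‖a‖ ^ 2 + τ) {x : En N} (hx : x ≠ a) :
    mm a r x = r ^ 2 * om x / (r ^ 2 * om x - τ * (‖x - a‖ ^ 2 - r ^ 2)) := by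
  have h3 := norm_sub_sq_pos hx
  have h2 := om_pos (inversion a r x)
  have h4 := norm_sub_ne hx
  have key : ‖x - a‖ ^ 2 * om (inversion a r x) = r ^ 2 * om x - τ * (‖x - a‖ ^ 2 - r ^ 2) := by
    have e2 : ‖x‖ = ‖(x - a) + a‖ := by rw [sub_add_cancel]
    rw [om, om, inversion_eq, e2]
    generalize x - a = u at *
    rw [norm_add_sq_real, norm_add_sq_real, norm_smul, inner_smul_left, mul_pow, norm_eq_abs,
      sq_abs]
    simp only [conj_trivial]
    have : τ = r ^ 2 - 1 - ‖a‖ ^ 2 := by linarith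
    rw [this]
    field_simp
    ring
  rw [← key, mm]
  field_simp

lemma abs_det_inversion {a : En N} {r : ℝ} (x : En N) :
    |((r / dist x a) ^ 2 • ((ℝ ∙ (x - a))ᗮ.reflection : En N →L[ℝ] En N)).det| =
      (r ^ 2 / ‖x - a‖ ^ 2) ^ N := by
  have h : |LinearMap.det (((ℝ ∙ (x - a))ᗮ.reflection : En N →L[ℝ] En N) : En N →ₗ[ℝ] En N)| = 1 := by
    have := Submodule.det_reflection (ℝ ∙ (x - a))ᗮ
    refine (congrArg abs this).trans ?_
    rw [abs_pow, abs_neg, abs_one, one_pow]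
  rw [ContinuousLinearMap.det, ContinuousLinearMap.toLinearMap_smul, LinearMap.det_smul, abs_mul, h,
    finrank_euclideanSpace_fin, mul_one, dist_eq_norm, div_pow, abs_of_nonneg (by positivity)]

lemma measurable_inversion (a : En N) (r : ℝ) : Measurable (inversion a r : En N → En N) := by
  have : (inversion a r : En N → En N) = fun x => (r ^ 2 / ‖x - a‖ ^ 2) • (x - a) + a :=
    funext fun x => inversion_eq a r x
  rw [this]; fun_prop

lemma measurable_om : Measurable (om : En N → ℝ) := continuous_om.measurable

lemma measurable_mm (a : En N) (r : ℝ) : Measurable (mm a r) := by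
  unfold mm
  exact (by fun_prop : Measurable fun x : En N => r ^ 2 / ‖x - a‖ ^ 2).mul
    (measurable_om.div (measurable_om.comp (measurable_inversion a r)))

lemma measurable_ker (l : ℝ) : Measurable (Function.uncurry (ker l : En N → En N → ℝ)) := by
  have := measurable_om (N := N)
  unfold ker Function.uncurry
  fun_prop

lemma measurable_dens : Measurable fun x : En N => ENNReal.ofReal (om x ^ (-(N : ℝ))) :=
  (measurable_om.pow_const _).ennreal_ofReal

/-- Change of variables along an inversion. -/
lemma setLIntegral_inversion {a : En N} {r : ℝ} (hr : 0 < r) {S : Set (En N)}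
    (hS : MeasurableSet S) (ha : a ∉ S) {g : En N → ENNReal} (hg : Measurable g) :
    ∫⁻ x in inversion a r '' S, g x ∂(mu N) =
      ∫⁻ x in S, ENNReal.ofReal (mm a r x ^ (N : ℝ)) * g (inversion a r x) ∂(mu N) := by
  have hd : ∀ x ∈ S, HasFDerivWithinAt (inversion a r)
      ((r / dist x a) ^ 2 • ((ℝ ∙ (x - a))ᗮ.reflection : En N →L[ℝ] En N)) S x := fun x hx =>
    (hasFDerivAt_inversion (fun h => ha (by rw [← h]; exact hx))).hasFDerivWithinAt
  have hinj : InjOn (inversion a r : En N → En N) S := (inversion_injective a hr.ne').injOn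
  have hSi : MeasurableSet (inversion a r '' S) := by
    have : inversion a r '' S = inversion a r ⁻¹' S := by
      ext x
      constructor
      · rintro ⟨y, hy, rfl⟩
        simpa [inversion_inversion a hr.ne'] using hy
      · intro hx
        exact ⟨_, hx, inversion_inversion a hr.ne' x⟩
    rw [this]
    exact measurable_inversion a r hS
  have hσ := measurable_inversion a r
  rw [mu, setLIntegral_withDensity_eq_setLIntegral_mul _ measurable_dens hg hSi,
    setLIntegral_withDensity_eq_setLIntegral_mul (g := fun x => ENNReal.ofReal (mm a r x ^ (N : ℝ)) *
      g (inversion a r x)) _ measurable_dens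
      (((measurable_mm a r).pow_const _).ennreal_ofReal.mul (hg.comp hσ)) hS,
    lintegral_image_eq_lintegral_abs_det_fderiv_mul _ hS hd hinj]
  refine setLIntegral_congr_fun hS fun x hx => ?_
  have hxa : x ≠ a := fun h => ha (by rw [← h]; exact hx)
  have h1 := om_pos x
  have h2 := om_pos (inversion a r x)
  have h3 := norm_sub_sq_pos hxa
  simp only [Pi.mul_apply]
  rw [abs_det_inversion, ← mul_assoc, ← mul_assoc, ← ENNReal.ofReal_mul (by positivity),
    ← ENNReal.ofReal_mul (by positivity)]
  congr 2
  rw [mm, rpow_neg h1.le, rpow_neg h2.le, rpow_natCast, rpow_natCast, rpow_natCast, mul_pow,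
    div_pow (om x)]
  field_simp

/-- The side of the sphere `‖x - a‖ = r` on which the inversion contracts the spherical metric,
when `r ^ 2 = 1 + ‖a‖ ^ 2 + τ`. The centre, whose image is a junk value, is excluded. -/
def side (a : En N) (r τ : ℝ) : Set (En N) := {x | x ≠ a ∧ τ * (‖x - a‖ ^ 2 - r ^ 2) < 0}

lemma ae_mu_of_ae {P : En N → Prop} (h : ∀ᵐ x, P x) : ∀ᵐ x ∂(mu N), P x :=
  (withDensity_absolutelyContinuous volume _).ae_le h

lemma ae_ne_volume (hN : 0 < N) (a : En N) : ∀ᵐ x : En N, x ≠ a := by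
  have : Nonempty (Fin N) := ⟨⟨0, hN⟩⟩
  have : Nontrivial (En N) := by infer_instance
  exact Measure.ae_ne volume a

lemma ae_ne_mu (hN : 0 < N) (a : En N) : ∀ᵐ x ∂(mu N), x ≠ a := ae_mu_of_ae (ae_ne_volume hN a)

lemma isPol {a : En N} {r τ l : ℝ} (hN : 0 < N) (hτ : τ ≠ 0) (hr0 : 0 < r)
    (hr : r ^ 2 = 1 + ‖a‖ ^ 2 + τ) (hl : 0 < l) :
    IsPol (mu N) (side a r τ) (inversion a r) (mm a r) (ker l) N l := by
  have : Nonempty (Fin N) := ⟨⟨0, hN⟩⟩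
  have hr2 : 0 < r ^ 2 := by positivity
  have hmeas : Measurable fun x : En N => τ * (‖x - a‖ ^ 2 - r ^ 2) := by fun_prop
  have hside : MeasurableSet (side a r τ) := by
    exact (measurableSet_singleton a).compl.inter (measurableSet_lt hmeas measurable_const)
  have himg : inversion a r '' side a r τ = {x | x ≠ a ∧ 0 < τ * (‖x - a‖ ^ 2 - r ^ 2)} := by
    have aux : ∀ x : En N, x ≠ a → τ * (‖inversion a r x - a‖ ^ 2 - r ^ 2) =
        - (r ^ 2 / ‖x - a‖ ^ 2 * (τ * (‖x - a‖ ^ 2 - r ^ 2))) := by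
      intro x hx
      have h3 := norm_sub_ne hx
      rw [norm_inversion_sub_sq hx]; field_simp; ring
    ext x
    constructor
    · rintro ⟨y, ⟨hy, hy2⟩, rfl⟩
      refine ⟨by rwa [Ne, inversion_eq_center hr0.ne'], ?_⟩
      have h3 := norm_sub_sq_pos hy
      rw [aux y hy]
      have : 0 < r ^ 2 / ‖y - a‖ ^ 2 := by positivity
      nlinarith
    · rintro ⟨hx, hx2⟩
      refine ⟨inversion a r x, ⟨by rwa [Ne, inversion_eq_center hr0.ne'], ?_⟩,
        inversion_inversion a hr0.ne' x⟩
      have h3 := norm_sub_sq_pos hx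
      rw [aux x hx]
      have : 0 < r ^ 2 / ‖x - a‖ ^ 2 := by positivity
      nlinarith
  refine ⟨hside, measurable_inversion a r, measurable_mm a r, measurable_ker l,
    fun x hx => mm_pos hr0 hx.1, ?_, fun x _ => inversion_inversion a hr0.ne' x, ?_,
    fun x hx => mm_inversion hr0 hx.1, ker_nonneg l,
    fun x hx y hy => ker_inversion hr0 hx.1 hy.1,
    fun x hx y hy => mm_mul_ker_symm l hx.1 hy.1, ?_, ?_⟩
  · rintro x ⟨hx, hx2⟩
    have := om_pos x
    rw [mm_eq hr hx, div_lt_one (by nlinarith [mul_pos hr2 this])]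
    linarith
  · intro x hx hx'
    have : inversion a r x ∈ inversion a r '' side a r τ := ⟨x, hx, rfl⟩
    rw [himg] at this
    exact lt_asymm this.2 hx'.2
  · rintro x ⟨hx, hx2⟩
    filter_upwards [ae_ne_mu hN x] with y hxy
    rintro ⟨hy, hy2⟩
    replace hxy := hxy.symm
    refine mm_mul_ker_le hl.le hx hxy ?_
    by_contra! hneg
    have := mul_pos_of_neg_of_neg hx2 hy2
    have h4 : 0 < τ ^ 2 := by positivity
    nlinarith
  · intro g hg
    have hm := ((measurable_mm a r).pow_const (N : ℝ)).ennreal_ofReal.mul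
      (hg.comp (measurable_inversion a r))
    rw [lintegral_add_left hg, ← setLIntegral_inversion hr0 hside (fun h => h.1 rfl) hg,
      ← lintegral_union]
    · rw [himg]
      have hae : ∀ᵐ x ∂(mu N), x ∈ side a r τ ∪ {x | x ≠ a ∧ 0 < τ * (‖x - a‖ ^ 2 - r ^ 2)} := by
        refine (withDensity_absolutelyContinuous volume _).ae_le ?_
        have h1 : ∀ᵐ x : En N, x ∉ Metric.sphere a r :=
          measure_eq_zero_iff_ae_notMem.1 (Measure.addHaar_sphere_of_ne_zero _ _ hr0.ne')
        have h2 := ae_ne_volume hN a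
        filter_upwards [h1, h2] with x hx hx2
        have : τ * (‖x - a‖ ^ 2 - r ^ 2) ≠ 0 := by
          refine mul_ne_zero hτ (sub_ne_zero.2 fun h => hx ?_)
          rw [Metric.mem_sphere, dist_eq_norm]
          exact (pow_left_inj₀ (norm_nonneg _) hr0.le two_ne_zero).1 h
        rcases lt_or_gt_of_ne this with h | h
        · exact Or.inl ⟨hx2, h⟩
        · exact Or.inr ⟨hx2, h⟩
      rw [Measure.restrict_eq_self_of_ae_mem hae]
    · rw [himg]
      exact (measurableSet_singleton a).compl.inter (measurableSet_lt measurable_const hmeas)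
    · rw [himg, Set.disjoint_left]
      rintro x ⟨_, h1⟩ ⟨_, h2⟩
      exact lt_asymm h1 h2

end PartC

/-! ### Total mass and the potential of constants -/

section PartC2

open Set EuclideanGeometry
variable {N : ℕ}

/-- The Beta integral with both parameters equal to `N / 2`. -/
lemma mu_univ (hN : 0 < N) :
    mu N univ = ENNReal.ofReal (π ^ ((N : ℝ) / 2) * Gamma ((N : ℝ) / 2) / Gamma N) := by
  have hN' : (0 : ℝ) < N := by exact_mod_cast hN
  have h := lintegral_beta_radial (N := N) (β := (N : ℝ) / 2) (γ := (N : ℝ) / 2) hN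
    (by positivity) (by positivity)
  rw [mu, withDensity_apply _ MeasurableSet.univ, Measure.restrict_univ]
  rw [add_halves] at h
  refine (lintegral_congr fun x => ?_).trans (h.trans ?_)
  · rw [show 2 * ((N : ℝ) / 2) - N = 0 by ring, rpow_zero, one_mul, om]
  · have := (Gamma_pos_of_pos (half_pos hN')).ne'
    congr 1
    field_simp

lemma mu_univ_pos (hN : 0 < N) : 0 < π ^ ((N : ℝ) / 2) * Gamma ((N : ℝ) / 2) / Gamma N := by
  have hN' : (0 : ℝ) < N := by exact_mod_cast hN
  have := Gamma_pos_of_pos hN'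
  have := Gamma_pos_of_pos (half_pos hN')
  have := pi_pos
  positivity

lemma isFiniteMeasure_mu (hN : 0 < N) : IsFiniteMeasure (mu N) :=
  ⟨by rw [mu_univ hN]; exact ENNReal.ofReal_lt_top⟩

lemma lintegral_ker_zero (hN : 0 < N) {s : ℝ} (hs : 0 < s) (hsN : 2 * s < N) :
    ∫⁻ y, ENNReal.ofReal (ker (((N : ℝ) - 2 * s) / 2) 0 y) ∂(mu N) =
      ENNReal.ofReal (π ^ ((N : ℝ) / 2) * Gamma s / Gamma ((N : ℝ) / 2 + s)) := by
  have hN' : (0 : ℝ) < N := by exact_mod_cast hN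
  have h := lintegral_beta_radial (N := N) (β := s) (γ := (N : ℝ) / 2) hN
    (by positivity) (by positivity)
  rw [mu, lintegral_withDensity_eq_lintegral_mul _ measurable_dens]
  swap
  · exact ((measurable_ker _).comp measurable_prodMk_left).ennreal_ofReal
  refine (lintegral_congr fun x => ?_).trans (h.trans ?_)
  · simp only [Pi.mul_apply]
    have h1 := om_pos x
    have h2 := norm_nonneg x
    rw [← ENNReal.ofReal_mul (by positivity), ker, zero_sub, norm_neg,
      show om (0 : En N) = 1 by simp [om], om]
    change 0 < 1 + ‖x‖ ^ 2 at h1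
    congr 1
    rw [one_mul]
    generalize 1 + ‖x‖ ^ 2 = A at h1 ⊢
    rw [div_rpow (by positivity) (by positivity), ← rpow_natCast ‖x‖ 2, ← rpow_mul h2,
      show 2 * s - (N : ℝ) = -(((2 : ℕ) : ℝ) * (((N : ℝ) - 2 * s) / 2)) by push_cast; ring,
      rpow_neg h2, div_eq_mul_inv, ← mul_assoc, ← rpow_add h1, mul_comm]
    push_cast
    ring_nf
  · have := (Gamma_pos_of_pos (half_pos hN')).ne'
    congr 1
    rw [add_comm s]
    field_simp

/-- The spherical isometry exchanging `0` and `x`. -/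
lemma inversion_zero_eq {x : En N} (hx : x ≠ 0) {r : ℝ}
    (hr : r ^ 2 = 1 + ‖-(‖x‖ ^ 2)⁻¹ • x‖ ^ 2) : inversion (-(‖x‖ ^ 2)⁻¹ • x) r 0 = x := by
  have h := norm_ne_zero_iff.2 hx
  rw [inversion_eq, hr, zero_sub, norm_neg]
  have e : ‖-(‖x‖ ^ 2)⁻¹ • x‖ ^ 2 = (‖x‖ ^ 2)⁻¹ := by
    rw [norm_smul, norm_neg, norm_inv, norm_pow, norm_norm, mul_pow]
    field_simp
  rw [e, neg_smul, neg_neg, smul_smul, ← sub_eq_add_neg, ← sub_smul]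
  convert one_smul ℝ x using 2
  field_simp
  ring

/-- By conformal homogeneity of the sphere the potential of the kernel is constant. -/
lemma lintegral_ker (hN : 0 < N) {s : ℝ} (hs : 0 < s) (hsN : 2 * s < N) (x : En N) :
    ∫⁻ y, ENNReal.ofReal (ker (((N : ℝ) - 2 * s) / 2) x y) ∂(mu N) =
      ENNReal.ofReal (π ^ ((N : ℝ) / 2) * Gamma s / Gamma ((N : ℝ) / 2 + s)) := by
  rw [← lintegral_ker_zero hN hs hsN]
  rcases eq_or_ne x 0 with rfl | hx
  · rfl
  -- The inversion centred at the antipode `-x / |x|²` of `x` is an isometry of the sphere taking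
  -- `0` to `x`.
  set l := ((N : ℝ) - 2 * s) / 2
  set a : En N := -(‖x‖ ^ 2)⁻¹ • x with ha
  have hnx := norm_ne_zero_iff.2 hx
  have ha0 : (0 : En N) ≠ a := by
    rw [ha, Ne, eq_comm, smul_eq_zero, not_or]
    exact ⟨by simpa using hx, hx⟩
  obtain ⟨r, hr0, hr⟩ : ∃ r : ℝ, 0 < r ∧ r ^ 2 = 1 + ‖a‖ ^ 2 :=
    ⟨√(1 + ‖a‖ ^ 2), by positivity, Real.sq_sqrt (by positivity)⟩
  have hx' : inversion a r 0 = x := inversion_zero_eq hx hr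
  have hm : ∀ y : En N, y ≠ a → mm a r y = 1 := by
    intro y hy
    have := om_pos y
    rw [mm_eq (τ := 0) (by rw [hr, add_zero]) hy, zero_mul, sub_zero, div_self (by positivity)]
  have hS : MeasurableSet ({a}ᶜ : Set (En N)) := (measurableSet_singleton a).compl
  have himg : inversion a r '' {a}ᶜ = {a}ᶜ := by
    ext y
    constructor
    · rintro ⟨z, hz, rfl⟩
      simpa [inversion_eq_center hr0.ne'] using hz
    · intro hy
      exact ⟨_, by simpa [inversion_eq_center hr0.ne'] using hy, inversion_inversion a hr0.ne' y⟩
  have hae : ∀ᵐ y ∂(mu N), y ∈ ({a}ᶜ : Set (En N)) := by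
    filter_upwards [ae_ne_mu hN a] with y hy using hy
  have hg : Measurable fun y => ENNReal.ofReal (ker l x y) :=
    ((measurable_ker _).comp measurable_prodMk_left).ennreal_ofReal
  have := setLIntegral_inversion hr0 hS (fun h => h rfl) hg
  rw [himg] at this
  rw [← Measure.restrict_eq_self_of_ae_mem hae, this]
  refine setLIntegral_congr_fun hS fun y hy => ?_
  rw [hm y hy, one_rpow, ENNReal.ofReal_one, one_mul, ← ker_inversion hr0 (l := l) ha0 hy, hx',
    hm y hy, hm 0 ha0]
  simp

end PartC2

/-! ### Weak-star compactness -/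

section PartD

open Set Filter Topology

/-- Weak-star sequential compactness of bounded sequences of functions. -/
lemma exists_weak_limit {X : Type*} [MeasurableSpace X] [MeasurableSpace.CountablyGenerated X]
    {μ : Measure X} [IsFiniteMeasure μ] {C : ℝ} (hC : 0 ≤ C) {F : ℕ → X → ℝ}
    (hF : ∀ n, Measurable (F n)) (hF0 : ∀ n x, 0 ≤ F n x) (hFC : ∀ n x, F n x ≤ C) :
    ∃ G : X → ℝ, Measurable G ∧ (∀ x, 0 ≤ G x) ∧ (∀ x, G x ≤ C) ∧ ∃ φ : ℕ → ℕ, StrictMono φ ∧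
      ∀ g : X → ℝ, Integrable g μ →
        Tendsto (fun n => ∫ x, F (φ n) x * g x ∂μ) atTop (𝓝 (∫ x, G x * g x ∂μ)) := by
  have hFb : ∀ n x, ‖F n x‖ ≤ C := fun n x => by
    rw [Real.norm_of_nonneg (hF0 n x)]; exact hFC n x
  have hL : ∀ n, MemLp (F n) 2 μ := fun n =>
    MemLp.of_bound (hF n).aestronglyMeasurable C (ae_of_all _ (hFb n))
  set f : ℕ → Lp ℝ 2 μ := fun n => (hL n).toLp (F n)
  have hnorm : ∀ n, ‖f n‖ ≤ (μ univ).toReal ^ ((2 : ENNReal).toReal⁻¹) * C := fun n =>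
    Lp.norm_le_of_ae_bound hC (by
      filter_upwards [(hL n).coeFn_toLp] with x hx
      simpa only [f, hx] using hFb n x)
  set R := (μ univ).toReal ^ ((2 : ENNReal).toReal⁻¹) * C
  have : Fact ((2 : ENNReal) ≠ ⊤) := ⟨by norm_num⟩
  obtain ⟨Φ, -, φ, hφ, hΦ⟩ := WeakDual.isSeqCompact_closedBall (𝕜 := ℝ) (E := Lp ℝ 2 μ)
    0 R (x := fun n => StrongDual.toWeakDual (InnerProductSpace.toDual ℝ _ (f n))) (fun n => by
      simp only [mem_preimage, Metric.mem_closedBall, dist_zero_right]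
      exact ((InnerProductSpace.toDual ℝ (Lp ℝ 2 μ)).norm_map (f n)).trans_le (hnorm n))
  set G0 : Lp ℝ 2 μ := (InnerProductSpace.toDual ℝ _).symm (WeakDual.toStrongDual Φ)
  -- Test functions in `L²` first; `L¹` follows by density and the uniform bound.
  have hlim : ∀ g : X → ℝ, MemLp g 2 μ →
      Tendsto (fun n => ∫ x, F (φ n) x * g x ∂μ) atTop (𝓝 (∫ x, G0 x * g x ∂μ)) := by
    intro g hg
    have h1 : Tendsto (fun n => inner ℝ (f (φ n)) (hg.toLp g)) atTop
        (𝓝 (inner ℝ G0 (hg.toLp g))) := by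
      have := (WeakDual.eval_continuous (𝕜 := ℝ) (E := Lp ℝ 2 μ) (hg.toLp g)).continuousAt.tendsto.comp hΦ
      have e : inner ℝ G0 (hg.toLp g) = Φ (hg.toLp g) :=
        InnerProductSpace.toDual_symm_apply
      rw [e]
      exact this
    have h2 : ∀ (u : Lp ℝ 2 μ) (v : X → ℝ), u =ᵐ[μ] v →
        inner ℝ u (hg.toLp g) = ∫ x, v x * g x ∂μ := by
      intro u v huv
      rw [L2.inner_def]
      refine integral_congr_ae ?_
      filter_upwards [huv, hg.coeFn_toLp] with x h1 h2
      rw [h1, h2]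
      simp [mul_comm]
    rw [h2 G0 G0 (by rfl)] at h1
    refine h1.congr fun n => ?_
    exact h2 _ _ (hL _).coeFn_toLp
  have hG0i : Integrable G0 μ := (Lp.memLp G0).integrable (by norm_num)
  have hset : ∀ s, MeasurableSet s →
      Tendsto (fun n => ∫ x in s, F (φ n) x ∂μ) atTop (𝓝 (∫ x in s, G0 x ∂μ)) := by
    intro s hs
    have e : ∀ v : X → ℝ, ∫ x, v x * s.indicator (fun _ => (1 : ℝ)) x ∂μ = ∫ x in s, v x ∂μ := by
      intro v
      rw [← integral_indicator hs]
      refine integral_congr_ae (ae_of_all _ fun x => ?_)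
      by_cases hx : x ∈ s <;> simp [hx]
    have := hlim (s.indicator fun _ => (1 : ℝ)) (memLp_indicator_const 2 hs 1 (Or.inr (by finiteness)))
    rw [e] at this
    exact this.congr fun n => e _
  have hG0 : 0 ≤ᵐ[μ] G0 := ae_nonneg_of_forall_setIntegral_nonneg hG0i fun s hs _ =>
    ge_of_tendsto' (hset s hs) fun n => setIntegral_nonneg hs fun x _ => hF0 _ x
  have hGC : G0 ≤ᵐ[μ] fun _ => C := ae_le_of_forall_setIntegral_le hG0i (integrable_const C)
    fun s hs _ => le_of_tendsto' (hset s hs) fun n => setIntegral_mono_on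
      (((hL _).integrable (by norm_num)).integrableOn) (integrable_const C).integrableOn hs
      fun x _ => hFC _ x
  obtain ⟨G1, hG1m, hG1⟩ := (Lp.aestronglyMeasurable G0).aemeasurable
  -- Truncation makes the bounds hold everywhere and not only almost everywhere.
  set G : X → ℝ := fun x => max 0 (min C (G1 x))
  have hGG : G =ᵐ[μ] G0 := by
    filter_upwards [hG0, hGC, hG1] with x h1 h2 h3
    simp only [G, ← h3]
    rw [Pi.zero_apply] at h1
    rw [min_eq_right h2, max_eq_right h1]
  have hGm : Measurable G := measurable_const.max (measurable_const.min hG1m)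
  have hGb0 : ∀ x, 0 ≤ G x := fun x => le_max_left _ _
  have hGbC : ∀ x, G x ≤ C := fun x => max_le hC (min_le_left _ _)
  refine ⟨G, hGm, hGb0, hGbC, φ, hφ, ?_⟩
  intro g hg
  rw [Metric.tendsto_atTop]
  intro ε hε
  obtain ⟨η, hη, hηε⟩ : ∃ η : ℝ, 0 < η ∧ 2 * C * η < ε / 2 := by
    refine ⟨ε / (8 * (C + 1)), by positivity, ?_⟩
    have : 0 < C + 1 := by linarith
    rw [mul_div_assoc', div_lt_div_iff₀ (by positivity) (by positivity)]
    nlinarith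
  obtain ⟨g', hgg', hg'L⟩ := (memLp_one_iff_integrable.2 hg).exists_simpleFunc_eLpNorm_sub_lt
    (by norm_num) (ε := ENNReal.ofReal η) (by simpa using hη)
  have hg' : MemLp g' 2 μ := by
    exact SimpleFunc.memLp_of_isFiniteMeasure g' 2 μ
  have hg'i : Integrable g' μ := hg'.integrable (by norm_num)
  have hd : ∫ x, |g x - g' x| ∂μ < η := by
    have e := eLpNorm_one_eq_lintegral_enorm (μ := μ) (f := g - ⇑g')
    rw [e, ← ofReal_integral_norm_eq_lintegral_enorm (hg.sub hg'i),
      ENNReal.ofReal_lt_ofReal_iff hη] at hgg'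
    exact hgg'
  have hbd : ∀ v : X → ℝ, Measurable v → (∀ x, 0 ≤ v x) → (∀ x, v x ≤ C) →
      |∫ x, v x * g x ∂μ - ∫ x, v x * g' x ∂μ| ≤ C * η := by
    intro v hv hv0 hvC
    have hb : ∀ᵐ x ∂μ, ‖v x‖ ≤ C := ae_of_all _ fun x => by
      rw [Real.norm_of_nonneg (hv0 x)]; exact hvC x
    have i1 := hg.bdd_mul hv.aestronglyMeasurable hb
    have i2 := hg'i.bdd_mul hv.aestronglyMeasurable hb
    rw [← integral_sub i1 i2]
    refine (abs_integral_le_integral_abs).trans ?_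
    calc ∫ x, |v x * g x - v x * g' x| ∂μ ≤ ∫ x, C * |g x - g' x| ∂μ := by
          refine integral_mono (i1.sub i2).abs ((hg.sub hg'i).abs.const_mul C) fun x => ?_
          simp only
          rw [← mul_sub, abs_mul, abs_of_nonneg (hv0 x)]
          exact mul_le_mul_of_nonneg_right (hvC x) (abs_nonneg _)
      _ = C * ∫ x, |g x - g' x| ∂μ := integral_const_mul _ _
      _ ≤ C * η := mul_le_mul_of_nonneg_left hd.le hC
  have hl := hlim g' hg'
  rw [Metric.tendsto_atTop] at hl
  obtain ⟨n0, hn0⟩ := hl (ε / 2) (half_pos hε)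
  refine ⟨n0, fun n hn => ?_⟩
  have h1 := hn0 n hn
  have h2 := hbd (F (φ n)) (hF _) (hF0 _) (hFC _)
  have h3 := hbd G hGm hGb0 hGbC
  have h4 : ∫ x, G x * g' x ∂μ = ∫ x, G0 x * g' x ∂μ :=
    integral_congr_ae (by filter_upwards [hGG] with x hx; rw [hx])
  rw [Real.dist_eq] at h1 ⊢
  rw [h4] at h3
  rw [abs_lt] at h1 ⊢
  rw [abs_le] at h2 h3
  constructor <;> linarith [h1.1, h1.2, h2.1, h2.2, h3.1, h3.2]

end PartD

/-! ### Existence of maximizers -/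

section PartD2

open Set Filter Topology

/-- The admissible densities of the constrained maximization problem. The pointwise bound `C` makes
the class weak-star compact although `p` is the critical exponent. -/
structure Cls {X : Type*} [MeasurableSpace X] (μ : Measure X) (C p A : ℝ) (F : X → ℝ) : Prop where
  meas : Measurable F
  nonneg : ∀ x, 0 ≤ F x
  le : ∀ x, F x ≤ C
  int : ∫⁻ x, ENNReal.ofReal (F x ^ p) ∂μ ≤ ENNReal.ofReal A

/-- The potential of `F`. -/
noncomputable def pot {X : Type*} [MeasurableSpace X] (μ : Measure X) (k : X → X → ℝ)
    (F : X → ℝ) (x : X) : ℝ := ∫ y, k x y * F y ∂μ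

section
variable {X : Type*} [MeasurableSpace X] {μ : Measure X} [IsFiniteMeasure μ] {k : X → X → ℝ}
  {κ C p A : ℝ} {F : X → ℝ}

lemma integrable_bdd (hF : Measurable F) (hF0 : ∀ x, 0 ≤ F x)
    (hFC : ∀ x, F x ≤ C) : Integrable F μ :=
  Integrable.of_bound hF.aestronglyMeasurable C (ae_of_all _ fun x => by
    rw [Real.norm_of_nonneg (hF0 x)]; exact hFC x)

lemma integrable_ker_left (hk : Measurable (Function.uncurry k)) (hk0 : ∀ x y, 0 ≤ k x y)
    (hκ : ∀ x, ∫⁻ y, ENNReal.ofReal (k x y) ∂μ = ENNReal.ofReal κ) (x : X) :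
    Integrable (k x) μ := by
  refine ⟨(hk.comp measurable_prodMk_left).aestronglyMeasurable, ?_⟩
  rw [hasFiniteIntegral_iff_ofReal (ae_of_all _ (hk0 x)), hκ]
  exact ENNReal.ofReal_lt_top

lemma integral_ker (hk : Measurable (Function.uncurry k)) (hk0 : ∀ x y, 0 ≤ k x y) (hκ0 : 0 ≤ κ)
    (hκ : ∀ x, ∫⁻ y, ENNReal.ofReal (k x y) ∂μ = ENNReal.ofReal κ) (x : X) :
    ∫ y, k x y ∂μ = κ := by
  rw [integral_eq_lintegral_of_nonneg_ae (ae_of_all _ (hk0 x))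
    (hk.comp measurable_prodMk_left).aestronglyMeasurable, hκ, ENNReal.toReal_ofReal hκ0]

lemma integrable_ker_mul (hk : Measurable (Function.uncurry k)) (hk0 : ∀ x y, 0 ≤ k x y)
    (hκ : ∀ x, ∫⁻ y, ENNReal.ofReal (k x y) ∂μ = ENNReal.ofReal κ)
    (hF : Measurable F) (hF0 : ∀ x, 0 ≤ F x) (hFC : ∀ x, F x ≤ C) (x : X) :
    Integrable (fun y => k x y * F y) μ :=
  (integrable_ker_left hk hk0 hκ x).mul_bdd hF.aestronglyMeasurable (c := C)
    (ae_of_all _ fun y => by rw [Real.norm_of_nonneg (hF0 y)]; exact hFC y)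

lemma pot_nonneg (hk0 : ∀ x y, 0 ≤ k x y) (hF0 : ∀ x, 0 ≤ F x) (x : X) : 0 ≤ pot μ k F x :=
  integral_nonneg fun y => mul_nonneg (hk0 x y) (hF0 y)

lemma pot_le (hk : Measurable (Function.uncurry k)) (hk0 : ∀ x y, 0 ≤ k x y) (hκ0 : 0 ≤ κ)
    (hκ : ∀ x, ∫⁻ y, ENNReal.ofReal (k x y) ∂μ = ENNReal.ofReal κ)
    (hF : Measurable F) (hF0 : ∀ x, 0 ≤ F x) (hFC : ∀ x, F x ≤ C) (x : X) :
    pot μ k F x ≤ κ * C := by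
  rw [← integral_ker hk hk0 hκ0 hκ x, ← integral_mul_const]
  exact integral_mono (integrable_ker_mul hk hk0 hκ hF hF0 hFC x)
    ((integrable_ker_left hk hk0 hκ x).mul_const C)
    fun y => mul_le_mul_of_nonneg_left (hFC y) (hk0 x y)

lemma measurable_pot (hk : Measurable (Function.uncurry k)) (hF : Measurable F) :
    Measurable (pot μ k F) := by
  have : StronglyMeasurable (fun z : X × X => k z.1 z.2 * F z.2) :=
    (hk.mul (hF.comp measurable_snd)).stronglyMeasurable
  exact this.integral_prod_right'.measurable

lemma Q_eq_pot (hk : Measurable (Function.uncurry k)) (hk0 : ∀ x y, 0 ≤ k x y) (hκ0 : 0 ≤ κ)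
    (hκ : ∀ x, ∫⁻ y, ENNReal.ofReal (k x y) ∂μ = ENNReal.ofReal κ)
    (hF : Measurable F) (hF0 : ∀ x, 0 ≤ F x) (hFC : ∀ x, F x ≤ C) :
    Q μ k F = ENNReal.ofReal (∫ x, F x * pot μ k F x ∂μ) := by
  have hC : ∀ x : X, 0 ≤ C := fun x => (hF0 x).trans (hFC x)
  rw [ofReal_integral_eq_lintegral_ofReal]
  · refine lintegral_congr fun x => ?_
    have h := integrable_ker_mul hk hk0 hκ hF hF0 hFC x
    rw [pot, ← integral_const_mul, ofReal_integral_eq_lintegral_ofReal (h.const_mul _)]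
    · refine lintegral_congr fun y => ?_
      congr 1; ring
    · exact ae_of_all _ fun y => mul_nonneg (hF0 x) (mul_nonneg (hk0 x y) (hF0 y))
  · refine integrable_bdd (C := C * (κ * C)) (hF.mul (measurable_pot hk hF))
      (fun x => mul_nonneg (hF0 x) (pot_nonneg hk0 hF0 x)) fun x => ?_
    exact mul_le_mul (hFC x) (pot_le hk hk0 hκ0 hκ hF hF0 hFC x) (pot_nonneg hk0 hF0 x) (hC x)
  · exact ae_of_all _ fun x => mul_nonneg (hF0 x) (pot_nonneg hk0 hF0 x)

/-- The admissible class is weak-star closed; lower semicontinuity of the `Lᵖ` norm follows from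
Young's inequality `p F G ^ (p - 1) ≤ F ^ p + (p - 1) G ^ p`. -/
lemma Cls.of_tendsto (hp : 1 < p) (hA : 0 ≤ A) {F : ℕ → X → ℝ} (hF : ∀ n, Cls μ C p A (F n))
    {G : X → ℝ} (hG : Measurable G) (hG0 : ∀ x, 0 ≤ G x) (hGC : ∀ x, G x ≤ C)
    (hlim : ∀ g : X → ℝ, Integrable g μ →
        Tendsto (fun n => ∫ x, F n x * g x ∂μ) atTop (𝓝 (∫ x, G x * g x ∂μ))) :
    Cls μ C p A G := by
  refine ⟨hG, hG0, hGC, ?_⟩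
  have hp0 : 0 < p := by linarith
  have ip : ∀ (v : X → ℝ) (e : ℝ), 0 ≤ e → Measurable v → (∀ x, 0 ≤ v x) → (∀ x, v x ≤ C) →
      Integrable (fun x => v x ^ e) μ := fun v e he hv hv0 hvC =>
    integrable_bdd (C := C ^ e) (hv.pow_const _) (fun x => rpow_nonneg (hv0 x) _)
      fun x => rpow_le_rpow (hv0 x) (hvC x) he
  have hGp := ip G p hp0.le hG hG0 hGC
  rw [← ofReal_integral_eq_lintegral_ofReal hGp (ae_of_all _ fun x => rpow_nonneg (hG0 x) _)]
  refine ENNReal.ofReal_le_ofReal ?_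
  have hFA : ∀ n, ∫ x, F n x ^ p ∂μ ≤ A := fun n => by
    have := (hF n).int
    rw [← ofReal_integral_eq_lintegral_ofReal (ip _ p hp0.le (hF n).meas (hF n).nonneg (hF n).le)
      (ae_of_all _ fun x => rpow_nonneg ((hF n).nonneg x) _)] at this
    exact (ENNReal.ofReal_le_ofReal_iff hA).1 this
  have hg := ip G (p - 1) (by linarith) hG hG0 hGC
  have hl := (hlim _ hg).const_mul p
  have e1 : ∫ x, G x * G x ^ (p - 1) ∂μ = ∫ x, G x ^ p ∂μ := by
    refine integral_congr_ae (ae_of_all _ fun x => ?_)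
    simp only
    rw [mul_comm, ← rpow_add_one' (hG0 x) (by linarith)]
    ring_nf
  rw [e1] at hl
  have hle : ∀ n, p * ∫ x, F n x * G x ^ (p - 1) ∂μ ≤ A + (p - 1) * ∫ x, G x ^ p ∂μ := by
    intro n
    refine le_trans ?_ (add_le_add_left (hFA n) _)
    have iF := ip _ p hp0.le (hF n).meas (hF n).nonneg (hF n).le
    rw [← integral_const_mul, ← integral_const_mul, ← integral_add iF (hGp.const_mul _)]
    refine integral_mono ?_ (iF.add (hGp.const_mul _)) fun x => ?_
    · refine (hg.bdd_mul (hF n).meas.aestronglyMeasurable (c := C)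
        (ae_of_all _ fun x => ?_)).const_mul _
      rw [Real.norm_of_nonneg ((hF n).nonneg x)]; exact (hF n).le x
    · have := Real.young_inequality_of_nonneg ((hF n).nonneg x)
        (rpow_nonneg (hG0 x) (p - 1)) (Real.HolderConjugate.conjExponent hp)
      rw [← rpow_mul (hG0 x), Real.conjExponent, mul_div_cancel₀ _ (by linarith)] at this
      simp only
      calc p * (F n x * G x ^ (p - 1)) ≤ p * (F n x ^ p / p + G x ^ p / (p / (p - 1))) := by gcongr
        _ = _ := by
          have : p - 1 ≠ 0 := by linarith
          field_simp
  have := le_of_tendsto' hl hle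
  linarith

/-- The direct method: the functional is weak-star continuous on the admissible class because
the potential operator maps weak-star convergence to pointwise convergence. -/
lemma exists_maximizer [MeasurableSpace.CountablyGenerated X]
    (hk : Measurable (Function.uncurry k)) (hk0 : ∀ x y, 0 ≤ k x y)
    (hκ0 : 0 ≤ κ) (hκ : ∀ x, ∫⁻ y, ENNReal.ofReal (k x y) ∂μ = ENNReal.ofReal κ)
    (hC : 0 ≤ C) (hp : 1 < p) (hA : 0 ≤ A) {ε : ℝ} (hε : 0 ≤ ε) :
    ∃ F, Cls μ C p A F ∧ ∀ G, Cls μ C p A G →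
      Q μ k G + ENNReal.ofReal ε * ∫⁻ x, ENNReal.ofReal (G x) ∂μ ≤
        Q μ k F + ENNReal.ofReal ε * ∫⁻ x, ENNReal.ofReal (F x) ∂μ := by
  set J : (X → ℝ) → ℝ := fun F => ∫ x, F x * pot μ k F x ∂μ + ε * ∫ x, F x ∂μ with hJ
  have hiF : ∀ F, Cls μ C p A F → Integrable F μ := fun F hF =>
    integrable_bdd hF.meas hF.nonneg hF.le
  have hiP : ∀ F, Cls μ C p A F → Integrable (pot μ k F) μ := fun F hF =>
    integrable_bdd (measurable_pot hk hF.meas) (pot_nonneg hk0 hF.nonneg)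
      (pot_le hk hk0 hκ0 hκ hF.meas hF.nonneg hF.le)
  have hiFP : ∀ F G, Cls μ C p A F → Cls μ C p A G → Integrable (fun x => F x * pot μ k G x) μ :=
    fun F G hF hG => (hiP G hG).bdd_mul hF.meas.aestronglyMeasurable (c := C)
      (ae_of_all _ fun x => by rw [Real.norm_of_nonneg (hF.nonneg x)]; exact hF.le x)
  have hJE : ∀ F, Cls μ C p A F →
      Q μ k F + ENNReal.ofReal ε * ∫⁻ x, ENNReal.ofReal (F x) ∂μ = ENNReal.ofReal (J F) := by
    intro F hF
    have h1 : 0 ≤ ∫ x, F x * pot μ k F x ∂μ :=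
      integral_nonneg fun x => mul_nonneg (hF.nonneg x) (pot_nonneg hk0 hF.nonneg x)
    have h2 : 0 ≤ ∫ x, F x ∂μ := integral_nonneg hF.nonneg
    rw [Q_eq_pot hk hk0 hκ0 hκ hF.meas hF.nonneg hF.le, hJ,
      ← ofReal_integral_eq_lintegral_ofReal (hiF F hF) (ae_of_all _ hF.nonneg),
      ← ENNReal.ofReal_mul hε, ← ENNReal.ofReal_add h1 (by positivity)]
  have hbdd : BddAbove (J '' {F | Cls μ C p A F}) := by
    refine ⟨∫ _, C * (κ * C) ∂μ + ε * ∫ _, C ∂μ, ?_⟩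
    rintro _ ⟨F, hF, rfl⟩
    refine add_le_add (integral_mono (hiFP F F hF hF) (integrable_const _) fun x => ?_)
      (mul_le_mul_of_nonneg_left (integral_mono (hiF F hF) (integrable_const _) hF.le) hε)
    exact mul_le_mul (hF.le x) (pot_le hk hk0 hκ0 hκ hF.meas hF.nonneg hF.le x)
      (pot_nonneg hk0 hF.nonneg x) hC
  have hne : (J '' {F | Cls μ C p A F}).Nonempty := by
    refine ⟨_, mem_image_of_mem _ (⟨measurable_const, fun _ => le_rfl, fun _ => hC, ?_⟩ :
      Cls μ C p A fun _ => (0 : ℝ))⟩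
    simp [zero_rpow (by linarith : p ≠ 0)]
  obtain ⟨u, -, hu, hmem⟩ := exists_seq_tendsto_sSup hne hbdd
  choose F hF hFu using hmem
  replace hF : ∀ n, Cls μ C p A (F n) := hF
  obtain ⟨G, hGm, hG0, hGC, φ, hφ, hlim⟩ := exists_weak_limit (μ := μ) hC (F := F)
    (fun n => (hF n).meas) (fun n => (hF n).nonneg) (fun n => (hF n).le)
  have hG : Cls μ C p A G := Cls.of_tendsto hp hA (fun n => hF (φ n)) hGm hG0 hGC hlim
  refine ⟨G, hG, fun H hH => ?_⟩
  rw [hJE H hH, hJE G hG]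
  refine ENNReal.ofReal_le_ofReal ((le_csSup hbdd (mem_image_of_mem _ hH)).trans (le_of_eq ?_))
  have t1 : Tendsto (fun n => J (F (φ n))) atTop (𝓝 (sSup (J '' {F | Cls μ C p A F}))) := by
    have := hu.comp hφ.tendsto_atTop
    refine this.congr fun n => ?_
    exact (hFu _).symm
  refine tendsto_nhds_unique t1 ?_
  have hpt : ∀ x, Tendsto (fun n => pot μ k (F (φ n)) x) atTop (𝓝 (pot μ k G x)) := by
    intro x
    have := hlim _ (integrable_ker_left hk hk0 hκ x)
    unfold pot
    simpa only [mul_comm] using this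
  have t2 : Tendsto (fun n => ∫ x, |pot μ k (F (φ n)) x - pot μ k G x| ∂μ) atTop (𝓝 0) := by
    have := tendsto_integral_of_dominated_convergence (μ := μ)
      (F := fun n x => |pot μ k (F (φ n)) x - pot μ k G x|) (f := fun _ => (0 : ℝ))
      (fun _ => κ * C) (fun n => ((hiP _ (hF _)).sub (hiP _ hG)).abs.aestronglyMeasurable)
      (integrable_const _) (fun n => ae_of_all _ fun x => ?_) (ae_of_all _ fun x => ?_)
    · simpa using this
    · rw [Real.norm_eq_abs, abs_abs, abs_le]
      have a1 := pot_le hk hk0 hκ0 hκ (hF (φ n)).meas (hF (φ n)).nonneg (hF (φ n)).le x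
      have a2 := pot_nonneg (μ := μ) hk0 (hF (φ n)).nonneg x
      have a3 := pot_le hk hk0 hκ0 hκ hG.meas hG.nonneg hG.le x
      have a4 := pot_nonneg (μ := μ) hk0 hG.nonneg x
      constructor <;> linarith
    · have := ((hpt x).sub_const (pot μ k G x)).abs
      simpa using this
  have t3 : Tendsto (fun n => ∫ x, F (φ n) x * pot μ k (F (φ n)) x ∂μ -
      ∫ x, F (φ n) x * pot μ k G x ∂μ) atTop (𝓝 0) := by
    refine squeeze_zero_norm (fun n => ?_) (by simpa using t2.const_mul C)
    rw [← integral_sub (hiFP _ _ (hF _) (hF _)) (hiFP _ _ (hF _) hG), ← integral_const_mul]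
    refine (norm_integral_le_integral_norm _).trans ?_
    refine integral_mono ((hiFP _ _ (hF _) (hF _)).sub (hiFP _ _ (hF _) hG)).norm
      (((hiP _ (hF _)).sub (hiP _ hG)).abs.const_mul C) fun x => ?_
    simp only
    rw [← mul_sub, norm_mul, Real.norm_of_nonneg ((hF _).nonneg x), Real.norm_eq_abs]
    exact mul_le_mul_of_nonneg_right ((hF _).le x) (abs_nonneg _)
  have t4 := hlim _ (hiP G hG)
  have t5 : Tendsto (fun n => ∫ x, F (φ n) x ∂μ) atTop (𝓝 (∫ x, G x ∂μ)) := by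
    simpa using hlim (fun _ => 1) (integrable_const _)
  have := (t3.add t4).add (t5.const_mul ε)
  simp only [sub_add_cancel, zero_add] at this
  exact this

end

end PartD2

/-! ### Maximizers are constant -/

section PartE

open Set Filter Topology EuclideanGeometry
variable {N : ℕ}

/-- The radius of the inversion of centre `a` in the family indexed by `τ`: for `τ = 0` the
inversion is an isometry of the sphere, for `τ ≠ 0` it contracts on `side a (rad τ a) τ`. -/
noncomputable def rad (τ : ℝ) (a : En N) : ℝ := √(1 + ‖a‖ ^ 2 + τ)

lemma rad_sq {τ : ℝ} (hτ : -1 < τ) (a : En N) : rad τ a ^ 2 = 1 + ‖a‖ ^ 2 + τ :=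
  Real.sq_sqrt (by nlinarith [sq_nonneg ‖a‖])

lemma rad_pos {τ : ℝ} (hτ : -1 < τ) (a : En N) : 0 < rad τ a :=
  Real.sqrt_pos.2 (by nlinarith [sq_nonneg ‖a‖])

/-- A maximizer of the perturbed functional is polarized with respect to every inversion. -/
lemma maximizer_pull_le (hN : 0 < N) {l κ C p A ε : ℝ} (hl : 0 < l) (hlN : l < N) (hp : 1 < p)
    (hpl : p * (N - l) = N) (hκ0 : 0 ≤ κ)
    (hκ : ∀ x : En N, ∫⁻ y, ENNReal.ofReal (ker l x y) ∂(mu N) = ENNReal.ofReal κ) (hε : 0 < ε)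
    {F : En N → ℝ} (hF : Cls (mu N) C p A F)
    (hmax : ∀ G, Cls (mu N) C p A G →
      Q (mu N) (ker l) G + ENNReal.ofReal ε * ∫⁻ x, ENNReal.ofReal (G x) ∂(mu N) ≤
        Q (mu N) (ker l) F + ENNReal.ofReal ε * ∫⁻ x, ENNReal.ofReal (F x) ∂(mu N))
    {τ : ℝ} (hτ : τ ≠ 0) (hτ1 : -1 < τ) (a : En N) :
    ∀ᵐ x ∂(mu N), x ∈ side a (rad τ a) τ →
      mm a (rad τ a) x ^ ((N : ℝ) - l) * F (inversion a (rad τ a) x) ≤ F x := by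
  have := isFiniteMeasure_mu hN
  have h := isPol hN hτ (rad_pos hτ1 a) (rad_sq hτ1 a) hl
  have hm0 := mm_nonneg a (rad τ a)
  set P := pol (side a (rad τ a) τ) (inversion a (rad τ a)) (mm a (rad τ a)) ((N : ℝ) - l) F
  have hP : Cls (mu N) C p A P := by
    refine ⟨h.measurable_pol hF.meas, h.pol_nonneg hm0 hF.nonneg,
      h.pol_le (by linarith) hF.nonneg hF.le, ?_⟩
    rw [h.lintegral_rpow_pol hm0 (by linarith) hpl hF.meas hF.nonneg]
    exact hF.int
  refine h.pull_le_of_lintegral_le hm0 hl hF.meas hF.nonneg hF.le ?_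
  have h1 := hmax P hP
  have h2 : Q (mu N) (ker l) F ≤ Q (mu N) (ker l) P := h.Q_le_Q_pol hm0 hF.meas hF.nonneg
  have h3 : Q (mu N) (ker l) F ≠ ⊤ := by
    rw [Q_eq_pot (measurable_ker l) (ker_nonneg l) hκ0 hκ hF.meas hF.nonneg hF.le]
    exact ENNReal.ofReal_ne_top
  have h4 := (add_le_add_left h2 _).trans h1
  have h5 := (ENNReal.add_le_add_iff_left h3).1 h4
  exact (ENNReal.mul_le_mul_iff_right (by simpa using hε) ENNReal.ofReal_ne_top).1 h5

/-- Every pair of points of distinct norms is exchanged by an inversion of the family; the sign of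
`τ` decides which of the two lies on the contracting side. -/
lemma exists_center {x y : En N} (hxy : ‖y‖ ≠ ‖x‖) {τ : ℝ} (hτ1 : -1 < τ)
    (hτ : τ * (‖x‖ ^ 2 - ‖y‖ ^ 2) < 0) :
    ∃ a : En N, a ≠ x ∧ x ∈ side a (rad τ a) τ ∧ inversion a (rad τ a) x = y ∧
      mm a (rad τ a) x = (1 + τ + ‖y‖ ^ 2) / (1 + τ + ‖x‖ ^ 2) * (om x / om y) := by
  have hD : ‖x‖ ^ 2 - ‖y‖ ^ 2 ≠ 0 := by
    rw [sub_ne_zero]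
    exact fun h => hxy ((pow_left_inj₀ (norm_nonneg _) (norm_nonneg _) two_ne_zero).1 h.symm)
  have hX : 0 < 1 + τ + ‖x‖ ^ 2 := by nlinarith [sq_nonneg ‖x‖]
  have hY : 0 < 1 + τ + ‖y‖ ^ 2 := by nlinarith [sq_nonneg ‖y‖]
  -- The centre lies on the line through `x` and `y`, and `|x - a| |y - a| = rad²` determines `α`.
  set α := (1 + τ + ‖x‖ ^ 2) / (‖x‖ ^ 2 - ‖y‖ ^ 2) with hα
  have hα1 : α - 1 = (1 + τ + ‖y‖ ^ 2) / (‖x‖ ^ 2 - ‖y‖ ^ 2) := by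
    rw [hα]; field_simp; ring
  have hα0 : α ≠ 0 := div_ne_zero hX.ne' hD
  have hne : x - y ≠ 0 := sub_ne_zero.2 fun h => hxy (by rw [h])
  have hd := norm_ne_zero_iff.2 hne
  set a : En N := x - α • (x - y) with ha
  have hxa : x - a = α • (x - y) := by rw [ha]; abel
  have hax : a ≠ x := by
    rw [ne_comm, ← sub_ne_zero, hxa]; exact smul_ne_zero hα0 hne
  have hr : rad τ a ^ 2 = α * (α - 1) * ‖x - y‖ ^ 2 := by
    rw [rad_sq hτ1, ha, norm_sub_sq_real, norm_smul, inner_smul_right, mul_pow, norm_eq_abs, sq_abs,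
      inner_sub_right, real_inner_self_eq_norm_sq]
    have e : ‖x - y‖ ^ 2 = ‖x‖ ^ 2 - 2 * inner ℝ x y + ‖y‖ ^ 2 := norm_sub_sq_real x y
    have e2 : α * (‖x‖ ^ 2 - ‖y‖ ^ 2) = 1 + τ + ‖x‖ ^ 2 := div_mul_cancel₀ _ hD
    linear_combination α * e - e2
  have hxa2 : ‖x - a‖ ^ 2 = α ^ 2 * ‖x - y‖ ^ 2 := by
    rw [hxa, norm_smul, mul_pow, norm_eq_abs, sq_abs]
  have hq : rad τ a ^ 2 / ‖x - a‖ ^ 2 = (α - 1) / α := by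
    rw [hr, hxa2]; field_simp
  have hinv : inversion a (rad τ a) x = y := by
    rw [inversion_eq, hq, hxa, smul_smul, div_mul_cancel₀ _ hα0, ha, sub_smul, one_smul]; abel
  have hq2 : (α - 1) / α = (1 + τ + ‖y‖ ^ 2) / (1 + τ + ‖x‖ ^ 2) := by
    rw [hα1, hα]; field_simp
  refine ⟨a, hax, ⟨hax.symm, ?_⟩, hinv, ?_⟩
  · have : ‖x - a‖ ^ 2 - rad τ a ^ 2 = α * ‖x - y‖ ^ 2 := by rw [hxa2, hr]; ring
    rw [this, hα]
    have e : τ * ((1 + τ + ‖x‖ ^ 2) / (‖x‖ ^ 2 - ‖y‖ ^ 2) * ‖x - y‖ ^ 2) =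
      τ * (‖x‖ ^ 2 - ‖y‖ ^ 2) * ((1 + τ + ‖x‖ ^ 2) * ‖x - y‖ ^ 2 / (‖x‖ ^ 2 - ‖y‖ ^ 2) ^ 2) := by
      field_simp
    rw [e]
    exact mul_neg_of_neg_of_pos hτ (by positivity)
  · rw [mm, hinv, hq, hq2]

/-- As the centre varies, the image of a fixed point depends on it differentiably, so null sets of
centres produce null sets of images. -/
lemma null_image_center {τ : ℝ} (hτ1 : -1 < τ) (x : En N) {B : Set (En N)}
    (hB : volume B = 0) :
    volume ((fun a : En N => inversion a (rad τ a) x) '' (B \ {x})) = 0 := by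
  have e : (fun a : En N => inversion a (rad τ a) x) =
      fun a => ((1 + ‖a‖ ^ 2 + τ) / ‖x - a‖ ^ 2) • (x - a) + a := by
    funext a
    rw [inversion_eq, rad_sq hτ1]
  rw [e]
  refine addHaar_image_eq_zero_of_differentiableOn_of_addHaar_eq_zero volume (fun a ha => ?_)
    (measure_mono_null sdiff_subset hB)
  have hax : a ≠ x := ha.2
  have h0 : ‖x - a‖ ^ 2 ≠ 0 := (norm_sub_sq_pos hax.symm).ne'
  have d1 : DifferentiableAt ℝ (fun a : En N => ‖a‖ ^ 2) a := differentiableAt_id.norm_sq ℝ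
  have d2 : DifferentiableAt ℝ (fun a : En N => ‖x - a‖ ^ 2) a :=
    (differentiableAt_id.const_sub x).norm_sq ℝ
  have d3 : DifferentiableAt ℝ (fun a : En N => (1 + ‖a‖ ^ 2 + τ) / ‖x - a‖ ^ 2) a :=
    by
    simp only [div_eq_mul_inv]
    exact ((d1.const_add 1).add_const τ).mul (d2.inv h0)
  exact ((d3.smul (differentiableAt_id.const_sub x)).add differentiableAt_id).differentiableWithinAt

lemma measurableSet_pull_le {e τ : ℝ} {F : En N → ℝ} (hF : Measurable F) :
    MeasurableSet {z : En N × En N | z.2 ∈ side z.1 (rad τ z.1) τ →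
      mm z.1 (rad τ z.1) z.2 ^ e * F (inversion z.1 (rad τ z.1) z.2) ≤ F z.2} := by
  have hr : Measurable fun z : En N × En N => rad τ z.1 := by
    unfold rad; fun_prop
  have hn : Measurable fun z : En N × En N => ‖z.2 - z.1‖ ^ 2 := by fun_prop
  have hi : Measurable fun z : En N × En N => inversion z.1 (rad τ z.1) z.2 := by
    simp only [inversion_eq]
    fun_prop
  have hm : Measurable fun z : En N × En N => mm z.1 (rad τ z.1) z.2 := by
    unfold mm
    exact ((hr.pow_const 2).div hn).mul
      ((measurable_om.comp measurable_snd).div (measurable_om.comp hi))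
  have hs : MeasurableSet {z : En N × En N | z.2 ∈ side z.1 (rad τ z.1) τ} := by
    refine MeasurableSet.inter (measurableSet_eq_fun measurable_snd measurable_fst).compl ?_
    exact measurableSet_lt ((hn.sub (hr.pow_const 2)).const_mul τ) measurable_const
  have hl : MeasurableSet {z : En N × En N |
      mm z.1 (rad τ z.1) z.2 ^ e * F (inversion z.1 (rad τ z.1) z.2) ≤ F z.2} :=
    measurableSet_le ((hm.pow_const e).mul (hF.comp hi)) (hF.comp measurable_snd)
  have := hs.compl.union hl
  convert this using 1
  ext z
  simp only [mem_ofPred_eq, mem_union, mem_compl_iff]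
  tauto

/-- A function polarized with respect to all the inversions is almost everywhere constant. -/
lemma ae_const_of_pull_le (hN : 0 < N) {e : ℝ} {F : En N → ℝ} (hF : Measurable F)
    (h : ∀ τ : ℝ, τ ≠ 0 → -1 < τ → ∀ a : En N, ∀ᵐ x ∂(mu N), x ∈ side a (rad τ a) τ →
      mm a (rad τ a) x ^ e * F (inversion a (rad τ a) x) ≤ F x) :
    ∃ x₀, ∀ᵐ y ∂(mu N), F y = F x₀ := by
  have := isFiniteMeasure_mu hN
  have : Nonempty (Fin N) := ⟨⟨0, hN⟩⟩
  have hnt : Nontrivial (En N) := by infer_instance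
  set t : ℕ → ℝ := fun n => 1 / ((n : ℝ) + 2)
  have ht0 : ∀ n, 0 < t n := fun n => by positivity
  have ht1 : ∀ n, t n < 1 := fun n => by
    simp only [t]; rw [div_lt_one (by positivity)]; have : (0 : ℝ) ≤ n := by positivity
    linarith
  have htl : Tendsto t atTop (𝓝 0) := by
    have := tendsto_one_div_add_atTop_nhds_zero_nat (𝕜 := ℝ)
    have h2 := (tendsto_add_atTop_iff_nat 1).2 this
    refine h2.congr fun n => ?_
    simp only [t]; push_cast; ring_nf
  -- Fubini: almost every point is good for almost every centre, for countably many `τ` at once.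
  have key : ∀ τ : ℝ, τ ≠ 0 → -1 < τ → ∀ᵐ x ∂(mu N), ∀ᵐ a : En N, x ∈ side a (rad τ a) τ →
      mm a (rad τ a) x ^ e * F (inversion a (rad τ a) x) ≤ F x := fun τ h1 h2 =>
    (Measure.ae_ae_comm (measurableSet_pull_le hF)).1 (ae_of_all _ fun a => h τ h1 h2 a)
  have k1 : ∀ᵐ x ∂(mu N), ∀ n, ∀ᵐ a : En N, x ∈ side a (rad (t n) a) (t n) →
      mm a (rad (t n) a) x ^ e * F (inversion a (rad (t n) a) x) ≤ F x :=
    ae_all_iff.2 fun n => key _ (ht0 n).ne' (by linarith [ht0 n])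
  have k2 : ∀ᵐ x ∂(mu N), ∀ n, ∀ᵐ a : En N, x ∈ side a (rad (-t n) a) (-t n) →
      mm a (rad (-t n) a) x ^ e * F (inversion a (rad (-t n) a) x) ≤ F x :=
    ae_all_iff.2 fun n => key _ (neg_ne_zero.2 (ht0 n).ne') (by linarith [ht1 n])
  -- Letting the perturbation vanish turns the polarization inequality into an order relation.
  have lim : ∀ x y : En N, ∀ τ : ℕ → ℝ, Tendsto τ atTop (𝓝 0) →
      (∀ n, ((1 + τ n + ‖y‖ ^ 2) / (1 + τ n + ‖x‖ ^ 2) * (om x / om y)) ^ e * F y ≤ F x) →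
      F y ≤ F x := by
    intro x y τ hτ hn
    have h1 := om_pos x
    have h2 := om_pos y
    have l1 : Tendsto (fun n => (1 + τ n + ‖y‖ ^ 2) / (1 + τ n + ‖x‖ ^ 2) * (om x / om y)) atTop
        (𝓝 ((1 + 0 + ‖y‖ ^ 2) / (1 + 0 + ‖x‖ ^ 2) * (om x / om y))) :=
      (((hτ.const_add 1).add_const _).div ((hτ.const_add 1).add_const _)
        (by positivity)).mul_const _
    have e1 : (1 + 0 + ‖y‖ ^ 2) / (1 + 0 + ‖x‖ ^ 2) * (om x / om y) = 1 := by
      rw [add_zero]; change om y / om x * (om x / om y) = 1; field_simp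
    rw [e1] at l1
    have l2 := (l1.rpow_const (p := e) (Or.inl one_ne_zero)).mul_const (F y)
    rw [one_rpow, one_mul] at l2
    exact le_of_tendsto' l2 hn
  have good : ∀ᵐ x ∂(mu N), ∀ᵐ y ∂(mu N), F y ≤ F x := by
    filter_upwards [k1, k2] with x h1 h2
    refine ae_mu_of_ae ?_
    have n0 : ∀ᵐ y : En N, y ∉ Metric.sphere (0 : En N) ‖x‖ :=
      measure_eq_zero_iff_ae_notMem.1 (Measure.addHaar_sphere _ _ _)
    have n1 : ∀ᵐ y : En N, ∀ n, y ∉ (fun a : En N => inversion a (rad (t n) a) x) ''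
        ({a | ¬ (x ∈ side a (rad (t n) a) (t n) →
      mm a (rad (t n) a) x ^ e * F (inversion a (rad (t n) a) x) ≤ F x)} \ {x}) :=
      ae_all_iff.2 fun n => measure_eq_zero_iff_ae_notMem.1
        (null_image_center (by linarith [ht0 n]) x (h1 n))
    have n2 : ∀ᵐ y : En N, ∀ n, y ∉ (fun a : En N => inversion a (rad (-t n) a) x) ''
        ({a | ¬ (x ∈ side a (rad (-t n) a) (-t n) →
      mm a (rad (-t n) a) x ^ e * F (inversion a (rad (-t n) a) x) ≤ F x)} \ {x}) :=
      ae_all_iff.2 fun n => measure_eq_zero_iff_ae_notMem.1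
        (null_image_center (by linarith [ht1 n]) x (h2 n))
    filter_upwards [n0, n1, n2] with y hy0 hy1 hy2
    have hyx : ‖y‖ ≠ ‖x‖ := by simpa using hy0
    have step : ∀ τ : ℝ, -1 < τ → τ * (‖x‖ ^ 2 - ‖y‖ ^ 2) < 0 →
        (y ∉ (fun a : En N => inversion a (rad τ a) x) ''
        ({a | ¬ (x ∈ side a (rad τ a) τ →
      mm a (rad τ a) x ^ e * F (inversion a (rad τ a) x) ≤ F x)} \ {x})) →
        ((1 + τ + ‖y‖ ^ 2) / (1 + τ + ‖x‖ ^ 2) * (om x / om y)) ^ e * F y ≤ F x := by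
      intro τ hτ1 hτ hy
      obtain ⟨a, hax, hxs, hinv, hm⟩ := exists_center hyx hτ1 hτ
      rw [← hm]
      by_contra hcon
      refine hy ⟨a, ⟨fun hh => hcon ?_, hax⟩, hinv⟩
      have := hh hxs
      rwa [hinv] at this
    rcases lt_or_gt_of_ne hyx with hlt | hlt
    · have hD : 0 < ‖x‖ ^ 2 - ‖y‖ ^ 2 := by nlinarith [norm_nonneg y]
      refine lim x y (fun n => -t n) (by simpa using htl.neg) fun n => step _ (by linarith [ht1 n])
        ?_ (hy2 n)
      nlinarith [mul_pos (ht0 n) hD]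
    · have hD : 0 < ‖y‖ ^ 2 - ‖x‖ ^ 2 := by nlinarith [norm_nonneg x]
      refine lim x y t htl fun n => step _ (by linarith [ht0 n]) ?_ (hy1 n)
      nlinarith [mul_pos (ht0 n) hD]
  have good2 : ∀ᵐ x ∂(mu N), ∀ᵐ y ∂(mu N), F x ≤ F y :=
    (Measure.ae_ae_comm (p := fun x y => F y ≤ F x)
      (measurableSet_le (hF.comp measurable_snd) (hF.comp measurable_fst))).1 good
  have hne : NeBot (ae (mu N)) := by
    rw [ae_neBot]
    intro h0
    have := mu_univ hN
    rw [h0] at this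
    have h2 := mu_univ_pos hN
    simp at this
    linarith
  obtain ⟨x, hx1, hx2⟩ := (good.and good2).exists
  exact ⟨x, by filter_upwards [hx1, hx2] with y h1 h2 using le_antisymm h1 h2⟩

/-- The sharp conformally invariant inequality on the sphere for bounded densities; the constant
does not depend on the bound. -/
lemma Q_le (hN : 0 < N) {l κ C p A : ℝ} (hl : 0 < l) (hlN : l < N) (hp : 1 < p)
    (hpl : p * (N - l) = N) (hκ0 : 0 ≤ κ)
    (hκ : ∀ x : En N, ∫⁻ y, ENNReal.ofReal (ker l x y) ∂(mu N) = ENNReal.ofReal κ)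
    (hC : 0 ≤ C) (hA : 0 ≤ A) {m : ℝ} (hm0 : 0 < m) (hm : mu N univ = ENNReal.ofReal m)
    {F : En N → ℝ} (hF : Cls (mu N) C p A F) :
    Q (mu N) (ker l) F ≤ ENNReal.ofReal (κ * m * ((A / m) ^ (1 / p)) ^ 2) := by
  have := isFiniteMeasure_mu hN
  set c₀ := (A / m) ^ (1 / p)
  have hc0 : 0 ≤ c₀ := by positivity
  have key : ∀ ε : ℝ, 0 < ε →
      Q (mu N) (ker l) F ≤ ENNReal.ofReal (κ * m * c₀ ^ 2 + ε * (c₀ * m)) := by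
    intro ε hε
    -- Compare `F` with a maximizer of the functional perturbed by `ε ∫ F`, which is constant.
    obtain ⟨G, hG, hmax⟩ := exists_maximizer (μ := mu N) (measurable_ker l) (ker_nonneg l) hκ0 hκ
      hC hp hA hε.le
    obtain ⟨x₀, hx₀⟩ := ae_const_of_pull_le hN hG.meas fun τ h1 h2 a =>
      maximizer_pull_le hN hl hlN hp hpl hκ0 hκ hε hG hmax h1 h2 a
    set c := G x₀
    have hc : 0 ≤ c := hG.nonneg _
    have hcc : c ≤ c₀ := by
      have h1 := hG.int
      have h2 : ∫⁻ x, ENNReal.ofReal (G x ^ p) ∂(mu N) = ENNReal.ofReal (c ^ p * m) := by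
        rw [ENNReal.ofReal_mul (by positivity), ← hm, ← lintegral_const]
        refine lintegral_congr_ae ?_
        filter_upwards [hx₀] with y hy
        rw [hy]
      rw [h2, ENNReal.ofReal_le_ofReal_iff hA, ← le_div_iff₀ hm0] at h1
      calc c = (c ^ p) ^ (1 / p) := by
            rw [← rpow_mul hc, mul_one_div_cancel (by linarith), rpow_one]
        _ ≤ c₀ := rpow_le_rpow (by positivity) h1 (by positivity)
    have h3 : Q (mu N) (ker l) G = ENNReal.ofReal (κ * m * c ^ 2) := by
      have e1 : Q (mu N) (ker l) G = ∫⁻ x, ∫⁻ y, ENNReal.ofReal (c * c) *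
          ENNReal.ofReal (ker l x y) ∂(mu N) ∂(mu N) := by
        refine lintegral_congr_ae ?_
        filter_upwards [hx₀] with x hx
        refine lintegral_congr_ae ?_
        filter_upwards [hx₀] with y hy
        rw [hx, hy, ENNReal.ofReal_mul (by positivity)]
      have e2 : ∀ x : En N, ∫⁻ y, ENNReal.ofReal (c * c) * ENNReal.ofReal (ker l x y) ∂(mu N) =
          ENNReal.ofReal (c * c) * ENNReal.ofReal κ := by
        intro x
        rw [lintegral_const_mul' _ _ ENNReal.ofReal_ne_top, hκ]
      rw [e1]
      simp only [e2]
      rw [lintegral_const, hm, ← ENNReal.ofReal_mul (by positivity),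
        ← ENNReal.ofReal_mul (by positivity)]
      congr 1; ring
    have h4 : ∫⁻ x, ENNReal.ofReal (G x) ∂(mu N) = ENNReal.ofReal (c * m) := by
      rw [ENNReal.ofReal_mul (by positivity), ← hm, ← lintegral_const]
      refine lintegral_congr_ae ?_
      filter_upwards [hx₀] with y hy
      rw [hy]
    have h5 := hmax F hF
    rw [h3, h4, ← ENNReal.ofReal_mul hε.le,
      ← ENNReal.ofReal_add (by positivity) (by positivity)] at h5
    refine (le_self_add.trans h5).trans (ENNReal.ofReal_le_ofReal ?_)
    gcongr
  have lim : Tendsto (fun ε : ℝ => ENNReal.ofReal (κ * m * c₀ ^ 2 + ε * (c₀ * m))) (𝓝[>] 0)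
      (𝓝 (ENNReal.ofReal (κ * m * c₀ ^ 2 + 0 * (c₀ * m)))) := by
    refine Tendsto.mono_left (Continuous.tendsto ?_ 0) nhdsWithin_le_nhds
    exact ENNReal.continuous_ofReal.comp (by fun_prop)
  rw [zero_mul, add_zero] at lim
  exact ge_of_tendsto lim (by filter_upwards [self_mem_nhdsWithin] with ε hε using key ε hε)

end PartE

/-! ### The sharp Hardy–Littlewood–Sobolev inequality -/

section PartF

open Set Filter Topology
variable {N : ℕ}

/-- The sharp Hardy–Littlewood–Sobolev inequality with both exponents equal to `2N/(N+2s)`. -/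
lemma hls (hN : 0 < N) {s : ℝ} (hs : 0 < s) (hsN : 2 * s < N) {f : En N → ℝ} (hf : Continuous f)
    (hfs : HasCompactSupport f) (hf0 : ∀ x, 0 ≤ f x) {p κ m A : ℝ}
    (hp : p = 2 * N / (N + 2 * s))
    (hκ : κ = π ^ ((N : ℝ) / 2) * Gamma s / Gamma ((N : ℝ) / 2 + s))
    (hm : m = π ^ ((N : ℝ) / 2) * Gamma ((N : ℝ) / 2) / Gamma N) (hA : 0 ≤ A)
    (hfA : ∫⁻ x, ENNReal.ofReal (f x ^ p) ≤ ENNReal.ofReal A) :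
    ∫⁻ x, ∫⁻ y, ENNReal.ofReal (f x * f y * ‖x - y‖ ^ (-((N : ℝ) - 2 * s))) ≤
      ENNReal.ofReal (κ * m * ((A / m) ^ (1 / p)) ^ 2) := by
  have hN' : (0 : ℝ) < N := by exact_mod_cast hN
  have hN2 : (0 : ℝ) < N + 2 * s := by positivity
  have hκ0 : 0 ≤ κ := by
    have := Gamma_pos_of_pos hs
    have := Gamma_pos_of_pos (by positivity : 0 < (N : ℝ) / 2 + s)
    rw [hκ]; positivity
  have hp1 : 1 < p := by rw [hp, lt_div_iff₀ hN2]; linarith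
  set l := ((N : ℝ) - 2 * s) / 2 with hl
  -- The density on the sphere that corresponds to `f`, with the same `Lᵖ` norm.
  set F : En N → ℝ := fun x => f x * om x ^ (((N : ℝ) + 2 * s) / 2) with hF
  have hFc : Continuous F := hf.mul (continuous_om.rpow_const fun x => Or.inl (om_pos x).ne')
  obtain ⟨C, hC⟩ := (hfs.mul_right (f' := fun x => om x ^ (((N : ℝ) + 2 * s) / 2))).exists_bound_of_continuous hFc
  have hF0 : ∀ x, 0 ≤ F x := fun x => mul_nonneg (hf0 x) (rpow_nonneg (om_pos x).le _)
  have hFC : ∀ x, F x ≤ C := fun x => (le_abs_self _).trans (hC x)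
  have hcls : Cls (mu N) C p A F := by
    refine ⟨hFc.measurable, hF0, hFC, le_trans (le_of_eq ?_) hfA⟩
    rw [mu, lintegral_withDensity_eq_lintegral_mul _ measurable_dens
      (hFc.measurable.pow_const _).ennreal_ofReal]
    refine lintegral_congr fun x => ?_
    have h1 := om_pos x
    have h2 := hf0 x
    simp only [Pi.mul_apply, hF]
    rw [← ENNReal.ofReal_mul (by positivity), mul_rpow h2 (by positivity), ← rpow_mul h1.le,
      mul_left_comm, ← rpow_add h1]
    have : -(N : ℝ) + ((N : ℝ) + 2 * s) / 2 * p = 0 := by rw [hp]; field_simp; ring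
    rw [this, rpow_zero, mul_one]
  have := Q_le hN (l := l) (κ := κ) (m := m) (by rw [hl]; linarith) (by rw [hl]; linarith) hp1
    (by rw [hp, hl]; field_simp; ring) hκ0
    (fun x => by rw [hκ]; exact lintegral_ker hN hs hsN x) ((hF0 0).trans (hFC 0)) hA
    (by rw [hm]; exact mu_univ_pos hN) (by rw [hm]; exact mu_univ hN) hcls
  refine le_trans (le_of_eq ?_) this
  have hJ : Measurable (fun z : En N × En N => ENNReal.ofReal (F z.1 * F z.2 * ker l z.1 z.2)) :=
    (((hFc.measurable.comp measurable_fst).mul (hFc.measurable.comp measurable_snd)).mul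
      (measurable_ker l)).ennreal_ofReal
  have hd := measurable_dens (N := N)
  rw [Q, mu, lintegral_withDensity_eq_lintegral_mul _ hd]
  swap
  · have := isFiniteMeasure_mu hN
    exact hJ.lintegral_prod_right' (ν := mu N)
  refine lintegral_congr fun x => ?_
  simp only [Pi.mul_apply]
  have hJx : Measurable fun y => ENNReal.ofReal (F x * F y * ker l x y) :=
    hJ.comp measurable_prodMk_left
  rw [lintegral_withDensity_eq_lintegral_mul _ hd hJx,
    ← lintegral_const_mul' _ _ ENNReal.ofReal_ne_top]
  refine lintegral_congr fun y => ?_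
  have h1 := om_pos x
  have h2 := om_pos y
  simp only [Pi.mul_apply, hF]
  rw [← ENNReal.ofReal_mul (by positivity), ← ENNReal.ofReal_mul (by positivity), ker,
    div_rpow (by positivity) (by positivity), mul_rpow h1.le h2.le, ← rpow_natCast ‖x - y‖ 2,
    ← rpow_mul (norm_nonneg _), show -((N : ℝ) - 2 * s) = -(((2 : ℕ) : ℝ) * l) by
      rw [hl]; push_cast; ring, rpow_neg (norm_nonneg _)]
  have key : ∀ t : ℝ, 0 < t → t ^ (-(N : ℝ)) * t ^ (((N : ℝ) + 2 * s) / 2) * t ^ l = 1 := by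
    intro t ht
    rw [← rpow_add ht, ← rpow_add ht, hl]
    convert rpow_zero t using 2
    ring
  congr 1
  have k1 := key _ h1
  have k2 := key _ h2
  obtain ⟨e, he⟩ : ∃ e, e = ((N : ℝ) + 2 * s) / 2 := ⟨_, rfl⟩
  rw [← he] at k1 k2 ⊢
  linear_combination (-(f x * f y * (‖x - y‖ ^ (((2 : ℕ) : ℝ) * l))⁻¹) *
    (om y ^ (-(N : ℝ)) * om y ^ e * om y ^ l)) * k1 -
    f x * f y * (‖x - y‖ ^ (((2 : ℕ) : ℝ) * l))⁻¹ * k2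

end PartF

/-! ### The weighted half-space -/

section PartG

open Set Filter Topology

/-- The weighted measure `y ^ a dy` on the half-line `y > 0`. -/
noncomputable def eta (a : ℝ) : Measure ℝ :=
  (volume.restrict (Ioi (0 : ℝ))).withDensity fun y => ENNReal.ofReal (y ^ a)

/-- The weighted measure `y ^ a dx dy` on the upper half-space `y > 0`. -/
noncomputable def nu (N : ℕ) (a : ℝ) : Measure (En N × ℝ) := (volume : Measure (En N)).prod (eta a)

lemma measurable_wt (a : ℝ) : Measurable fun y : ℝ => ENNReal.ofReal (y ^ a) :=
  (measurable_id.pow_const a).ennreal_ofReal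

instance sFinite_eta (a : ℝ) : SFinite (eta a) := by unfold eta; infer_instance

instance sFinite_nu (N : ℕ) (a : ℝ) : SFinite (nu N a) := by unfold nu; infer_instance

lemma isLocallyFiniteMeasure_eta {a : ℝ} (ha : -1 < a) : IsLocallyFiniteMeasure (eta a) := by
  refine ⟨fun y => ⟨Iio (|y| + 1), Iio_mem_nhds (by linarith [le_abs_self y]), ?_⟩⟩
  set b := |y| + 1
  have hb : 0 ≤ b := by positivity
  have h := ((intervalIntegrable_iff_integrableOn_Ioc_of_le hb).1
    (intervalIntegral.intervalIntegrable_rpow' (a := 0) (b := b) ha))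
  have h2 := h.lintegral_lt_top
  rw [eta, withDensity_apply _ measurableSet_Iio, Measure.restrict_restrict measurableSet_Iio]
  refine lt_of_le_of_lt (lintegral_mono_set fun t ht => ?_) h2
  exact ⟨ht.2, le_of_lt ht.1⟩

lemma isLocallyFiniteMeasure_nu {N : ℕ} {a : ℝ} (ha : -1 < a) :
    IsLocallyFiniteMeasure (nu N a) := by
  have := isLocallyFiniteMeasure_eta ha
  unfold nu; infer_instance

lemma lintegral_eta {a : ℝ} {g : ℝ → ENNReal} (hg : Measurable g) :
    ∫⁻ y, g y ∂(eta a) = ∫⁻ y in Ioi 0, ENNReal.ofReal (y ^ a) * g y := by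
  rw [eta, lintegral_withDensity_eq_lintegral_mul _ (measurable_wt a) hg]; rfl

lemma integral_eta {a : ℝ} (g : ℝ → ℝ) :
    ∫ y, g y ∂(eta a) = ∫ y in Ioi 0, y ^ a * g y := by
  rw [eta, integral_withDensity_eq_integral_toReal_smul (measurable_wt a)
    (by simp)]
  refine setIntegral_congr_fun measurableSet_Ioi fun y (hy : 0 < y) => ?_
  simp only [smul_eq_mul]
  rw [ENNReal.toReal_ofReal (by positivity)]

lemma map_mul_eta (a : ℝ) {t : ℝ} (ht : 0 < t) :
    (eta a).map (fun y => t * y) = ENNReal.ofReal (t ^ (-(a + 1))) • eta a := by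
  refine Measure.ext_of_lintegral _ fun g hg => ?_
  rw [lintegral_map hg (measurable_const_mul t), lintegral_smul_measure, lintegral_eta hg,
    lintegral_eta (g := fun y => g (t * y)) (hg.comp (measurable_const_mul t)), ← lintegral_indicator measurableSet_Ioi,
    ← lintegral_indicator measurableSet_Ioi]
  set G : ℝ → ENNReal := (Ioi (0 : ℝ)).indicator fun y => ENNReal.ofReal (y ^ a) * g y with hG
  have hGm : Measurable G := ((measurable_wt a).mul hg).indicator measurableSet_Ioi
  have h1 : ∫⁻ y, G (t * y) = ENNReal.ofReal t⁻¹ * ∫⁻ y, G y := by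
    rw [← lintegral_map hGm (measurable_const_mul t), Real.map_volume_mul_left ht.ne',
      lintegral_smul_measure, abs_of_pos (inv_pos.2 ht), smul_eq_mul]
  have h2 : (Ioi (0 : ℝ)).indicator (fun y => ENNReal.ofReal (y ^ a) * g (t * y)) =
      fun y => ENNReal.ofReal (t ^ (-a)) * G (t * y) := by
    ext y
    simp only [hG, indicator, mem_Ioi, mul_pos_iff_of_pos_left ht]
    split_ifs with hy
    · rw [← mul_assoc, ← ENNReal.ofReal_mul (by positivity), mul_rpow ht.le hy.le, ← mul_assoc,
        ← rpow_add ht, neg_add_cancel, rpow_zero, one_mul]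
    · simp
  rw [h2, lintegral_const_mul' _ _ ENNReal.ofReal_ne_top, h1, ← mul_assoc,
    ← ENNReal.ofReal_mul (by positivity), neg_add, rpow_add ht, rpow_neg_one, smul_eq_mul]

lemma map_nu (N : ℕ) (a : ℝ) (b : En N) {t : ℝ} (ht : 0 < t) :
    (nu N a).map (fun q => (b + t • q.1, t * q.2)) =
      ENNReal.ofReal (t ^ (-((N : ℝ) + a + 1))) • nu N a := by
  have h1 : (volume : Measure (En N)).map (fun x => b + t • x) =
      ENNReal.ofReal (t ^ (-(N : ℝ))) • volume := by
    have : (fun x : En N => b + t • x) = (fun x => b + x) ∘ fun x => t • x := rfl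
    rw [this, ← Measure.map_map (measurable_const_add b) (measurable_const_smul t),
      Measure.map_addHaar_smul _ ht.ne', Measure.map_smul, map_add_left_eq_self,
      finrank_euclideanSpace_fin, abs_of_pos (by positivity), rpow_neg ht.le, rpow_natCast]
  have h2 : (fun q : En N × ℝ => (b + t • q.1, t * q.2)) =
      Prod.map (fun x => b + t • x) (fun y => t * y) := rfl
  rw [h2, nu, ← Measure.map_prod_map _ _ (by fun_prop) (by fun_prop), h1, map_mul_eta a ht,
    Measure.prod_smul_left, Measure.prod_smul_right, smul_smul,
    ← ENNReal.ofReal_mul (by positivity), ← rpow_add ht]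
  congr 3; ring

lemma lintegral_nu_scale {N : ℕ} {a : ℝ} (b : En N) {t : ℝ} (ht : 0 < t)
    {g : En N × ℝ → ENNReal} (hg : Measurable g) :
    ∫⁻ q, g (b + t • q.1, t * q.2) ∂(nu N a) =
      ENNReal.ofReal (t ^ (-((N : ℝ) + a + 1))) * ∫⁻ q, g q ∂(nu N a) := by
  rw [← lintegral_map hg (by fun_prop), map_nu N a b ht, lintegral_smul_measure, smul_eq_mul]

lemma integral_nu_scale {N : ℕ} {a : ℝ} (b : En N) {t : ℝ} (ht : 0 < t)
    {g : En N × ℝ → ℝ} (hg : Continuous g) :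
    ∫ q, g (b + t • q.1, t * q.2) ∂(nu N a) =
      t ^ (-((N : ℝ) + a + 1)) * ∫ q, g q ∂(nu N a) := by
  rw [← integral_map (f := g) (φ := fun q : En N × ℝ => (b + t • q.1, t * q.2))
    (by fun_prop) hg.aestronglyMeasurable, map_nu N a b ht,
    integral_smul_measure, ENNReal.toReal_ofReal (by positivity), smul_eq_mul]

/-- Euler's identity in integrated form, obtained by differentiating the scaling law of the
weighted measure. -/
lemma euler_identity {N : ℕ} {a : ℝ} (ha : -1 < a) (z : En N) {g : En N × ℝ → ℝ}
    (hg : ContDiff ℝ 1 g) (hgs : HasCompactSupport g) :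
    ∫ q, fderiv ℝ g q (q.1 - z, q.2) ∂(nu N a) = -((N : ℝ) + a + 1) * ∫ q, g q ∂(nu N a) := by
  have := isLocallyFiniteMeasure_nu (N := N) ha
  have hgc : Continuous g := hg.continuous
  have hDc : Continuous (fderiv ℝ g) := hg.continuous_fderiv one_ne_zero
  obtain ⟨C, hC⟩ := (hgs.fderiv ℝ).exists_bound_of_continuous hDc
  obtain ⟨M, hM⟩ := hgs.isCompact.isBounded.exists_norm_le
  set p : En N × ℝ := (z, 0)
  have hM' : ∀ q, fderiv ℝ g q ≠ 0 → ‖q‖ ≤ M := fun q hq =>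
    hM q (support_fderiv_subset ℝ hq)
  set φ : ℝ → En N × ℝ → En N × ℝ := fun t q => p + t • (q - p)
  have hφ : ∀ t q, φ t q = ((z - t • z) + t • q.1, t * q.2) := by
    intro t q
    ext1
    · simp [φ, p, smul_sub]; abel
    · simp [φ, p]
  have hd : ∀ q, (q.1 - z, q.2) = q - p := fun q => by ext1 <;> simp [p]
  -- Differentiate `t ↦ ∫ g (p + t (q - p))` at `t = 1`; the scaling law of `nu` evaluates the same
  -- function explicitly.
  have key := hasDerivAt_integral_of_dominated_loc_of_deriv_le (μ := nu N a) (𝕜 := ℝ)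
    (F := fun t q => g (φ t q)) (F' := fun t q => fderiv ℝ g (φ t q) (q - p)) (x₀ := 1)
    (s := Ioo (1 / 2) 2)
    (bound := (Metric.closedBall p (2 * (M + ‖p‖))).indicator fun _ => C * (2 * (M + ‖p‖)))
    (Ioo_mem_nhds (by norm_num) (by norm_num))
    (Eventually.of_forall fun t => (hgc.comp (by fun_prop)).aestronglyMeasurable)
    (by simpa [φ] using hgc.integrable_of_hasCompactSupport hgs)
    (by
      refine Continuous.aestronglyMeasurable ?_
      exact (hDc.comp (by fun_prop)).clm_apply (by fun_prop))
    (Eventually.of_forall fun q t ht => by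
      by_cases h0 : fderiv ℝ g (φ t q) = 0
      · rw [h0]
        simp only [zero_apply, norm_zero]
        refine indicator_nonneg (fun x hx => ?_) _
        have : 0 ≤ 2 * (M + ‖p‖) := (norm_nonneg _).trans (mem_closedBall_iff_norm.1 hx)
        exact mul_nonneg ((norm_nonneg _).trans (hC 0)) this
      have h1 := hM' _ h0
      have h2 : ‖q - p‖ ≤ 2 * (M + ‖p‖) := by
        have h3 : t • (q - p) = φ t q - p := by simp [φ]
        have h4 : t * ‖q - p‖ ≤ M + ‖p‖ := by
          rw [← norm_of_nonneg (by linarith [ht.1] : 0 ≤ t), ← norm_smul, h3]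
          exact (norm_sub_le _ _).trans (by linarith)
        nlinarith [ht.1, norm_nonneg (q - p)]
      rw [indicator_of_mem (mem_closedBall_iff_norm.2 h2)]
      exact ((fderiv ℝ g (φ t q)).le_opNorm _).trans (mul_le_mul (hC _) h2 (norm_nonneg _)
        ((norm_nonneg _).trans (hC 0))))
    ((integrable_indicator_iff measurableSet_closedBall).2
      (integrableOn_const (isCompact_closedBall _ _).measure_lt_top.ne))
    (Eventually.of_forall fun q t _ => by
      have h1 : HasDerivAt (fun t => φ t q) (q - p) t := by
        simpa [φ] using ((hasDerivAt_id t).smul_const (q - p)).const_add p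
      exact ((hg.differentiable one_ne_zero).differentiableAt.hasFDerivAt (x := φ t q)).comp_hasDerivAt t h1)
  have h1 := key.2
  have h2 : HasDerivAt (fun t : ℝ => t ^ (-((N : ℝ) + a + 1)) * ∫ q, g q ∂(nu N a))
      (-((N : ℝ) + a + 1) * ∫ q, g q ∂(nu N a)) 1 := by
    have := (Real.hasDerivAt_rpow_const (x := 1) (p := -((N : ℝ) + a + 1))
      (Or.inl one_ne_zero)).mul_const (∫ q, g q ∂(nu N a))
    simpa using this
  have h3 : (fun t : ℝ => ∫ q, g (φ t q) ∂(nu N a)) =ᶠ[𝓝 1]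
      fun t : ℝ => t ^ (-((N : ℝ) + a + 1)) * ∫ q, g q ∂(nu N a) := by
    filter_upwards [Ioi_mem_nhds (zero_lt_one (α := ℝ))] with t ht
    simp only [hφ]
    exact integral_nu_scale _ ht hgc
  have h4 := (h2.congr_of_eventuallyEq h3).unique h1
  rw [h4]
  refine integral_congr_ae (Eventually.of_forall fun q => ?_)
  simp only [hd]
  simp [φ]

end PartG

/-! ### Regularised potentials -/

section PartH

open Set Filter Topology

/-- Differentiation under the integral sign over a compact set. -/
lemma hasFDerivAt_integral_compact {H X : Type*} [NormedAddCommGroup H] [NormedSpace ℝ H]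
    [FiniteDimensional ℝ H] [TopologicalSpace X] [MeasurableSpace X] [OpensMeasurableSpace X]
    [T2Space X] [SecondCountableTopology X]
    {μ : Measure X} [IsFiniteMeasureOnCompacts μ]
    {F : H → X → ℝ} {F' : H → X → H →L[ℝ] ℝ} (hF : Continuous (Function.uncurry F))
    (hF' : Continuous (Function.uncurry F')) (h : ∀ q z, HasFDerivAt (fun q => F q z) (F' q z) q)
    {K : Set X} (hK : IsCompact K) (q : H) :
    HasFDerivAt (fun q => ∫ z in K, F q z ∂μ) (∫ z in K, F' q z ∂μ) q := by
  obtain ⟨C, hC⟩ := ((isCompact_closedBall q 1).prod hK).exists_bound_of_continuousOn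
    hF'.continuousOn
  have hKm := hK.measurableSet
  have : IsFiniteMeasure (μ.restrict K) := ⟨by simpa using hK.measure_lt_top⟩
  refine hasFDerivAt_integral_of_dominated_of_fderiv_le (𝕜 := ℝ) (bound := fun _ => C)
    (s := Metric.closedBall q 1) (Metric.closedBall_mem_nhds q one_pos)
    (Eventually.of_forall fun q => ?_) ?_ ?_ ?_ (integrable_const C)
    (Eventually.of_forall fun z q _ => h q z)
  · exact (hF.comp (by fun_prop : Continuous fun z => (q, z))).aestronglyMeasurable
  · exact (hF.comp (by fun_prop : Continuous fun z => (q, z))).continuousOn.integrableOn_compact hK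
  · exact (hF'.comp (by fun_prop : Continuous fun z => (q, z))).aestronglyMeasurable
  · filter_upwards [ae_restrict_mem hKm] with z hz q' hq'
    exact hC (q', z) ⟨hq', hz⟩

/-- The squared distance from `q` to `(z, 0)`, regularised by `δ ^ 2`. -/
noncomputable def RR {N : ℕ} (δ : ℝ) (z : En N) (q : En N × ℝ) : ℝ :=
  ‖q.1 - z‖ ^ 2 + q.2 ^ 2 + δ ^ 2

/-- The linear form `h ↦ ⟨q - (z, 0), h⟩`. -/
noncomputable def Lin {N : ℕ} (z : En N) (q : En N × ℝ) : En N × ℝ →L[ℝ] ℝ :=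
  (innerSL ℝ (q.1 - z)).comp (ContinuousLinearMap.fst ℝ (En N) ℝ) +
    q.2 • ContinuousLinearMap.snd ℝ (En N) ℝ

variable {N : ℕ}

lemma Lin_apply (z : En N) (q h : En N × ℝ) :
    Lin z q h = inner ℝ (q.1 - z) h.1 + q.2 * h.2 := rfl

lemma RR_pos {δ : ℝ} (hδ : 0 < δ) (z : En N) (q : En N × ℝ) : 0 < RR δ z q := by
  unfold RR; positivity

lemma continuous_RR (δ : ℝ) : Continuous fun p : (En N × ℝ) × En N => RR δ p.2 p.1 := by
  unfold RR; fun_prop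

lemma continuous_Lin : Continuous fun p : (En N × ℝ) × En N => Lin p.2 p.1 := by
  unfold Lin
  refine Continuous.add ?_ (by fun_prop)
  exact ((innerSL ℝ).continuous.comp (by fun_prop)).clm_comp continuous_const

lemma continuous_RR_rpow {δ : ℝ} (hδ : 0 < δ) (e : ℝ) :
    Continuous fun p : (En N × ℝ) × En N => RR δ p.2 p.1 ^ e :=
  (continuous_RR δ).rpow_const fun _ => Or.inl (RR_pos hδ _ _).ne'

lemma continuous_RR_rpow_left {δ : ℝ} (hδ : 0 < δ) (e : ℝ) (z : En N) :
    Continuous fun q => RR δ z q ^ e :=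
  (by unfold RR; fun_prop : Continuous fun q => RR δ z q).rpow_const
    fun q => Or.inl (RR_pos hδ z q).ne'

lemma continuous_RR_rpow_right {δ : ℝ} (hδ : 0 < δ) (e : ℝ) (q : En N × ℝ) :
    Continuous fun z => RR δ z q ^ e :=
  (by unfold RR; fun_prop : Continuous fun z => RR δ z q).rpow_const
    fun z => Or.inl (RR_pos hδ z q).ne'

lemma hasFDerivAt_RR (δ : ℝ) (z : En N) (q : En N × ℝ) :
    HasFDerivAt (RR δ z) ((2 : ℝ) • Lin z q) q := by
  have h1 : HasFDerivAt (fun q : En N × ℝ => q.1 - z) (ContinuousLinearMap.fst ℝ (En N) ℝ) q :=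
    hasFDerivAt_fst.sub_const z
  have h2 : HasFDerivAt (fun q : En N × ℝ => q.2) (ContinuousLinearMap.snd ℝ (En N) ℝ) q :=
    hasFDerivAt_snd
  have h3 := (h1.norm_sq.add (h2.pow 2)).add_const (δ ^ 2)
  refine h3.congr_fderiv ?_
  ext h
  · simp [Lin_apply, inner_sub_left]
  · simp [Lin_apply]

lemma hasFDerivAt_RR_rpow {δ : ℝ} (hδ : 0 < δ) (e : ℝ) (z : En N) (q : En N × ℝ) :
    HasFDerivAt (fun q => RR δ z q ^ e) ((2 * e * RR δ z q ^ (e - 1)) • Lin z q) q := by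
  refine ((hasFDerivAt_RR δ z q).rpow_const (p := e) (Or.inl (RR_pos hδ z q).ne')).congr_fderiv ?_
  rw [smul_smul]; congr 1; ring

lemma contDiff_RR (δ : ℝ) (z : En N) : ContDiff ℝ 1 (RR δ z) := by
  unfold RR
  exact ((contDiff_fst.sub contDiff_const).norm_sq ℝ).add (contDiff_snd.pow 2) |>.add contDiff_const

/-- The weak form of the equation satisfied by the regularised fundamental solution. -/
lemma green {a lam : ℝ} (ha : -1 < a) (hlam : lam + 2 = N + a + 1) {δ : ℝ} (hδ : 0 < δ) (z : En N)
    {v : En N × ℝ → ℝ} (hv : ContDiff ℝ 1 v) (hvs : HasCompactSupport v) :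
    ∫ q, RR δ z q ^ (-lam / 2 - 1) * fderiv ℝ v q (q.1 - z, q.2) ∂(nu N a) =
      -((lam + 2) * δ ^ 2) * ∫ q, v q * RR δ z q ^ (-lam / 2 - 2) ∂(nu N a) := by
  have := isLocallyFiniteMeasure_nu (N := N) ha
  have hRc : ∀ e : ℝ, Continuous fun q => RR δ z q ^ e := fun e => continuous_RR_rpow_left hδ e z
  have hDc : Continuous (fderiv ℝ v) := hv.continuous_fderiv one_ne_zero
  set g : En N × ℝ → ℝ := fun q => v q * RR δ z q ^ (-lam / 2 - 1) with hgdef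
  have hg : ContDiff ℝ 1 g :=
    hv.mul ((contDiff_RR δ z).rpow_const_of_ne fun q => (RR_pos hδ z q).ne')
  have hgs : HasCompactSupport g := hvs.mul_right
  have hD : ∀ q, fderiv ℝ g q (q.1 - z, q.2) =
      RR δ z q ^ (-lam / 2 - 1) * fderiv ℝ v q (q.1 - z, q.2) - (lam + 2) * g q +
        (lam + 2) * δ ^ 2 * (v q * RR δ z q ^ (-lam / 2 - 2)) := by
    intro q
    have h1 := ((hv.differentiable one_ne_zero).differentiableAt.hasFDerivAt (x := q)).mul
      (hasFDerivAt_RR_rpow hδ (-lam / 2 - 1) z q)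
    have h2 : fderiv ℝ g q = _ := h1.fderiv
    have hR := RR_pos hδ z q
    have h3 : Lin z q (q.1 - z, q.2) = RR δ z q - δ ^ 2 := by
      rw [Lin_apply, real_inner_self_eq_norm_sq, RR]; ring
    have h4 : RR δ z q ^ (-lam / 2 - 1) = RR δ z q ^ (-lam / 2 - 2) * RR δ z q := by
      rw [← rpow_add_one hR.ne']; congr 1; ring
    have h5 : -lam / 2 - 1 - 1 = -lam / 2 - 2 := by ring
    rw [h2]
    simp only [_root_.add_apply, FunLike.coe_smul, Pi.smul_apply,
      smul_eq_mul, hgdef, h3, h4, h5]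
    ring
  have hi1 : Integrable (fun q => RR δ z q ^ (-lam / 2 - 1) * fderiv ℝ v q (q.1 - z, q.2))
      (nu N a) := by
    refine Continuous.integrable_of_hasCompactSupport
      ((hRc _).mul (hDc.clm_apply (by fun_prop))) ?_
    refine (hvs.fderiv ℝ).mono fun q hq => ?_
    contrapose! hq
    simp only [Function.mem_support, not_not] at hq ⊢
    simp [hq]
  have hi2 : Integrable g (nu N a) := hg.continuous.integrable_of_hasCompactSupport hgs
  have hi3 : Integrable (fun q => v q * RR δ z q ^ (-lam / 2 - 2)) (nu N a) :=
    Continuous.integrable_of_hasCompactSupport (hv.continuous.mul (hRc _)) hvs.mul_right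
  have hi12 : Integrable (fun q => RR δ z q ^ (-lam / 2 - 1) * fderiv ℝ v q (q.1 - z, q.2) -
      (lam + 2) * g q) (nu N a) := hi1.sub (hi2.const_mul _)
  have he := euler_identity ha z hg hgs
  simp only [hD] at he
  rw [integral_add hi12 (hi3.const_mul _),
    integral_sub hi1 (hi2.const_mul _), integral_const_mul, integral_const_mul] at he
  rw [← hlam] at he
  linarith

/-- The regularised potential of the density `f`. -/
noncomputable def WW (lam δ : ℝ) (f : En N → ℝ) (q : En N × ℝ) : ℝ :=
  ∫ z in tsupport f, f z * RR δ z q ^ (-lam / 2)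

/-- The derivative of the regularised potential. -/
noncomputable def DW (lam δ : ℝ) (f : En N → ℝ) (q : En N × ℝ) : En N × ℝ →L[ℝ] ℝ :=
  ∫ z in tsupport f, (f z * (-lam * RR δ z q ^ (-lam / 2 - 1))) • Lin z q

lemma continuous_DW_integrand {f : En N → ℝ} (hf : Continuous f)
    (lam : ℝ) {δ : ℝ} (hδ : 0 < δ) :
    Continuous fun p : (En N × ℝ) × En N =>
      (f p.2 * (-lam * RR δ p.2 p.1 ^ (-lam / 2 - 1))) • Lin p.2 p.1 :=
  (((hf.comp continuous_snd).mul (continuous_const.mul (continuous_RR_rpow hδ _)))).smul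
    continuous_Lin

lemma hasFDerivAt_WW {f : En N → ℝ} (hf : Continuous f) (hfs : HasCompactSupport f)
    (lam : ℝ) {δ : ℝ} (hδ : 0 < δ) (q : En N × ℝ) :
    HasFDerivAt (WW lam δ f) (DW lam δ f q) q := by
  refine hasFDerivAt_integral_compact (F := fun q z => f z * RR δ z q ^ (-lam / 2))
    (F' := fun q z => (f z * (-lam * RR δ z q ^ (-lam / 2 - 1))) • Lin z q)
    ((hf.comp continuous_snd).mul (continuous_RR_rpow hδ _))
    (continuous_DW_integrand hf lam hδ) (fun q z => ?_) hfs q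
  refine ((hasFDerivAt_RR_rpow hδ (-lam / 2) z q).const_mul (f z)).congr_fderiv ?_
  rw [smul_smul]; congr 2; ring

lemma continuous_DW {f : En N → ℝ} (hf : Continuous f) (hfs : HasCompactSupport f)
    (lam : ℝ) {δ : ℝ} (hδ : 0 < δ) : Continuous (DW lam δ f) :=
  continuous_parametric_integral_of_continuous
    (continuous_DW_integrand hf lam hδ) hfs

lemma contDiff_WW {f : En N → ℝ} (hf : Continuous f) (hfs : HasCompactSupport f)
    (lam : ℝ) {δ : ℝ} (hδ : 0 < δ) : ContDiff ℝ 1 (WW lam δ f) :=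
  contDiff_one_iff_hasFDerivAt.2 ⟨_, continuous_DW hf hfs lam hδ, hasFDerivAt_WW hf hfs lam hδ⟩

lemma WW_eq (lam δ : ℝ) (f : En N → ℝ) (q : En N × ℝ) :
    WW lam δ f q = ∫ z, f z * RR δ z q ^ (-lam / 2) :=
  setIntegral_eq_integral_of_forall_compl_eq_zero fun z hz => by
    rw [image_eq_zero_of_notMem_tsupport hz, zero_mul]

lemma WW_pos {f : En N → ℝ} (hf : Continuous f) (hfs : HasCompactSupport f) (hf0 : ∀ x, 0 ≤ f x)
    (hfne : ∃ x, f x ≠ 0) (lam : ℝ) {δ : ℝ} (hδ : 0 < δ) (q : En N × ℝ) : 0 < WW lam δ f q := by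
  rw [WW_eq]
  obtain ⟨x, hx⟩ := hfne
  refine Continuous.integral_pos_of_hasCompactSupport_nonneg_nonzero (x := x) ?_ hfs.mul_right
    (fun z => mul_nonneg (hf0 z) (rpow_nonneg (RR_pos hδ z q).le _))
    (mul_ne_zero hx (rpow_pos_of_pos (RR_pos hδ x q) _).ne')
  exact hf.mul (continuous_RR_rpow_right hδ _ q)

end PartH

/-! ### Picone's inequality -/

section PartI

open Set Filter Topology
variable {N : ℕ}

/-- The Euclidean inner product of two linear forms on `ℝᴺ × ℝ`, in coordinates. -/
noncomputable def gd (L M : En N × ℝ →L[ℝ] ℝ) : ℝ :=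
  (∑ i : Fin N, L (EuclideanSpace.single i 1, 0) * M (EuclideanSpace.single i 1, 0)) +
    L (0, 1) * M (0, 1)

lemma gradNormSq_nonneg (w : En N × ℝ → ℝ) (q : En N × ℝ) : 0 ≤ gradNormSq N w q := by
  unfold gradNormSq; positivity

lemma integrable_gradNormSq {a : ℝ} (ha : -1 < a) {w : En N × ℝ → ℝ} (hw : ContDiff ℝ 1 w)
    (hws : HasCompactSupport w) : Integrable (fun q => gradNormSq N w q) (nu N a) := by
  have := isLocallyFiniteMeasure_nu (N := N) ha
  have hDw : Continuous (fderiv ℝ w) := hw.continuous_fderiv one_ne_zero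
  refine Continuous.integrable_of_hasCompactSupport ?_ ?_
  · unfold gradNormSq
    exact (continuous_finsetSum _ fun i _ => (hDw.clm_apply continuous_const).pow 2).add
      ((hDw.clm_apply continuous_const).pow 2)
  · refine (hws.fderiv ℝ).mono fun q hq => ?_
    contrapose! hq
    simp only [Function.mem_support, not_not] at hq ⊢
    simp [gradNormSq, hq]

lemma gd_integral {X : Type*} [MeasurableSpace X] {μ : Measure X} {φ : X → En N × ℝ →L[ℝ] ℝ}
    (hφ : Integrable φ μ) (L : En N × ℝ →L[ℝ] ℝ) :
    gd L (∫ z, φ z ∂μ) = ∫ z, gd L (φ z) ∂μ := by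
  have hi : ∀ h : En N × ℝ, Integrable (fun z => φ z h) μ := fun h => hφ.apply_continuousLinearMap h
  simp only [gd]
  rw [integral_add (integrable_finsetSum _ fun i _ => (hi _).const_mul _) ((hi _).const_mul _),
    integral_finsetSum _ fun i _ => (hi _).const_mul _]
  simp only [integral_const_mul, ContinuousLinearMap.integral_apply hφ]

lemma gd_smul (c : ℝ) (L M : En N × ℝ →L[ℝ] ℝ) : gd L (c • M) = c * gd L M := by
  simp only [gd, FunLike.coe_smul, Pi.smul_apply, smul_eq_mul, mul_add, Finset.mul_sum]
  congr 1
  · exact Finset.sum_congr rfl fun i _ => by ring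
  · ring

lemma gd_Lin (L : En N × ℝ →L[ℝ] ℝ) (z : En N) (q : En N × ℝ) :
    gd L (Lin z q) = L (q.1 - z, q.2) := by
  have h : (q.1 - z, q.2) =
      (∑ i : Fin N, (q.1 - z) i • ((EuclideanSpace.single i (1 : ℝ), 0) : En N × ℝ)) +
        q.2 • ((0, 1) : En N × ℝ) := by
    ext i
    · simp [Prod.fst_sum, Finset.sum_apply, Pi.single_apply]
    · simp [Prod.snd_sum]
  rw [h, map_add, map_sum, gd]
  simp only [map_smul, Lin_apply, smul_eq_mul, inner_zero_right, zero_add, mul_one, mul_zero,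
    add_zero, EuclideanSpace.inner_single_right, one_mul, conj_trivial]
  congr 1
  · exact Finset.sum_congr rfl fun i _ => by ring
  · ring

/-- The pointwise Picone inequality. -/
lemma picone {w W : En N × ℝ → ℝ} {q : En N × ℝ} {W' : En N × ℝ →L[ℝ] ℝ}
    (hw : DifferentiableAt ℝ w q) (hW : HasFDerivAt W W' q) (hWq : 0 < W q) :
    gd (fderiv ℝ (fun q => w q ^ 2 / W q) q) W' ≤ gradNormSq N w q := by
  set c := w q / W q
  have hD : ∀ h, fderiv ℝ (fun q => w q ^ 2 / W q) q h = 2 * c * fderiv ℝ w q h - c ^ 2 * W' h := by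
    intro h
    have h0 : HasFDerivAt (fun q => (W q)⁻¹) (-(W q ^ 2)⁻¹ • W') q :=
      (hasDerivAt_inv hWq.ne').comp_hasFDerivAt q hW
    have h1 := (hw.hasFDerivAt.pow 2).fun_mul h0
    simp only [div_eq_mul_inv]
    rw [h1.fderiv]
    simp [c]
    field_simp
    ring
  have h0 : ∀ A B : ℝ, (2 * c * A - c ^ 2 * B) * B ≤ A ^ 2 := fun A B => by
    nlinarith [sq_nonneg (A - c * B)]
  unfold gd gradNormSq
  simp only [hD]
  gcongr with i
  · exact h0 _ _
  · exact h0 _ _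

/-- The integrated Picone inequality, tested with the regularised potential of `f`. -/
lemma picone_integral {a lam : ℝ} (ha : -1 < a) (hlam : lam + 2 = N + a + 1)
    {δ : ℝ} (hδ : 0 < δ) {f : En N → ℝ} (hf : Continuous f) (hfs : HasCompactSupport f)
    (hlam0 : 0 ≤ lam) (hf0 : ∀ x, 0 ≤ f x) (hfne : ∃ x, f x ≠ 0)
    {w : En N × ℝ → ℝ} (hw : ContDiff ℝ 1 w) (hws : HasCompactSupport w) :
    ∫⁻ z, ENNReal.ofReal (f z * (lam * (lam + 2) * δ ^ 2 *
        ∫ q, w q ^ 2 / WW lam δ f q * RR δ z q ^ (-lam / 2 - 2) ∂(nu N a))) ≤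
      ENNReal.ofReal (∫ q, gradNormSq N w q ∂(nu N a)) := by
  have := isLocallyFiniteMeasure_nu (N := N) ha
  have hWpos := WW_pos hf hfs hf0 hfne lam hδ
  set v : En N × ℝ → ℝ := fun q => w q ^ 2 / WW lam δ f q with hvdef
  have hv : ContDiff ℝ 1 v := (hw.pow 2).div (contDiff_WW hf hfs lam hδ) fun q => (hWpos q).ne'
  have hvs : HasCompactSupport v := by
    refine hws.mono fun q hq => ?_
    contrapose! hq
    simp only [Function.mem_support, not_not] at hq ⊢
    simp [hvdef, hq]
  have hDv : Continuous (fderiv ℝ v) := hv.continuous_fderiv one_ne_zero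
  set Φ : En N → En N × ℝ → ℝ := fun z q =>
    f z * (-lam * (RR δ z q ^ (-lam / 2 - 1) * fderiv ℝ v q (q.1 - z, q.2))) with hΦ
  have hΦc : Continuous (Function.uncurry Φ) := by
    have h1 : Continuous fun p : En N × En N × ℝ => RR δ p.1 p.2 ^ (-lam / 2 - 1) :=
      (by unfold RR; fun_prop : Continuous fun p : En N × En N × ℝ => RR δ p.1 p.2).rpow_const
        fun p => Or.inl (RR_pos hδ _ _).ne'
    have h2 : Continuous fun p : En N × En N × ℝ => fderiv ℝ v p.2 (p.2.1 - p.1, p.2.2) :=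
      (hDv.comp continuous_snd).clm_apply (by fun_prop)
    exact (hf.comp continuous_fst).mul (continuous_const.mul (h1.mul h2))
  have hΦs : HasCompactSupport (Function.uncurry Φ) := by
    refine HasCompactSupport.intro (hfs.isCompact.prod (hvs.fderiv ℝ).isCompact) fun p hp => ?_
    rw [mem_prod, not_and_or] at hp
    rcases hp with hp | hp
    · simp [Function.uncurry, hΦ, image_eq_zero_of_notMem_tsupport hp]
    · simp [Function.uncurry, hΦ, image_eq_zero_of_notMem_tsupport hp]
  have hgd : ∀ q, gd (fderiv ℝ v q) (DW lam δ f q) = ∫ z, Φ z q := by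
    intro q
    rw [DW, gd_integral]
    · rw [setIntegral_eq_integral_of_forall_compl_eq_zero fun z hz => by
        rw [image_eq_zero_of_notMem_tsupport hz, gd_smul, zero_mul, zero_mul]]
      refine integral_congr_ae (Eventually.of_forall fun z => ?_)
      simp only [gd_smul, gd_Lin, hΦ]
      ring
    · exact ((continuous_DW_integrand hf lam hδ).comp
        (by fun_prop : Continuous fun z => (q, z))).continuousOn.integrableOn_compact hfs
  have hi1 : Integrable (fun q => gd (fderiv ℝ v q) (DW lam δ f q)) (nu N a) := by
    refine Continuous.integrable_of_hasCompactSupport ?_ ?_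
    · have := continuous_DW hf hfs lam hδ
      unfold gd
      refine (continuous_finsetSum _ fun i _ => ?_).add ?_ <;>
      exact (hDv.clm_apply continuous_const).mul (this.clm_apply continuous_const)
    · refine (hvs.fderiv ℝ).mono fun q hq => ?_
      contrapose! hq
      simp only [Function.mem_support, not_not] at hq ⊢
      simp [gd, hq]
  have hi2 := integrable_gradNormSq ha hw hws
  have hz : ∀ z, f z * (lam * (lam + 2) * δ ^ 2 *
      ∫ q, v q * RR δ z q ^ (-lam / 2 - 2) ∂(nu N a)) = ∫ q, Φ z q ∂(nu N a) := by
    intro z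
    simp only [hΦ, integral_const_mul]
    rw [green ha hlam hδ z hv hvs]
    ring
  have hi3 : Integrable (fun z => ∫ q, Φ z q ∂(nu N a)) := by
    have : Integrable (Function.uncurry Φ) ((volume : Measure (En N)).prod (nu N a)) :=
      hΦc.integrable_of_hasCompactSupport hΦs
    exact this.integral_prod_left
  have h0 : ∀ z, 0 ≤ ∫ q, Φ z q ∂(nu N a) := fun z => by
    rw [← hz]
    have : 0 ≤ ∫ q, v q * RR δ z q ^ (-lam / 2 - 2) ∂(nu N a) := integral_nonneg fun q =>
      mul_nonneg (div_nonneg (sq_nonneg _) (hWpos q).le) (rpow_nonneg (RR_pos hδ z q).le _)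
    have := hf0 z
    positivity
  refine (lintegral_congr fun z => congrArg ENNReal.ofReal (hz z)).trans_le ?_
  rw [← ofReal_integral_eq_lintegral_ofReal hi3 (Eventually.of_forall h0)]
  refine ENNReal.ofReal_le_ofReal ?_
  -- Exchanging the integrals turns the superposition of kernels back into `∇W`.
  calc ∫ z, ∫ q, Φ z q ∂(nu N a)
      = ∫ q, (∫ z, Φ z q) ∂(nu N a) := integral_integral_swap_of_hasCompactSupport hΦc hΦs
    _ = ∫ q, gd (fderiv ℝ v q) (DW lam δ f q) ∂(nu N a) := by simp only [hgd]
    _ ≤ _ := integral_mono hi1 hi2 fun q =>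
      picone ((hw.differentiable one_ne_zero) q) (hasFDerivAt_WW hf hfs lam hδ q) (hWpos q)

end PartI

/-! ### The limit of vanishing regularisation -/

section PartJ

open Set Filter Topology
variable {N : ℕ}

lemma locallyIntegrable_norm_rpow (hN : 0 < N) {lam : ℝ} (hlamN : lam < N) :
    LocallyIntegrable (fun x : En N => ‖x‖ ^ (-lam)) volume := by
  have hβ : 0 < ((N : ℝ) - lam) / 2 := by linarith
  have h1 := lintegral_beta_radial hN hβ one_pos
  set e := -(((N : ℝ) - lam) / 2 + 1)
  have hm : Measurable fun x : En N => ‖x‖ ^ (2 * (((N : ℝ) - lam) / 2) - N) * (1 + ‖x‖ ^ 2) ^ e := by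
    fun_prop
  have h2 : Integrable (fun x : En N => ‖x‖ ^ (2 * (((N : ℝ) - lam) / 2) - N) * (1 + ‖x‖ ^ 2) ^ e) := by
    refine ⟨hm.aestronglyMeasurable, ?_⟩
    rw [hasFiniteIntegral_iff_ofReal (Eventually.of_forall fun x => by positivity), h1]
    exact ENNReal.ofReal_lt_top
  have h3 : Continuous fun x : En N => (1 + ‖x‖ ^ 2) ^ (-e) :=
    (by fun_prop : Continuous fun x : En N => 1 + ‖x‖ ^ 2).rpow_const fun x => Or.inl (by positivity)
  have h4 := h2.locallyIntegrable.mul_continuous h3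
  refine (locallyIntegrable_congr (Eventually.of_forall fun x => ?_)).1 h4
  have h5 : 0 < 1 + ‖x‖ ^ 2 := by positivity
  rw [mul_assoc, ← rpow_add h5, add_neg_cancel, rpow_zero, mul_one]
  congr 1; ring

/-- The Riesz potential of `f`. The integrand has the junk value `0 ^ (-lam) = 0` at `z = x`, on a
null set. -/
noncomputable def W0 (lam : ℝ) (f : En N → ℝ) (x : En N) : ℝ := ∫ z, f z * ‖x - z‖ ^ (-lam)

section W0
variable {lam : ℝ} {f : En N → ℝ}

lemma continuous_W0 (hN : 0 < N) (hlamN : lam < N) (hf : Continuous f) (hfs : HasCompactSupport f) :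
    Continuous (W0 lam f) :=
  hfs.continuous_convolution_left (ContinuousLinearMap.mul ℝ ℝ) hf
    (locallyIntegrable_norm_rpow hN hlamN)

lemma integrable_W0 (hN : 0 < N) (hlamN : lam < N) (hf : Continuous f) (hfs : HasCompactSupport f)
    (x : En N) : Integrable fun z => f z * ‖x - z‖ ^ (-lam) :=
  hfs.convolutionExists_left (ContinuousLinearMap.mul ℝ ℝ) hf
    (locallyIntegrable_norm_rpow hN hlamN) x

lemma WW_le_W0 (hN : 0 < N) (hlam0 : 0 < lam) (hlamN : lam < N) (hf : Continuous f)
    (hfs : HasCompactSupport f) (hf0 : ∀ x, 0 ≤ f x) {δ : ℝ} (hδ : 0 < δ) (q : En N × ℝ) :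
    WW lam δ f q ≤ W0 lam f q.1 := by
  rw [WW_eq, W0]
  have hc : Continuous fun z => f z * RR δ z q ^ (-lam / 2) :=
    hf.mul (continuous_RR_rpow_right hδ _ q)
  refine integral_mono_ae (hc.integrable_of_hasCompactSupport hfs.mul_right)
    (integrable_W0 hN hlamN hf hfs q.1) ?_
  filter_upwards [ae_ne_volume hN q.1] with z hz
  refine mul_le_mul_of_nonneg_left ?_ (hf0 z)
  have h1 := norm_sub_sq_pos (Ne.symm hz)
  have h2 : ‖q.1 - z‖ ^ (-lam) = (‖q.1 - z‖ ^ 2) ^ (-lam / 2) := by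
    rw [← rpow_natCast, ← rpow_mul (norm_nonneg _)]
    congr 1; push_cast; ring
  rw [h2]
  refine rpow_le_rpow_of_nonpos h1 ?_ (by linarith)
  unfold RR
  nlinarith [sq_nonneg q.2, sq_nonneg δ]

lemma W0_pos (hN : 0 < N) (hlam0 : 0 < lam) (hlamN : lam < N) (hf : Continuous f)
    (hfs : HasCompactSupport f) (hf0 : ∀ x, 0 ≤ f x) (hfne : ∃ x, f x ≠ 0) (x : En N) :
    0 < W0 lam f x :=
  (WW_pos hf hfs hf0 hfne lam one_pos (x, 0)).trans_le
    (WW_le_W0 hN hlam0 hlamN hf hfs hf0 one_pos (x, 0))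

end W0

/-- The total mass, up to scaling, of the concentrating kernel. -/
lemma lintegral_kernel (hN : 0 < N) {s : ℝ} (hs0 : 0 < s) (hs1 : s < 1) (hsN : 2 * s < N)
    {lam : ℝ} (hlam : lam = N - 2 * s) :
    ∫⁻ q, ENNReal.ofReal (lam * (lam + 2) * (‖q.1‖ ^ 2 + q.2 ^ 2 + 1) ^ (-lam / 2 - 2))
        ∂(nu N (1 - 2 * s)) =
      ENNReal.ofReal (2 * π ^ ((N : ℝ) / 2) * Gamma (1 - s) / Gamma ((N : ℝ) / 2 - s)) := by
  have hN' : (0 : ℝ) < N := by exact_mod_cast hN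
  have hlam0 : 0 < lam := by rw [hlam]; linarith
  have hg1 := Gamma_pos_of_pos (by linarith : 0 < 1 - s)
  have hg2 := Gamma_pos_of_pos (by linarith : 0 < (N : ℝ) / 2 - s)
  have hg3 := Gamma_pos_of_pos (by positivity : 0 < (N : ℝ) / 2 + 1)
  have hg4 := Gamma_pos_of_pos (by positivity : 0 < (N : ℝ) / 2)
  have hm : Measurable fun q : En N × ℝ =>
      ENNReal.ofReal (lam * (lam + 2) * (‖q.1‖ ^ 2 + q.2 ^ 2 + 1) ^ (-lam / 2 - 2)) := by
    fun_prop
  rw [nu, lintegral_prod _ hm.aemeasurable]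
  set c₁ := lam * (lam + 2) * (Gamma (1 - s) * Gamma ((N : ℝ) / 2 + 1) /
    (2 * Gamma (1 - s + ((N : ℝ) / 2 + 1)))) with hc₁
  have hg5 := Gamma_pos_of_pos (by linarith : 0 < 1 - s + ((N : ℝ) / 2 + 1))
  have hin : ∀ x : En N, ∫⁻ y, ENNReal.ofReal
      (lam * (lam + 2) * (‖x‖ ^ 2 + y ^ 2 + 1) ^ (-lam / 2 - 2)) ∂(eta (1 - 2 * s)) =
      ENNReal.ofReal c₁ * ENNReal.ofReal (‖x‖ ^ (2 * ((N : ℝ) / 2) - N) *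
        (1 + ‖x‖ ^ 2) ^ (-((N : ℝ) / 2 + 1))) := by
    intro x
    have hA : 0 < 1 + ‖x‖ ^ 2 := by positivity
    have h1 := lintegral_beta (by linarith : 0 < 1 - s) (by positivity : 0 < (N : ℝ) / 2 + 1) hA
    rw [lintegral_eta (g := fun y => ENNReal.ofReal
      (lam * (lam + 2) * (‖x‖ ^ 2 + y ^ 2 + 1) ^ (-lam / 2 - 2)))
      (by fun_prop)]
    have h2 : ∀ y ∈ Ioi (0 : ℝ), ENNReal.ofReal (y ^ (1 - 2 * s)) *
        ENNReal.ofReal (lam * (lam + 2) * (‖x‖ ^ 2 + y ^ 2 + 1) ^ (-lam / 2 - 2)) =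
        ENNReal.ofReal (lam * (lam + 2)) * ENNReal.ofReal (y ^ (2 * (1 - s) - 1) *
          (1 + ‖x‖ ^ 2 + y ^ 2) ^ (-(1 - s + ((N : ℝ) / 2 + 1)))) := by
      intro y (hy : 0 < y)
      rw [← ENNReal.ofReal_mul (by positivity), ← ENNReal.ofReal_mul (by positivity)]
      congr 1
      rw [show 2 * (1 - s) - 1 = 1 - 2 * s by ring,
        show -(1 - s + ((N : ℝ) / 2 + 1)) = -lam / 2 - 2 by rw [hlam]; ring,
        show 1 + ‖x‖ ^ 2 + y ^ 2 = ‖x‖ ^ 2 + y ^ 2 + 1 by ring]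
      ring
    rw [setLIntegral_congr_fun measurableSet_Ioi h2,
      lintegral_const_mul' _ _ ENNReal.ofReal_ne_top, h1, ← ENNReal.ofReal_mul (by positivity),
      ← ENNReal.ofReal_mul (by positivity)]
    congr 1
    rw [hc₁, show 2 * ((N : ℝ) / 2) - N = 0 by ring, rpow_zero]
    ring
  simp only [hin]
  rw [lintegral_const_mul' _ _ ENNReal.ofReal_ne_top,
    lintegral_beta_radial hN (by positivity : 0 < (N : ℝ) / 2) one_pos,
    ← ENNReal.ofReal_mul (by positivity)]
  congr 1
  have e1 : Gamma (1 - s + ((N : ℝ) / 2 + 1)) =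
      ((N : ℝ) / 2 - s + 1) * (((N : ℝ) / 2 - s) * Gamma ((N : ℝ) / 2 - s)) := by
    rw [← Gamma_add_one (by linarith : (N : ℝ) / 2 - s ≠ 0), ← Gamma_add_one (by linarith)]
    congr 1; ring
  have h3 : 0 < (N : ℝ) / 2 - s := by linarith
  have h4 : 0 < (N : ℝ) / 2 - s + 1 := by linarith
  have h5 : lam * (lam + 2) = 4 * (((N : ℝ) / 2 - s + 1) * ((N : ℝ) / 2 - s)) := by rw [hlam]; ring
  rw [hc₁, e1, Gamma_one, h5]
  generalize (N : ℝ) / 2 - s = b at *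
  field_simp
  norm_num

/-- Lower bound for the weighted energy: Picone's inequality in the limit `δ → 0`, in which the
concentrating kernel reads off the trace. -/
lemma trace_lower (hN : 0 < N) {a lam : ℝ} (ha : -1 < a) (hlam : lam + 2 = N + a + 1)
    (hlam0 : 0 < lam) (hlamN : lam < N) {f : En N → ℝ} (hf : Continuous f)
    (hfs : HasCompactSupport f) (hf0 : ∀ x, 0 ≤ f x) (hfne : ∃ x, f x ≠ 0)
    {w : En N × ℝ → ℝ} (hw : ContDiff ℝ 1 w) (hws : HasCompactSupport w) {c : ENNReal}
    (hc : ∫⁻ q, ENNReal.ofReal (lam * (lam + 2) * (‖q.1‖ ^ 2 + q.2 ^ 2 + 1) ^ (-lam / 2 - 2))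
      ∂(nu N a) = c) :
    (∫⁻ z, ENNReal.ofReal (f z * (w (z, 0) ^ 2 / W0 lam f z))) * c ≤
      ENNReal.ofReal (∫ q, gradNormSq N w q ∂(nu N a)) := by
  have := isLocallyFiniteMeasure_nu (N := N) ha
  have hWpos := W0_pos hN hlam0 hlamN hf hfs hf0 hfne
  have hWc := continuous_W0 hN hlamN hf hfs
  set K := lam * (lam + 2) with hK
  have hK0 : 0 < K := by positivity
  set k : En N × ℝ → ℝ := fun q => (‖q.1‖ ^ 2 + q.2 ^ 2 + 1) ^ (-lam / 2 - 2) with hk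
  have hk0 : ∀ q, 0 ≤ k q := fun q => by positivity
  have hkc : Continuous k :=
    (by fun_prop : Continuous fun q : En N × ℝ => ‖q.1‖ ^ 2 + q.2 ^ 2 + 1).rpow_const
      fun q => Or.inl (by positivity)
  set ψ : En N × ℝ → ℝ := fun q => w q ^ 2 / W0 lam f q.1 with hψ
  have hψ0 : ∀ q, 0 ≤ ψ q := fun q => div_nonneg (sq_nonneg _) (hWpos _).le
  have hψc : Continuous ψ :=
    (hw.continuous.pow 2).div (hWc.comp continuous_fst) fun q => (hWpos _).ne'
  -- In the variables `q ↦ (z + δ q₁, δ q₂)` the kernel no longer depends on `δ`, which enters only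
  -- through the argument of the continuous function `ψ`.
  set H : ℝ → En N × En N × ℝ → ENNReal := fun δ p =>
    ENNReal.ofReal (f p.1 * (ψ (p.1 + δ • p.2.1, δ * p.2.2) * (K * k p.2))) with hH
  have hHm : ∀ δ, Measurable (H δ) := by
    intro δ
    have : Continuous fun p : En N × En N × ℝ => ψ (p.1 + δ • p.2.1, δ * p.2.2) :=
      hψc.comp (by fun_prop)
    have h2 : Continuous fun p : En N × En N × ℝ => k p.2 := hkc.comp continuous_snd
    exact (((hf.comp continuous_fst).mul (this.mul (continuous_const.mul h2)))).measurable.ennreal_ofReal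
  have hHle : ∀ δ, 0 < δ → ∫⁻ p, H δ p ∂((volume : Measure (En N)).prod (nu N a)) ≤
      ENNReal.ofReal (∫ q, gradNormSq N w q ∂(nu N a)) := by
    intro δ hδ
    refine le_trans ?_ (picone_integral ha hlam hδ hf hfs hlam0.le hf0 hfne hw hws)
    rw [lintegral_prod _ (hHm δ).aemeasurable]
    refine lintegral_mono fun z => ?_
    have hWδ := WW_pos hf hfs hf0 hfne lam hδ
    have hcont : Continuous fun q => w q ^ 2 / WW lam δ f q * RR δ z q ^ (-lam / 2 - 2) :=
      ((hw.continuous.pow 2).div (contDiff_WW hf hfs lam hδ).continuous fun q => (hWδ q).ne').mul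
        (continuous_RR_rpow_left hδ _ z)
    have hint : Integrable (fun q => w q ^ 2 / WW lam δ f q * RR δ z q ^ (-lam / 2 - 2))
        (nu N a) := by
      refine hcont.integrable_of_hasCompactSupport (hws.mono fun q hq => ?_)
      contrapose! hq
      simp only [Function.mem_support, not_not] at hq ⊢
      simp [hq]
    have hn0 : ∀ q, 0 ≤ w q ^ 2 / WW lam δ f q * RR δ z q ^ (-lam / 2 - 2) := fun q =>
      mul_nonneg (div_nonneg (sq_nonneg _) (hWδ q).le) (rpow_nonneg (RR_pos hδ z q).le _)
    rw [← mul_assoc, ENNReal.ofReal_mul (mul_nonneg (hf0 z) (by positivity)),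
      ofReal_integral_eq_lintegral_ofReal hint (Eventually.of_forall hn0)]
    set g : En N × ℝ → ENNReal := fun q =>
      ENNReal.ofReal (ψ q * RR δ z q ^ (-lam / 2 - 2)) with hg
    have hgm : Measurable g := (hψc.mul (continuous_RR_rpow_left hδ _ z)).measurable.ennreal_ofReal
    -- Replacing the regularised potential by the larger Riesz potential only decreases the integral.
    have h1 : ∫⁻ q, g q ∂(nu N a) ≤
        ∫⁻ q, ENNReal.ofReal (w q ^ 2 / WW lam δ f q * RR δ z q ^ (-lam / 2 - 2)) ∂(nu N a) := by
      refine lintegral_mono fun q => ENNReal.ofReal_le_ofReal ?_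
      refine mul_le_mul_of_nonneg_right ?_ (rpow_nonneg (RR_pos hδ z q).le _)
      exact div_le_div_of_nonneg_left (sq_nonneg _) (hWδ q)
        (WW_le_W0 hN hlam0 hlamN hf hfs hf0 hδ q)
    refine le_trans (le_of_eq ?_) (mul_le_mul_right h1 _)
    have h2 := lintegral_nu_scale (a := a) z hδ hgm
    have h3 : ∫⁻ q, g q ∂(nu N a) = ENNReal.ofReal (δ ^ (lam + 2)) *
        ∫⁻ q, g (z + δ • q.1, δ * q.2) ∂(nu N a) := by
      rw [h2, ← mul_assoc, ← ENNReal.ofReal_mul (by positivity), ← rpow_add hδ, ← hlam,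
        add_neg_cancel, rpow_zero, ENNReal.ofReal_one, one_mul]
    rw [h3, ← mul_assoc, ← ENNReal.ofReal_mul (mul_nonneg (hf0 z) (by positivity)),
      ← lintegral_const_mul' _ _ ENNReal.ofReal_ne_top]
    refine lintegral_congr fun q => ?_
    have hR : RR δ z (z + δ • q.1, δ * q.2) ^ (-lam / 2 - 2) = δ ^ (-lam - 4) * k q := by
      have : RR δ z (z + δ • q.1, δ * q.2) = δ ^ 2 * (‖q.1‖ ^ 2 + q.2 ^ 2 + 1) := by
        simp only [RR, add_sub_cancel_left, norm_smul, norm_eq_abs, mul_pow, sq_abs]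
        ring
      rw [this, mul_rpow (by positivity) (by positivity), ← rpow_natCast δ 2, ← rpow_mul hδ.le]
      congr 2
      push_cast; ring
    have hδp : δ ^ 2 * δ ^ (lam + 2) * δ ^ (-lam - 4) = 1 := by
      rw [← rpow_natCast δ 2, ← rpow_add hδ, ← rpow_add hδ]
      convert rpow_zero δ using 2
      push_cast; ring
    simp only [hH, hg]
    rw [← ENNReal.ofReal_mul (mul_nonneg (mul_nonneg (hf0 z) (by positivity)) (by positivity)), hR]
    congr 1
    linear_combination (-(f z * ψ (z + δ • q.1, δ * q.2) * K * k q)) * hδp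
  have hlim : ∀ p, Tendsto (fun n : ℕ => H (1 / ((n : ℝ) + 1)) p) atTop (𝓝 (H 0 p)) := by
    intro p
    have h1 : Continuous fun δ => H δ p := by
      have : Continuous fun δ : ℝ => ψ (p.1 + δ • p.2.1, δ * p.2.2) := hψc.comp (by fun_prop)
      exact ENNReal.continuous_ofReal.comp (continuous_const.mul (this.mul continuous_const))
    exact (h1.tendsto 0).comp tendsto_one_div_add_atTop_nhds_zero_nat
  -- Fatou's lemma along `δ = 1 / (n + 1)`.
  have hfat := lintegral_liminf_le (μ := (volume : Measure (En N)).prod (nu N a)) (u := atTop)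
    (f := fun n : ℕ => H (1 / ((n : ℝ) + 1))) fun n => hHm _
  have h1 : ∫⁻ p, H 0 p ∂((volume : Measure (En N)).prod (nu N a)) ≤
      ENNReal.ofReal (∫ q, gradNormSq N w q ∂(nu N a)) := by
    refine le_trans (le_of_eq (lintegral_congr fun p => ((hlim p).liminf_eq).symm)) (hfat.trans ?_)
    exact liminf_le_of_frequently_le' (Frequently.of_forall fun n => hHle _ (by positivity))
  refine le_trans (le_of_eq ?_) h1
  rw [lintegral_prod _ (hHm 0).aemeasurable, ← lintegral_mul_const]
  · refine lintegral_congr fun z => ?_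
    rw [← hc, ← lintegral_const_mul' _ _ ENNReal.ofReal_ne_top]
    refine lintegral_congr fun q => ?_
    simp only [hH, zero_smul, add_zero, zero_mul]
    rw [← ENNReal.ofReal_mul (mul_nonneg (hf0 z) (hψ0 (z, 0)))]
    congr 1
    simp only [hψ]
    ring
  · have : Continuous fun z : En N => ψ (z, 0) := hψc.comp (by fun_prop)
    exact (hf.mul this).measurable.ennreal_ofReal

end PartJ

/-! ### The sharp trace inequality -/

section PartK

open Set Filter Topology
variable {N : ℕ}

/-- Cauchy–Schwarz against the weight `W`, by expanding a square. -/
lemma cauchy_schwarz {f g W : En N → ℝ} (hf : Continuous f) (hfs : HasCompactSupport f)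
    (hf0 : ∀ x, 0 ≤ f x) (hg : Continuous g) (hW : Continuous W) (hW0 : ∀ x, 0 < W x)
    (hI : 0 < ∫ x, f x * W x) :
    (∫ x, f x * g x) ^ 2 ≤ (∫ x, f x * (g x ^ 2 / W x)) * ∫ x, f x * W x := by
  set X := ∫ x, f x * g x
  set I := ∫ x, f x * W x
  have i1 : Integrable fun x => f x * (g x ^ 2 / W x) :=
    (hf.mul ((hg.pow 2).div hW fun x => (hW0 x).ne')).integrable_of_hasCompactSupport hfs.mul_right
  have i2 : Integrable fun x => f x * g x :=
    (hf.mul hg).integrable_of_hasCompactSupport hfs.mul_right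
  have i3 : Integrable fun x => f x * W x :=
    (hf.mul hW).integrable_of_hasCompactSupport hfs.mul_right
  have i23 : Integrable fun x => 2 * (X / I) * (f x * g x) - (X / I) ^ 2 * (f x * W x) :=
    (i2.const_mul _).sub (i3.const_mul _)
  have h := integral_mono i23 i1 fun x => by
    have h1 := hW0 x
    have h2 : f x * (g x ^ 2 / W x) - (2 * (X / I) * (f x * g x) - (X / I) ^ 2 * (f x * W x)) =
        f x * ((g x - X / I * W x) ^ 2 / W x) := by
      field_simp; ring
    have h3 : 0 ≤ f x * ((g x - X / I * W x) ^ 2 / W x) :=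
      mul_nonneg (hf0 x) (div_nonneg (sq_nonneg _) h1.le)
    show _ ≤ _
    linarith
  rw [integral_sub (i2.const_mul _) (i3.const_mul _), integral_const_mul, integral_const_mul] at h
  have h4 : 2 * (X / I) * X - (X / I) ^ 2 * I = X ^ 2 / I := by field_simp; ring
  rw [h4, div_le_iff₀ hI] at h
  exact h

end PartK

end SFT

open SFT Filter

/-- Sharp fractional trace Sobolev inequality: for smooth, compactly
supported `w : ℝᴺ × ℝ → ℝ` with trace `u(x) = w(x,0)` and `N > 2s`, `0 < s < 1`,
`(∫ |u|^{2N/(N-2s)})^{(N-2s)/N} ≤ S ∫∫_{y>0} y^{1-2s} |∇w|²`, with the explicit sharp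
constant `S` expressed through Gamma functions. -/
theorem sharp_fractional_trace_sobolev (N : ℕ) (hN : 0 < N) (s : ℝ)
    (hs0 : 0 < s) (hs1 : s < 1) (hNs : 2 * s < (N : ℝ))
    (w : EuclideanSpace ℝ (Fin N) × ℝ → ℝ)
    (hw : ContDiff ℝ (⊤ : ℕ∞) w) (hsupp : HasCompactSupport w) :
    (∫ x : EuclideanSpace ℝ (Fin N),
        |w (x, 0)| ^ (2 * (N : ℝ) / ((N : ℝ) - 2 * s))) ^
        (2 / (2 * (N : ℝ) / ((N : ℝ) - 2 * s))) ≤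
      (2⁻¹ * Real.pi ^ (-s) * Gamma s * Gamma (((N : ℝ) - 2 * s) / 2) *
            Gamma (N : ℝ) ^ (2 * s / (N : ℝ))) /
          (Gamma ((2 - 2 * s) / 2) * Gamma (((N : ℝ) + 2 * s) / 2) *
            Gamma ((N : ℝ) / 2) ^ (2 * s / (N : ℝ))) *
        ∫ x : EuclideanSpace ℝ (Fin N), ∫ y in Set.Ioi (0 : ℝ),
          y ^ (1 - 2 * s) * gradNormSq N w (x, y) := by
  have hN' : (0 : ℝ) < N := by exact_mod_cast hN
  have hw1 : ContDiff ℝ 1 w := hw.of_le (by exact_mod_cast le_top)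
  have ha : -1 < 1 - 2 * s := by linarith
  have hE : ∫ x : En N, ∫ y in Set.Ioi (0 : ℝ), y ^ (1 - 2 * s) * gradNormSq N w (x, y) =
      ∫ q, gradNormSq N w q ∂(nu N (1 - 2 * s)) := by
    have hi := integrable_gradNormSq (N := N) ha hw1 hsupp
    rw [nu, integral_prod _ hi]
    simp only [integral_eta]
  rw [hE]
  set E := ∫ q, gradNormSq N w q ∂(nu N (1 - 2 * s)) with hEdef
  have hE0 : 0 ≤ E := integral_nonneg fun q => gradNormSq_nonneg w q
  have hG1 := Gamma_pos_of_pos hs0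
  have hG2 := Gamma_pos_of_pos (by linarith : 0 < (N : ℝ) / 2 - s)
  have hG3 := Gamma_pos_of_pos hN'
  have hG4 := Gamma_pos_of_pos (by linarith : 0 < 1 - s)
  have hG5 := Gamma_pos_of_pos (by linarith : 0 < (N : ℝ) / 2 + s)
  have hG6 := Gamma_pos_of_pos (by linarith : 0 < (N : ℝ) / 2)
  rw [show ((N : ℝ) - 2 * s) / 2 = (N : ℝ) / 2 - s by ring,
    show (2 - 2 * s) / 2 = 1 - s by ring, show ((N : ℝ) + 2 * s) / 2 = (N : ℝ) / 2 + s by ring]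
  have hd : 0 < (N : ℝ) - 2 * s := by linarith
  have hd2 : 0 < (N : ℝ) + 2 * s := by linarith
  set q := 2 * (N : ℝ) / ((N : ℝ) - 2 * s) with hq
  have hq0 : 0 < q := by positivity
  have hq1 : q - 1 = ((N : ℝ) + 2 * s) / ((N : ℝ) - 2 * s) := by rw [hq]; field_simp; ring
  have hq1' : 0 < q - 1 := by rw [hq1]; positivity
  set p := 2 * (N : ℝ) / ((N : ℝ) + 2 * s) with hp
  have hp0 : 0 < p := by positivity
  have hqp : (q - 1) * p = q := by rw [hq1, hp, hq]; field_simp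
  set u : En N → ℝ := fun x => w (x, 0) with hu
  have huc : Continuous u := hw.continuous.comp (by fun_prop)
  have hus : HasCompactSupport u :=
    HasCompactSupport.intro (hsupp.isCompact.image continuous_fst) fun x hx =>
      image_eq_zero_of_notMem_tsupport (f := w) (x := (x, 0)) fun h => hx ⟨(x, 0), h, rfl⟩
  by_cases hu0 : ∀ x, u x = 0
  · have h1 : ∀ x, |w (x, 0)| ^ q = 0 := fun x => by
      have : w (x, 0) = 0 := hu0 x
      rw [this, abs_zero, zero_rpow hq0.ne']
    simp only [h1, integral_zero]
    rw [zero_rpow (by positivity)]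
    positivity
  push Not at hu0
  obtain ⟨x₀, hx₀⟩ := hu0
  -- The density dual to `u`.
  set f : En N → ℝ := fun x => |u x| ^ (q - 1) with hf
  have hfc : Continuous f := huc.abs.rpow_const fun x => Or.inr hq1'.le
  have hfs : HasCompactSupport f := by
    refine hus.mono fun x hx => ?_
    contrapose! hx
    simp only [Function.mem_support, not_not] at hx ⊢
    simp [hf, hx, zero_rpow hq1'.ne']
  have hf0 : ∀ x, 0 ≤ f x := fun x => by positivity
  have hfx₀ : f x₀ ≠ 0 := (rpow_pos_of_pos (abs_pos.2 hx₀) _).ne'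
  have hfne : ∃ x, f x ≠ 0 := ⟨x₀, hfx₀⟩
  have hfu : ∀ x, f x * |u x| = |u x| ^ q := fun x => by
    rcases eq_or_ne (u x) 0 with h | h
    · simp [h, zero_rpow hq0.ne']
    · rw [hf, ← rpow_add_one (abs_pos.2 h).ne', sub_add_cancel]
  have hfp : ∀ x, f x ^ p = |u x| ^ q := fun x => by
    rw [hf, ← rpow_mul (abs_nonneg _), hqp]
  set X := ∫ x, |u x| ^ q with hX
  have hXfu : X = ∫ x, f x * |u x| := by simp only [hfu, hX]
  have hcu : Continuous fun x => |u x| ^ q := huc.abs.rpow_const fun x => Or.inr hq0.le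
  have hcus : HasCompactSupport fun x => |u x| ^ q := by
    simp only [← hfu]; exact hfs.mul_right
  have hX0 : 0 < X := hcu.integral_pos_of_hasCompactSupport_nonneg_nonzero hcus
    (fun x => by positivity) (rpow_pos_of_pos (abs_pos.2 hx₀) _).ne'
  have hXl : ∫⁻ x, ENNReal.ofReal (f x ^ p) = ENNReal.ofReal X := by
    simp only [hfp]
    rw [← ofReal_integral_eq_lintegral_ofReal (hcu.integrable_of_hasCompactSupport hcus)
      (Eventually.of_forall fun x => by positivity)]
  set lam := (N : ℝ) - 2 * s with hlam
  have hlamN : lam < N := by linarith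
  have hWpos := W0_pos hN hd hlamN hfc hfs hf0 hfne
  have hWc := continuous_W0 hN hlamN hfc hfs
  -- The constants of the spherical potential, of the spherical mass and of the energy bound.
  set κ := π ^ ((N : ℝ) / 2) * Gamma s / Gamma ((N : ℝ) / 2 + s) with hκ
  set m := π ^ ((N : ℝ) / 2) * Gamma ((N : ℝ) / 2) / Gamma N with hm
  set c := 2 * π ^ ((N : ℝ) / 2) * Gamma (1 - s) / Gamma ((N : ℝ) / 2 - s) with hc
  have hκ0 : 0 < κ := by positivity
  have hm0 : 0 < m := by positivity
  have hc0 : 0 < c := by positivity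
  have hcW : Continuous fun x => f x * W0 lam f x := hfc.mul hWc
  have hcV : Continuous fun x => f x * (u x ^ 2 / W0 lam f x) :=
    hfc.mul ((huc.pow 2).div hWc fun x => (hWpos x).ne')
  have hI2pos : 0 < ∫ x, f x * W0 lam f x :=
    hcW.integral_pos_of_hasCompactSupport_nonneg_nonzero hfs.mul_right
      (fun x => mul_nonneg (hf0 x) (hWpos x).le) (mul_ne_zero hfx₀ (hWpos x₀).ne')
  have hI1 : (∫ x, f x * (u x ^ 2 / W0 lam f x)) * c ≤ E := by
    have h := trace_lower hN (a := 1 - 2 * s) ha (by rw [hlam]; ring) hd hlamN hfc hfs hf0 hfne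
      hw1 hsupp (lintegral_kernel hN hs0 hs1 hNs hlam)
    rw [← ofReal_integral_eq_lintegral_ofReal (hcV.integrable_of_hasCompactSupport hfs.mul_right)
      (Eventually.of_forall fun x =>
        mul_nonneg (hf0 x) (div_nonneg (sq_nonneg _) (hWpos x).le)),
      ← ENNReal.ofReal_mul' hc0.le] at h
    exact (ENNReal.ofReal_le_ofReal_iff hE0).1 h
  have hI2 : ∫ x, f x * W0 lam f x ≤ κ * m * ((X / m) ^ (1 / p)) ^ 2 := by
    have h := hls hN hs0 hNs hfc hfs hf0 hp hκ hm hX0.le hXl.le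
    have h1 : ∀ x, ∫⁻ y, ENNReal.ofReal (f x * f y * ‖x - y‖ ^ (-((N : ℝ) - 2 * s))) =
        ENNReal.ofReal (f x * W0 lam f x) := by
      intro x
      rw [W0, ← integral_const_mul, ofReal_integral_eq_lintegral_ofReal
        ((integrable_W0 hN hlamN hfc hfs x).const_mul _) (Eventually.of_forall fun y =>
          mul_nonneg (hf0 x) (mul_nonneg (hf0 y) (by positivity)))]
      simp only [mul_assoc, hlam]
    simp only [h1] at h
    rw [← ofReal_integral_eq_lintegral_ofReal (hcW.integrable_of_hasCompactSupport hfs.mul_right)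
      (Eventually.of_forall fun x => mul_nonneg (hf0 x) (hWpos x).le)] at h
    exact (ENNReal.ofReal_le_ofReal_iff (by positivity)).1 h
  have hCS := cauchy_schwarz hfc hfs hf0 huc.abs hWc hWpos hI2pos
  simp only [sq_abs, ← hXfu] at hCS
  -- `X ^ (1 + θ)` appears on both sides, as `2 / p = 1 + θ`; dividing it out leaves `X ^ (2 / q)`.
  have hkey : X ^ 2 * c ≤ E * (κ * m * ((X / m) ^ (1 / p)) ^ 2) := by
    calc X ^ 2 * c ≤ (∫ x, f x * (u x ^ 2 / W0 lam f x)) * (∫ x, f x * W0 lam f x) * c := by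
          gcongr
      _ = ((∫ x, f x * (u x ^ 2 / W0 lam f x)) * c) * ∫ x, f x * W0 lam f x := by ring
      _ ≤ _ := by gcongr
  set θ := 2 * s / (N : ℝ) with hθ
  have h2q : 2 / q = 1 - θ := by rw [hq, hθ]; field_simp; exact hlam
  have h2p : 1 / p * 2 = 1 + θ := by rw [hp, hθ]; field_simp
  have e1 : ((X / m) ^ (1 / p)) ^ 2 = X ^ (1 + θ) / (m * m ^ θ) := by
    rw [← rpow_natCast, ← rpow_mul (by positivity)]
    push_cast
    rw [h2p, div_rpow hX0.le hm0.le, rpow_add hm0, rpow_one]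
  have e2 : X ^ 2 = X ^ (1 + θ) * X ^ (1 - θ) := by
    rw [← rpow_add hX0, ← rpow_natCast]; congr 1; push_cast; ring
  have hXθ : 0 < X ^ (1 + θ) := rpow_pos_of_pos hX0 _
  have hmθ : 0 < m ^ θ := rpow_pos_of_pos hm0 _
  have e3 : m ^ θ = π ^ s * Gamma ((N : ℝ) / 2) ^ θ / Gamma (N : ℝ) ^ θ := by
    rw [hm, div_rpow (by positivity) hG3.le, mul_rpow (by positivity) hG6.le,
      ← rpow_mul pi_pos.le]
    congr 3
    rw [hθ]; field_simp
  have hfin : X ^ (1 - θ) ≤ E * κ / (c * m ^ θ) := by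
    rw [e1, e2] at hkey
    rw [le_div_iff₀ (by positivity)]
    refine le_of_mul_le_mul_left ?_ hXθ
    have h1 : E * (κ * m * (X ^ (1 + θ) / (m * m ^ θ))) * m ^ θ = X ^ (1 + θ) * (E * κ) := by
      field_simp
    have h2 := mul_le_mul_of_nonneg_right hkey hmθ.le
    rw [h1] at h2
    linarith
  rw [h2q]
  refine hfin.trans (le_of_eq ?_)
  have hpi : 0 < π ^ ((N : ℝ) / 2) := by positivity
  have hpis : 0 < π ^ s := by positivity
  have hGθ : 0 < Gamma (N : ℝ) ^ θ := by positivity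
  have hGθ' : 0 < Gamma ((N : ℝ) / 2) ^ θ := by positivity
  rw [e3, hκ, hc, rpow_neg pi_pos.le]
  field_simp
end

section
/- Let (Ω, μ) be a finite measure space, u : Ω → ℝ a measurable function, p > 0, β > 1 and D > 0. Suppose that the L^p(μ)-norm of u is finite and that for every integer k ≥ 1 one has ‖u‖_{L^{pβ^k}(μ)} ≤ D^{1/(2β^k)} · (β^k)^{1/β^k} · ‖u‖_{L^{pβ^{k−1}}(μ)}. Then u ∈ L^∞(μ) and ‖u‖_{L^∞(μ)} ≤ D^{θ₁} · β^{θ₂} · ‖u‖_{L^p(μ)}, where θ₁ = (1/2)·Σ_{m=1}^{∞} β^{−m} = 1/(2(β−1)) and θ₂ = Σ_{m=1}^{∞} m·β^{−m} = β/(β−1)². -/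
/-!
Write `N q` for the `L^q` norm of `u`.  Iterating the hypothesis `k` times gives
`N (p β^k) ≤ D^(a k) β^(b k) N p`, where `a k` and `b k` are the partial sums of the series
`∑ β^(-m) / 2` and `∑ m β^(-m)` (`lqNorm_iterate_le`); these series converge to `θ₁` and `θ₂`
(`hasSum_theta₁`, `hasSum_theta₂`).

To pass to the limit only the lower bound for `N q` as `q → ∞` is needed
(`essSup_le_of_tendsto`): if `c` is smaller than the essential supremum of `|u|`, the set
`{c ≤ |u|}` has a measure `m` with `0 < m < ∞`, and Markov's inequality gives
`c * m^(1/q) ≤ N q`, whose left side tends to `c`.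
-/

open MeasureTheory
open scoped ENNReal

/-- The `L^q` "norm" `(∫ |u|^q dμ)^(1/q)` for a real exponent `q > 0`,
valued in `ℝ≥0∞`. -/
noncomputable def lqNorm {α : Type*} [MeasurableSpace α] (μ : Measure α)
    (u : α → ℝ) (q : ℝ) : ℝ≥0∞ :=
  (∫⁻ a, ENNReal.ofReal (|u a| ^ q) ∂μ) ^ (1 / q)

open Filter Topology Finset

/-- Markov's inequality for the `L^q` norm, with the `q`-th root taken. -/
lemma mul_measure_rpow_le_lqNorm {α : Type*} [MeasurableSpace α] (μ : Measure α)
    (u : α → ℝ) (hu : Measurable u) (c : ℝ≥0∞) {q : ℝ} (hq : 0 < q) :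
    c * μ {a | c ≤ ENNReal.ofReal |u a|} ^ (1 / q) ≤ lqNorm μ u q := by
  have hpow : ∀ a, ENNReal.ofReal (|u a| ^ q) = ENNReal.ofReal |u a| ^ q := fun a =>
    (ENNReal.ofReal_rpow_of_nonneg (abs_nonneg _) hq.le).symm
  have hmeas : Measurable fun a => ENNReal.ofReal |u a| ^ q :=
    ((measurable_norm.comp hu).ennreal_ofReal).pow_const q
  have hmarkov := mul_meas_ge_le_lintegral (μ := μ) hmeas (c ^ q)
  simp only [ENNReal.rpow_le_rpow_iff hq] at hmarkov
  have hroot := ENNReal.rpow_le_rpow hmarkov (one_div_nonneg.mpr hq.le)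
  rw [ENNReal.mul_rpow_of_nonneg _ _ (one_div_nonneg.mpr hq.le), ← ENNReal.rpow_mul,
    mul_one_div_cancel hq.ne', ENNReal.rpow_one] at hroot
  simpa only [lqNorm, hpow] using hroot

/-- The essential supremum is at most any limit of upper bounds for the `L^q` norms along a
sequence of exponents tending to infinity. -/
lemma essSup_le_of_tendsto {α : Type*} [MeasurableSpace α] (μ : Measure α)
    [IsFiniteMeasure μ] (u : α → ℝ) (hu : Measurable u) (q : ℕ → ℝ) (hq : ∀ k, 0 < q k)
    (hq_top : Tendsto q atTop atTop) (B : ℕ → ℝ≥0∞) (C : ℝ≥0∞) (hB : Tendsto B atTop (𝓝 C))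
    (hle : ∀ k, lqNorm μ u (q k) ≤ B k) :
    essSup (fun a => ENNReal.ofReal |u a|) μ ≤ C := by
  refine le_of_forall_lt fun c hc => ?_
  obtain ⟨d, hcd, hd⟩ := exists_between hc
  refine hcd.trans_le ?_
  set m := μ {a | d ≤ ENNReal.ofReal |u a|} with hm
  have hm_top : m ≠ ⊤ := measure_ne_top _ _
  have hm_zero : m ≠ 0 := by
    intro h
    refine hd.not_ge (essSup_le_of_ae_le d ?_)
    have hae : ∀ᵐ a ∂μ, ¬ d ≤ ENNReal.ofReal |u a| := by
      rw [ae_iff]; simpa [hm] using h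
    filter_upwards [hae] with a ha using (not_le.mp ha).le
  have hroot : Tendsto (fun k => m ^ (1 / q k)) atTop (𝓝 1) := by
    have hpos : 0 < m.toReal := ENNReal.toReal_pos hm_zero hm_top
    have hinv : Tendsto (fun k => 1 / q k) atTop (𝓝 0) := by
      simp only [one_div]
      exact hq_top.inv_tendsto_atTop
    have hreal : Tendsto (fun k => m.toReal ^ (1 / q k)) atTop (𝓝 (m.toReal ^ (0 : ℝ))) :=
      tendsto_const_nhds.rpow hinv (Or.inl hpos.ne')
    have hofReal := ENNReal.tendsto_ofReal hreal
    simpa only [← ENNReal.ofReal_rpow_of_pos hpos, ENNReal.ofReal_toReal hm_top,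
      ENNReal.rpow_zero] using hofReal
  have hlim : Tendsto (fun k => d * m ^ (1 / q k)) atTop (𝓝 d) := by
    simpa using ENNReal.Tendsto.const_mul (a := d) hroot (Or.inl one_ne_zero)
  exact le_of_tendsto_of_tendsto' hlim hB fun k =>
    (mul_measure_rpow_le_lqNorm μ u hu d (hq k)).trans (hle k)

lemma hasSum_theta₁ {β : ℝ} (hβ : 1 < β) :
    HasSum (fun m : ℕ => 1 / (2 * β ^ (m + 1))) (1 / (2 * (β - 1))) := by
  have hβ0 : 0 < β := by linarith
  have hβ1 : β - 1 ≠ 0 := by linarith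
  have h := (hasSum_geometric_of_lt_one (inv_nonneg.mpr hβ0.le)
    (inv_lt_one_of_one_lt₀ hβ)).mul_left (1 / (2 * β))
  convert! h using 1
  · ext m
    rw [inv_pow, pow_succ]
    field_simp
  · have : 1 - β⁻¹ ≠ 0 := by
      rw [show 1 - β⁻¹ = (β - 1) / β by field_simp]
      positivity
    rw [show 1 - β⁻¹ = (β - 1) / β by field_simp]
    field_simp

lemma hasSum_theta₂ {β : ℝ} (hβ : 1 < β) :
    HasSum (fun m : ℕ => ((m + 1 : ℕ) : ℝ) / β ^ (m + 1)) (β / (β - 1) ^ 2) := by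
  have hβ0 : 0 < β := by linarith
  have hβ1 : β - 1 ≠ 0 := by linarith
  have hnorm : ‖β⁻¹‖ < 1 := by
    rw [Real.norm_of_nonneg (inv_nonneg.mpr hβ0.le)]
    exact inv_lt_one_of_one_lt₀ hβ
  have h := hasSum_coe_mul_geometric_of_norm_lt_one hnorm
  rw [← hasSum_nat_add_iff' 1] at h
  convert! h using 1
  · ext m
    rw [inv_pow, div_eq_mul_inv]
  · rw [show 1 - β⁻¹ = (β - 1) / β by field_simp]
    simp
    field_simp

/-- The iterated estimate, with the constants collected into powers of `D` and `β`. -/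
lemma lqNorm_iterate_le {α : Type*} [MeasurableSpace α] (μ : Measure α) (u : α → ℝ)
    (p β D : ℝ) (hβ : 1 < β) (hD : 0 < D)
    (hiter : ∀ k : ℕ, 1 ≤ k →
      lqNorm μ u (p * β ^ k) ≤
        ENNReal.ofReal (D ^ (1 / (2 * β ^ k)) * (β ^ k) ^ ((1 : ℝ) / β ^ k)) *
          lqNorm μ u (p * β ^ (k - 1))) (k : ℕ) :
    lqNorm μ u (p * β ^ k) ≤
      ENNReal.ofReal (D ^ (∑ m ∈ range k, 1 / (2 * β ^ (m + 1))) *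
        β ^ (∑ m ∈ range k, ((m + 1 : ℕ) : ℝ) / β ^ (m + 1))) * lqNorm μ u p := by
  have hβ0 : 0 < β := by linarith
  induction k with
  | zero => simp
  | succ k ih =>
    refine (hiter (k + 1) (Nat.le_add_left 1 k)).trans ?_
    rw [Nat.add_sub_cancel]
    refine (mul_le_mul_right ih _).trans_eq ?_
    rw [← mul_assoc, ← ENNReal.ofReal_mul (by positivity)]
    congr 2
    rw [sum_range_succ, sum_range_succ, Real.rpow_add hD, Real.rpow_add hβ0,
      ← Real.rpow_natCast_mul hβ0.le, mul_one_div]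
    ring

/-- Moser iteration, limit stage.  On a finite measure space, if
`‖u‖_{L^{pβ^k}} ≤ D^(1/(2β^k)) (β^k)^(1/β^k) ‖u‖_{L^{pβ^(k-1)}}` for all `k ≥ 1`, then
`u ∈ L^∞(μ)` with `‖u‖_{L^∞} ≤ D^θ₁ β^θ₂ ‖u‖_{L^p}`, where
`θ₁ = (1/2)∑ β^(-m) = 1/(2(β-1))` and `θ₂ = ∑ m β^(-m) = β/(β-1)²`. -/
theorem moser_iteration_limit {α : Type*} [MeasurableSpace α] (μ : Measure α)
    [IsFiniteMeasure μ] (u : α → ℝ) (hu : Measurable u) (p β D : ℝ)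
    (hp : 0 < p) (hβ : 1 < β) (hD : 0 < D)
    (hfin : lqNorm μ u p ≠ ⊤)
    (hiter : ∀ k : ℕ, 1 ≤ k →
      lqNorm μ u (p * β ^ k) ≤
        ENNReal.ofReal (D ^ (1 / (2 * β ^ k)) * (β ^ k) ^ ((1 : ℝ) / β ^ k)) *
          lqNorm μ u (p * β ^ (k - 1))) :
    essSup (fun a => ENNReal.ofReal |u a|) μ ≠ ⊤ ∧
      essSup (fun a => ENNReal.ofReal |u a|) μ ≤
        ENNReal.ofReal (D ^ (1 / (2 * (β - 1))) * β ^ (β / (β - 1) ^ 2)) *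
          lqNorm μ u p := by
  have hβ0 : 0 < β := by linarith
  have hle : essSup (fun a => ENNReal.ofReal |u a|) μ ≤
      ENNReal.ofReal (D ^ (1 / (2 * (β - 1))) * β ^ (β / (β - 1) ^ 2)) * lqNorm μ u p := by
    refine essSup_le_of_tendsto μ u hu (fun k => p * β ^ k) (fun k => by positivity)
      ((tendsto_pow_atTop_atTop_of_one_lt hβ).const_mul_atTop hp) _ _ ?_
      (lqNorm_iterate_le μ u p β D hβ hD hiter)
    refine ENNReal.Tendsto.mul_const (ENNReal.tendsto_ofReal ?_) (Or.inr hfin)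
    exact (tendsto_const_nhds.rpow (hasSum_theta₁ hβ).tendsto_sum_nat (Or.inl hD.ne')).mul
      (tendsto_const_nhds.rpow (hasSum_theta₂ hβ).tendsto_sum_nat (Or.inl hβ0.ne'))
  exact ⟨ne_top_of_le_ne_top (ENNReal.mul_ne_top ENNReal.ofReal_ne_top hfin) hle, hle⟩
end
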